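/- Suppose σ_n → ∞. Then for every 1 ≤ p < ∞ we have W_p(dF_n, dΦ) = O(σ_n^{−1}), where dF_n is the law of (S_n − E[S_n])/σ_n and dΦ is the standard normal law; that is, there is a constant C_p with W_p(dF_n, dΦ) ≤ C_p σ_n^{−1} for all n. -/

import Mathlib

open MeasureTheory ProbabilityTheory Filter
open scoped ENNReal NNReal

noncomputable section

variable {Ω : Type*} [MeasurableSpace Ω] {𝒳 : ℕ → Type*} [∀ j, MeasurableSpace (𝒳 j)]

/-- The σ-algebra generated by `X_0, …, X_j`. -/
def pastSigma (X : ∀ j, Ω → 𝒳 j) (j : ℕ) : MeasurableSpace Ω :=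
  ⨆ i ∈ Finset.range (j + 1), MeasurableSpace.comap (X i) inferInstance

/-- `X` is an inhomogeneous Markov chain (on the probability space `(Ω, μ)`) whose `n`-step
transition probabilities from time `j` are given by the Markov kernels `κ j n`: for every
measurable `Γ`, `ℙ(X_{j+n} ∈ Γ | X_0, …, X_j) = (κ j n) (X j) Γ` a.s. -/
structure IsInhomMarkov (μ : Measure Ω) (X : ∀ j, Ω → 𝒳 j)
    (κ : ∀ j n, Kernel (𝒳 j) (𝒳 (j + n))) : Prop where
  meas : ∀ j, Measurable (X j)
  isMarkovKernel : ∀ j n, IsMarkovKernel (κ j n)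
  cond : ∀ j n (Γ : Set (𝒳 (j + n))), MeasurableSet Γ →
    (μ[(fun ω => Γ.indicator (fun _ => (1 : ℝ)) (X (j + n) ω)) | pastSigma X j])
      =ᵐ[μ] fun ω => (κ j n (X j ω) Γ).toReal

/-- The standard normal distribution function `Φ`. -/
def stdNormalCDF (t : ℝ) : ℝ := (gaussianReal 0 1 (Set.Iic t)).toReal

/-- The `p`-th Wasserstein distance between two measures on `ℝ`, defined through couplings
(equivalently, through pairs of random variables with the prescribed marginals). -/
def wassersteinDist (p : ℝ) (μ ν : Measure ℝ) : ℝ≥0∞ :=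
  ⨅ (ρ : Measure (ℝ × ℝ)) (_ : ρ.map Prod.fst = μ) (_ : ρ.map Prod.snd = ν),
    (∫⁻ z, ENNReal.ofReal (|z.1 - z.2| ^ p) ∂ρ) ^ (1 / p)

/-!
Every `n₀` steps the chain forgets its past with probability at least `γ`. Hence the conditional
mean of the future sum given the past is, uniformly in `n`, within a bounded distance of a
constant, and the conditional mean of `exp (z ∑_{j ≤ l < n} Y_l)` stays, for `z` in a fixed complex
disc and by backward induction on `j`, within half of its size of a nonzero constant. The second
fact shows that the moment generating function of `S_n - 𝔼 S_n` has no zeros on that disc. The first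
one makes the increments of the Doob martingale of `S_n` bounded and its conditional quadratic
variation comparable to `σ_n²`, which bounds the moment generating function there by `exp (K σ_n²)`.

The logarithm of the moment generating function is therefore analytic on a fixed disc and of size
`σ_n²`, and its Taylor expansion yields an Edgeworth expansion of the characteristic function of the
normalised sum at frequencies up to a multiple of `σ_n`. Convolving with a band-limited kernel of
width `1 / σ_n` costs `O(1 / σ_n)` in `W_p` and cuts off all higher frequencies, so Fourier
inversion transfers the expansion to distribution functions: for `|x| ≤ C √(log σ_n)` the smoothed
distribution function differs from `Φ` by at most `O(1 / σ_n) (2 + |x|)ᵏ φ(x)`, where `φ = Φ'`.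
Since this error carries the factor `φ(x)`, the monotone coupling moves `y` by only
`O((3 + |y|)ᵏ / σ_n)`, which has norm `O(1 / σ_n)` in `Lᵖ` of the normal law; the remaining tail has
Gaussian mass at most a large negative power of `σ_n`.
-/

section Martingales

variable {Ω : Type*} {m₀ : MeasurableSpace Ω} {μ : Measure Ω}

lemma integral_mul_condExp {m : MeasurableSpace Ω} (hm : m ≤ m₀) [SigmaFinite (μ.trim hm)]
    {A Z : Ω → ℝ} (hA : StronglyMeasurable[m] A) (hAZ : Integrable (fun ω => A ω * Z ω) μ)
    (hZ : Integrable Z μ) :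
    ∫ ω, A ω * (μ[Z | m]) ω ∂μ = ∫ ω, A ω * Z ω ∂μ := by
  rw [← integral_condExp hm (f := fun ω => A ω * Z ω)]
  exact integral_congr_ae (condExp_mul_of_stronglyMeasurable_left hA hAZ hZ).symm

lemma integrable_exp_of_ae_le [IsFiniteMeasure μ] {Z : Ω → ℝ} {R : ℝ} (hZ : AEMeasurable Z μ)
    (hR : ∀ᵐ ω ∂μ, Z ω ≤ R) : Integrable (fun ω => Real.exp (Z ω)) μ := by
  refine Integrable.of_bound (by fun_prop) (Real.exp R) ?_
  filter_upwards [hR] with ω h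
  rwa [Real.norm_of_nonneg (Real.exp_pos _).le, Real.exp_le_exp]

lemma exp_le_one_add_two_mul {x : ℝ} (h0 : 0 ≤ x) (h1 : x ≤ 1) : Real.exp x ≤ 1 + 2 * x := by
  have h := (abs_le.1 (Real.abs_exp_sub_one_sub_id_le (by rwa [abs_of_nonneg h0]))).2
  nlinarith

lemma exp_sub_two_mul_sq_le {x : ℝ} (h : |x| ≤ 1 / 2) : Real.exp (x - 2 * x ^ 2) ≤ 1 + x := by
  have hexp := (abs_le.1 (Real.abs_exp_sub_one_sub_id_le (x := x) (by linarith))).2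
  have hx := abs_le.1 h
  have hmul : (1 + x) * (2 * x ^ 2 + 1) ≤ (1 + x) * Real.exp (2 * x ^ 2) :=
    mul_le_mul_of_nonneg_left (Real.add_one_le_exp _) (by linarith)
  rw [Real.exp_sub, div_le_iff₀ (Real.exp_pos _)]
  nlinarith [mul_nonneg (sq_nonneg x) (by linarith : 0 ≤ 1 + 2 * x)]

/-- The quadratic variation of the process `M` between the times `a` and `b`. -/
def quadVar (M : ℕ → Ω → ℝ) (a b : ℕ) (ω : Ω) : ℝ :=
  ∑ i ∈ Finset.Ico a b, (M (i + 1) ω - M i ω) ^ 2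

variable {ℱ : Filtration ℕ m₀} {M : ℕ → Ω → ℝ} {B K s θ : ℝ} {n i : ℕ}

lemma quadVar_nonneg (M : ℕ → Ω → ℝ) (a b : ℕ) (ω : Ω) : 0 ≤ quadVar M a b ω :=
  Finset.sum_nonneg fun _ _ => sq_nonneg _

lemma quadVar_eq_add (h : i < n) (ω : Ω) :
    quadVar M i n ω = (M (i + 1) ω - M i ω) ^ 2 + quadVar M (i + 1) n ω :=
  Finset.sum_eq_sum_Ico_succ_bot h _

lemma quadVar_zero_succ (n : ℕ) (ω : Ω) :
    quadVar M 0 (n + 1) ω = quadVar M 0 n ω + (M (n + 1) ω - M n ω) ^ 2 :=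
  Finset.sum_Ico_succ_top (Nat.zero_le n) _

section BoundedIncrements

variable (hB : ∀ i, ∀ᵐ ω ∂μ, |M (i + 1) ω - M i ω| ≤ B)

include hB in
lemma ae_sub_zero_le_of_increments (n : ℕ) : ∀ᵐ ω ∂μ, |M n ω - M 0 ω| ≤ n * B := by
  filter_upwards [ae_all_iff.2 hB] with ω h
  rw [← Finset.sum_range_sub (fun i => M i ω)]
  exact (Finset.abs_sum_le_sum_abs _ _).trans ((Finset.sum_le_sum fun i _ => h i).trans (by simp))

include hB in
lemma ae_quadVar_le (a b : ℕ) : ∀ᵐ ω ∂μ, quadVar M a b ω ≤ (b - a : ℕ) * B ^ 2 := by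
  filter_upwards [ae_all_iff.2 hB] with ω h
  have hsq : ∀ i, (M (i + 1) ω - M i ω) ^ 2 ≤ B ^ 2 := fun i => sq_le_sq' (abs_le.1 (h i)).1
    (abs_le.1 (h i)).2
  exact (Finset.sum_le_sum fun i _ => hsq i).trans (by simp)

end BoundedIncrements

lemma stronglyMeasurable_quadVar (hM : Martingale M ℱ μ) {k : ℕ} (hk : n ≤ k) :
    StronglyMeasurable[ℱ k] (quadVar M i n) := by
  refine Finset.stronglyMeasurable_fun_sum _ fun l hl => ?_
  have hl := (Finset.mem_Ico.1 hl).2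
  have h1 : StronglyMeasurable[ℱ k] (M (l + 1)) := (hM.1 (l + 1)).mono (ℱ.mono (by omega))
  have h2 : StronglyMeasurable[ℱ k] (M l) := (hM.1 l).mono (ℱ.mono (by omega))
  exact (h1.sub h2).pow 2

lemma measurable_quadVar (hM : Martingale M ℱ μ) (a b : ℕ) : Measurable (quadVar M a b) :=
  ((stronglyMeasurable_quadVar hM le_rfl).mono (ℱ.le b)).measurable

lemma measurable_martingale (hM : Martingale M ℱ μ) (k : ℕ) : Measurable (M k) :=
  ((hM.1 k).mono (ℱ.le k)).measurable

variable [IsProbabilityMeasure μ]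

lemma integral_mul_martingale_sub (hM : Martingale M ℱ μ) {A : Ω → ℝ}
    (hA : StronglyMeasurable[ℱ i] A)
    (hint : Integrable (fun ω => A ω * (M (i + 1) ω - M i ω)) μ) :
    ∫ ω, A ω * (M (i + 1) ω - M i ω) ∂μ = 0 := by
  have hzero : μ[M (i + 1) - M i | ℱ i] =ᵐ[μ] 0 := by
    filter_upwards [condExp_sub (hM.integrable (i + 1)) (hM.integrable i) (ℱ i),
      hM.condExp_ae_eq (Nat.le_succ i), hM.condExp_ae_eq (le_refl i)] with ω h h1 h2
    rw [h, Pi.sub_apply, h1, h2, sub_self, Pi.zero_apply]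
  refine (integral_mul_condExp (ℱ.le i) (Z := M (i + 1) - M i) hA hint
    ((hM.integrable _).sub (hM.integrable _))).symm.trans (integral_eq_zero_of_ae ?_)
  filter_upwards [hzero] with ω h
  simp [h]

lemma integral_sq_martingale_sub (hM : Martingale M ℱ μ) (hL2 : ∀ i, MemLp (M i) 2 μ) (i : ℕ) :
    ∫ ω, (M (i + 1) ω - M i ω) ^ 2 ∂μ = ∫ ω, M (i + 1) ω ^ 2 ∂μ - ∫ ω, M i ω ^ 2 ∂μ := by
  have hcross : Integrable (fun ω => M i ω * (M (i + 1) ω - M i ω)) μ :=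
    (hL2 i).integrable_mul ((hL2 (i + 1)).sub (hL2 i))
  have hsq : ∀ ω, (M (i + 1) ω - M i ω) ^ 2 =
      M (i + 1) ω ^ 2 - M i ω ^ 2 - 2 * (M i ω * (M (i + 1) ω - M i ω)) := fun ω => by ring
  simp only [hsq]
  have hdiff : Integrable (fun ω => M (i + 1) ω ^ 2 - M i ω ^ 2) μ :=
    (hL2 _).integrable_sq.sub (hL2 _).integrable_sq
  rw [integral_sub hdiff (hcross.const_mul 2), integral_const_mul,
    integral_mul_martingale_sub hM (hM.1 i) hcross, mul_zero, sub_zero,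
    integral_sub (hL2 _).integrable_sq (hL2 _).integrable_sq]

lemma integral_quadVar_le_variance (hM : Martingale M ℱ μ) (hL2 : ∀ i, MemLp (M i) 2 μ) (n : ℕ) :
    ∫ ω, quadVar M 0 n ω ∂μ ≤ Var[M n; μ] := by
  have hsum : ∫ ω, quadVar M 0 n ω ∂μ = ∫ ω, M n ω ^ 2 ∂μ - ∫ ω, M 0 ω ^ 2 ∂μ := by
    unfold quadVar
    have hint (i) : Integrable (fun ω => (M (i + 1) ω - M i ω) ^ 2) μ :=
      ((hL2 (i + 1)).sub (hL2 i)).integrable_sq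
    rw [integral_finsetSum _ fun i _ => hint i,
      ← Finset.range_eq_Ico, ← Finset.sum_range_sub (fun i => ∫ ω, M i ω ^ 2 ∂μ)]
    exact Finset.sum_congr rfl fun i _ => integral_sq_martingale_sub hM hL2 i
  have hmean : ∫ ω, M 0 ω ∂μ = ∫ ω, M n ω ∂μ := by
    simpa using hM.setIntegral_eq (Nat.zero_le n) MeasurableSet.univ
  have hvar0 := variance_nonneg (M 0) μ
  rw [variance_eq_sub (hL2 0)] at hvar0
  rw [variance_eq_sub (hL2 n), hsum, ← hmean]
  simp only [Pi.pow_apply] at hvar0 ⊢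
  linarith

lemma integrable_exp_martingale_sub_quadVar (hM : Martingale M ℱ μ)
    (hB : ∀ i, ∀ᵐ ω ∂μ, |M (i + 1) ω - M i ω| ≤ B) (t : ℝ) (n : ℕ) :
    Integrable (fun ω => Real.exp (t * (M n ω - M 0 ω) - 2 * t ^ 2 * quadVar M 0 n ω)) μ := by
  have := measurable_martingale hM
  have := measurable_quadVar hM 0 n
  refine integrable_exp_of_ae_le (R := |t| * (n * B)) (by fun_prop) ?_
  filter_upwards [ae_sub_zero_le_of_increments hB n] with ω h
  have hlin : t * (M n ω - M 0 ω) ≤ |t| * (n * B) :=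
    (le_abs_self _).trans (by rw [abs_mul]; gcongr)
  have hquad : 0 ≤ 2 * t ^ 2 * quadVar M 0 n ω := mul_nonneg (by positivity) (quadVar_nonneg ..)
  linarith

lemma integral_exp_martingale_sub_quadVar_le_one (hM : Martingale M ℱ μ)
    (hB : ∀ i, ∀ᵐ ω ∂μ, |M (i + 1) ω - M i ω| ≤ B) {t : ℝ} (ht : |t| * B ≤ 1 / 2) (n : ℕ) :
    ∫ ω, Real.exp (t * (M n ω - M 0 ω) - 2 * t ^ 2 * quadVar M 0 n ω) ∂μ ≤ 1 := by
  set N : ℕ → Ω → ℝ :=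
    fun n ω => Real.exp (t * (M n ω - M 0 ω) - 2 * t ^ 2 * quadVar M 0 n ω) with hN
  have hNmeas (n) : StronglyMeasurable[ℱ n] (N n) := by
    have hM0 := (hM.1 0).mono (ℱ.mono (Nat.zero_le n))
    exact Real.continuous_exp.comp_stronglyMeasurable ((((hM.1 n).sub hM0).const_mul t).sub
      ((stronglyMeasurable_quadVar hM le_rfl).const_mul _))
  have hNint (n) : Integrable (N n) μ := integrable_exp_martingale_sub_quadVar hM hB t n
  induction n with
  | zero => simp [quadVar]
  | succ n ih =>
    have hΔ : Integrable (fun ω => N n ω * (M (n + 1) ω - M n ω)) μ := by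
      refine (hNint n).mul_bdd (c := B) ?_ (hB n)
      exact ((hM.integrable _).sub (hM.integrable _)).aestronglyMeasurable
    have hstep : ∀ᵐ ω ∂μ, N (n + 1) ω ≤ N n ω + t * (N n ω * (M (n + 1) ω - M n ω)) := by
      filter_upwards [hB n] with ω h
      have hx : |t * (M (n + 1) ω - M n ω)| ≤ 1 / 2 := by
        rw [abs_mul]; exact (mul_le_mul_of_nonneg_left h (abs_nonneg t)).trans ht
      have hsplit : N (n + 1) ω = N n ω * Real.exp (t * (M (n + 1) ω - M n ω) -
          2 * (t * (M (n + 1) ω - M n ω)) ^ 2) := by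
        simp only [hN, quadVar_zero_succ, ← Real.exp_add]
        ring_nf
      rw [hsplit]
      nlinarith [mul_le_mul_of_nonneg_left (exp_sub_two_mul_sq_le hx)
        (Real.exp_nonneg _ : 0 ≤ N n ω)]
    refine (integral_mono_ae (hNint _) ((hNint n).add (hΔ.const_mul t)) hstep).trans ?_
    rw [integral_add' (hNint n) (hΔ.const_mul t), integral_const_mul,
      integral_mul_martingale_sub hM (hNmeas n) hΔ, mul_zero, add_zero]
    exact ih

/-- The conditional expectation of the future quadratic variation, recentred so that it takes
values in `[K, 3K]` when it oscillates by at most `K`. -/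
def quadVarLyapunov (M : ℕ → Ω → ℝ) (ℱ : Filtration ℕ m₀) (μ : Measure Ω) (K : ℝ) (n i : ℕ)
    (ω : Ω) : ℝ :=
  (μ[quadVar M i n | ℱ i]) ω - ∫ ω', quadVar M i n ω' ∂μ + 2 * K

section Lyapunov

variable (hM : Martingale M ℱ μ) (hB : ∀ i, ∀ᵐ ω ∂μ, |M (i + 1) ω - M i ω| ≤ B)

omit [IsProbabilityMeasure μ] in
lemma quadVarLyapunov_mem_Icc
    (hosc : ∀ᵐ ω ∂μ, |(μ[quadVar M i n | ℱ i]) ω - ∫ ω', quadVar M i n ω' ∂μ| ≤ K) :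
    ∀ᵐ ω ∂μ, quadVarLyapunov M ℱ μ K n i ω ∈ Set.Icc K (3 * K) := by
  filter_upwards [hosc] with ω h
  have h := abs_le.1 h
  rw [quadVarLyapunov]
  constructor <;> linarith

include hM hB in
lemma integrable_quadVar (a b : ℕ) : Integrable (quadVar M a b) μ := by
  refine Integrable.of_bound (measurable_quadVar hM a b).aestronglyMeasurable
    ((b - a : ℕ) * B ^ 2) ?_
  filter_upwards [ae_quadVar_le hB a b] with ω h
  rwa [Real.norm_of_nonneg (quadVar_nonneg ..)]

include hM hB in
lemma integrable_sq_increment (i : ℕ) : Integrable (fun ω => (M (i + 1) ω - M i ω) ^ 2) μ :=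
  (integrable_quadVar hM hB i (i + 1)).congr (.of_forall fun ω => by simp [quadVar])

lemma integrable_quadVarLyapunov : Integrable (quadVarLyapunov M ℱ μ K n i) μ :=
  (integrable_condExp.sub (integrable_const _)).add (integrable_const _)

section Weighted

variable {A : Ω → ℝ} {R : ℝ} (hA : StronglyMeasurable[ℱ i] A) (hAR : ∀ᵐ ω ∂μ, ‖A ω‖ ≤ R)

include hM hB hAR in
lemma integral_mul_quadVarLyapunov {k : ℕ} (hA : StronglyMeasurable[ℱ k] A) :
    ∫ ω, A ω * quadVarLyapunov M ℱ μ K n k ω ∂μ = ∫ ω, A ω * quadVar M k n ω ∂μ +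
      (2 * K - ∫ ω, quadVar M k n ω ∂μ) * ∫ ω, A ω ∂μ := by
  have hAm := (hA.mono (ℱ.le k)).aestronglyMeasurable (μ := μ)
  have hQ := integrable_quadVar hM hB k n
  rw [← integral_mul_condExp (ℱ.le k) hA (hQ.bdd_mul hAm hAR) hQ, ← integral_const_mul,
    ← integral_add (integrable_condExp.bdd_mul hAm hAR)
      ((Integrable.of_bound hAm R hAR).const_mul _)]
  simp only [quadVarLyapunov]
  congr with ω
  ring

include hM hB hA hAR in
lemma integral_mul_quadVarLyapunov_succ (hi : i < n) :
    ∫ ω, A ω * (quadVarLyapunov M ℱ μ K n (i + 1) ω + (M (i + 1) ω - M i ω) ^ 2) ∂μ =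
      ∫ ω, A ω * quadVarLyapunov M ℱ μ K n i ω ∂μ +
        (∫ ω, (M (i + 1) ω - M i ω) ^ 2 ∂μ) * ∫ ω, A ω ∂μ := by
  have hAm := (hA.mono (ℱ.le i)).aestronglyMeasurable (μ := μ)
  have hQ := integrable_quadVar hM hB (i + 1) n
  have hΔ := integrable_sq_increment hM hB i
  have hsplit : ∫ ω, A ω * quadVar M i n ω ∂μ =
      ∫ ω, A ω * (M (i + 1) ω - M i ω) ^ 2 ∂μ + ∫ ω, A ω * quadVar M (i + 1) n ω ∂μ := by
    rw [← integral_add (hΔ.bdd_mul hAm hAR) (hQ.bdd_mul hAm hAR)]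
    simp only [quadVar_eq_add hi, mul_add]
  have hmean : ∫ ω, quadVar M i n ω ∂μ =
      ∫ ω, (M (i + 1) ω - M i ω) ^ 2 ∂μ + ∫ ω, quadVar M (i + 1) n ω ∂μ := by
    rw [← integral_add hΔ hQ]
    simp only [quadVar_eq_add hi]
  simp only [mul_add]
  rw [integral_add (integrable_quadVarLyapunov.bdd_mul hAm hAR) (hΔ.bdd_mul hAm hAR),
    integral_mul_quadVarLyapunov hM hB hAR hA,
    integral_mul_quadVarLyapunov hM hB hAR (hA.mono (ℱ.mono i.le_succ)), hsplit, hmean]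
  ring

end Weighted

lemma exp_mul_sq_mul_le {a x h : ℝ} (hs : 0 ≤ s) (hsB : s * B ^ 2 ≤ 1) (hsK : 6 * K * s ≤ 1)
    (ha : 0 ≤ a) (hx : |x| ≤ B) (hh : h ∈ Set.Icc 0 (3 * K)) :
    a * Real.exp (s * x ^ 2) * h ≤ a * (h + x ^ 2) := by
  have hx2 : x ^ 2 ≤ B ^ 2 := sq_le_sq' (abs_le.1 hx).1 (abs_le.1 hx).2
  have hexp : Real.exp (s * x ^ 2) ≤ 1 + 2 * (s * x ^ 2) :=
    exp_le_one_add_two_mul (by positivity) ((mul_le_mul_of_nonneg_left hx2 hs).trans hsB)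
  have hlin : 2 * (s * x ^ 2) * h ≤ x ^ 2 := by
    calc 2 * (s * x ^ 2) * h ≤ 2 * (s * x ^ 2) * (3 * K) := by gcongr; exact hh.2
      _ = 6 * K * s * x ^ 2 := by ring
      _ ≤ 1 * x ^ 2 := by gcongr
      _ = x ^ 2 := one_mul _
  rw [mul_assoc]
  refine mul_le_mul_of_nonneg_left ?_ ha
  nlinarith [mul_le_mul_of_nonneg_right hexp hh.1]

variable (hosc : ∀ i, ∀ᵐ ω ∂μ, |(μ[quadVar M i n | ℱ i]) ω - ∫ ω', quadVar M i n ω' ∂μ| ≤ K)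
  (hs : 0 ≤ s)

omit [IsProbabilityMeasure μ] in
include hB hs in
lemma ae_norm_exp_quadVar_le (i : ℕ) :
    ∀ᵐ ω ∂μ, ‖Real.exp (s * quadVar M 0 i ω)‖ ≤ Real.exp (s * (i * B ^ 2)) := by
  filter_upwards [ae_quadVar_le hB 0 i] with ω h
  rw [Real.norm_of_nonneg (Real.exp_pos _).le]
  gcongr
  simpa using h

omit [IsProbabilityMeasure μ] in
include hM in
lemma stronglyMeasurable_exp_quadVar (s : ℝ) (i : ℕ) :
    StronglyMeasurable[ℱ i] (fun ω => Real.exp (s * quadVar M 0 i ω)) :=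
  Real.continuous_exp.comp_stronglyMeasurable
    ((stronglyMeasurable_quadVar hM le_rfl).const_mul s)

include hM hB hs in
lemma integrable_exp_quadVar (i : ℕ) : Integrable (fun ω => Real.exp (s * quadVar M 0 i ω)) μ :=
  Integrable.of_bound ((stronglyMeasurable_exp_quadVar hM s i).mono (ℱ.le i)).aestronglyMeasurable
    _ (ae_norm_exp_quadVar_le hB hs i)

include hM hB hs in
lemma integrable_exp_quadVar_mul (i : ℕ) {Z : Ω → ℝ} (hZ : Integrable Z μ) :
    Integrable (fun ω => Real.exp (s * quadVar M 0 i ω) * Z ω) μ :=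
  hZ.bdd_mul (integrable_exp_quadVar hM hB hs i).aestronglyMeasurable
    (ae_norm_exp_quadVar_le hB hs i)

include hM hB hs hosc in
lemma mul_integral_exp_quadVar_le (i : ℕ) :
    K * ∫ ω, Real.exp (s * quadVar M 0 i ω) ∂μ ≤
      ∫ ω, Real.exp (s * quadVar M 0 i ω) * quadVarLyapunov M ℱ μ K n i ω ∂μ := by
  rw [← integral_const_mul]
  refine integral_mono_ae ((integrable_exp_quadVar hM hB hs i).const_mul K)
    (integrable_exp_quadVar_mul hM hB hs i integrable_quadVarLyapunov) ?_
  filter_upwards [quadVarLyapunov_mem_Icc (hosc i)] with ω h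
  rw [mul_comm]
  exact mul_le_mul_of_nonneg_left h.1 (Real.exp_pos _).le

variable (hK : 0 < K) (hsB : s * B ^ 2 ≤ 1) (hsK : 6 * K * s ≤ 1)

include hM hB hosc hs hK hsB hsK in
lemma integral_exp_quadVar_mul_lyapunov_succ_le (hi : i < n) :
    ∫ ω, Real.exp (s * quadVar M 0 (i + 1) ω) * quadVarLyapunov M ℱ μ K n (i + 1) ω ∂μ ≤
      Real.exp ((∫ ω, (M (i + 1) ω - M i ω) ^ 2 ∂μ) / K) *
        ∫ ω, Real.exp (s * quadVar M 0 i ω) * quadVarLyapunov M ℱ μ K n i ω ∂μ := by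
  set I := ∫ ω, Real.exp (s * quadVar M 0 i ω) * quadVarLyapunov M ℱ μ K n i ω ∂μ
  set e := ∫ ω, (M (i + 1) ω - M i ω) ^ 2 ∂μ
  have hΔ := integrable_sq_increment hM hB i
  have hdrift : ∫ ω, Real.exp (s * quadVar M 0 (i + 1) ω) *
      quadVarLyapunov M ℱ μ K n (i + 1) ω ∂μ ≤ I + e * ∫ ω, Real.exp (s * quadVar M 0 i ω) ∂μ := by
    rw [← integral_mul_quadVarLyapunov_succ hM hB (stronglyMeasurable_exp_quadVar hM s i)
      (ae_norm_exp_quadVar_le hB hs i) hi]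
    refine integral_mono_ae (integrable_exp_quadVar_mul hM hB hs _ integrable_quadVarLyapunov)
      (integrable_exp_quadVar_mul hM hB hs _ (integrable_quadVarLyapunov.add hΔ)) ?_
    filter_upwards [quadVarLyapunov_mem_Icc (hosc (i + 1)), hB i] with ω hH hx
    rw [quadVar_zero_succ, mul_add, Real.exp_add]
    exact exp_mul_sq_mul_le hs hsB hsK (Real.exp_pos _).le hx ⟨hK.le.trans hH.1, hH.2⟩
  have : 0 ≤ e := integral_nonneg fun ω => sq_nonneg _
  have hKI : (∫ ω, Real.exp (s * quadVar M 0 i ω) ∂μ) ≤ I / K :=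
    (le_div_iff₀' hK).2 (mul_integral_exp_quadVar_le hM hB hosc hs i)
  have hI : 0 ≤ I := (mul_nonneg hK.le (integral_nonneg fun ω => (Real.exp_pos _).le)).trans
    (mul_integral_exp_quadVar_le hM hB hosc hs i)
  calc _ ≤ I + e * (I / K) := hdrift.trans (by gcongr)
    _ = (e / K + 1) * I := by ring
    _ ≤ Real.exp (e / K) * I := by gcongr; exact Real.add_one_le_exp _

include hM hB hosc hs hK hsB hsK in
lemma integral_exp_quadVar_le :
    ∫ ω, Real.exp (s * quadVar M 0 n ω) ∂μ ≤ 3 * Real.exp ((∫ ω, quadVar M 0 n ω ∂μ) / K) := by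
  have hind : ∀ k ≤ n, ∫ ω, Real.exp (s * quadVar M 0 k ω) * quadVarLyapunov M ℱ μ K n k ω ∂μ ≤
      Real.exp ((∫ ω, quadVar M 0 k ω ∂μ) / K) * (3 * K) := by
    intro k
    induction k with
    | zero =>
      intro _
      have h : ∫ ω, quadVarLyapunov M ℱ μ K n 0 ω ∂μ ≤ ∫ _, 3 * K ∂μ :=
        integral_mono_ae integrable_quadVarLyapunov (integrable_const _)
          ((quadVarLyapunov_mem_Icc (hosc 0)).mono fun ω h => h.2)
      simpa [quadVar] using h
    | succ k ih =>
      intro hk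
      have hΔ := integrable_sq_increment hM hB k
      simp only [quadVar_zero_succ k]
      rw [integral_add (integrable_quadVar hM hB 0 k) hΔ, add_div, Real.exp_add,
        mul_comm (Real.exp _), mul_assoc]
      simp only [← quadVar_zero_succ k]
      refine (integral_exp_quadVar_mul_lyapunov_succ_le hM hB hosc hs hK hsB hsK hk).trans ?_
      gcongr
      exact ih (by omega)
  have h := (mul_integral_exp_quadVar_le hM hB hosc hs n).trans (hind n le_rfl)
  nlinarith

end Lyapunov

lemma exp_le_half_exp_sub_add_exp (θ x q : ℝ) : Real.exp (θ * x) ≤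
    1 / 2 * (Real.exp (2 * θ * x - 2 * (2 * θ) ^ 2 * q) + Real.exp (8 * θ ^ 2 * q)) := by
  have hprod : Real.exp (θ * x) =
      Real.exp (θ * x - 4 * θ ^ 2 * q) * Real.exp (4 * θ ^ 2 * q) := by
    rw [← Real.exp_add]; ring_nf
  have hleft : Real.exp (2 * θ * x - 2 * (2 * θ) ^ 2 * q) =
      Real.exp (θ * x - 4 * θ ^ 2 * q) ^ 2 := by
    rw [← Real.exp_nat_mul]; push_cast; ring_nf
  have hright : Real.exp (8 * θ ^ 2 * q) = Real.exp (4 * θ ^ 2 * q) ^ 2 := by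
    rw [← Real.exp_nat_mul]; push_cast; ring_nf
  rw [hprod, hleft, hright]
  linarith [two_mul_le_add_sq (Real.exp (θ * x - 4 * θ ^ 2 * q)) (Real.exp (4 * θ ^ 2 * q))]

theorem integral_exp_martingale_sub_le (hM : Martingale M ℱ μ)
    (hB : ∀ i, ∀ᵐ ω ∂μ, |M (i + 1) ω - M i ω| ≤ B)
    (hosc : ∀ i, ∀ᵐ ω ∂μ, |(μ[quadVar M i n | ℱ i]) ω - ∫ ω', quadVar M i n ω' ∂μ| ≤ K)
    (hK : 0 < K) (hθB : 4 * |θ| * B ≤ 1) (hθK : 48 * K * θ ^ 2 ≤ 1) :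
    ∫ ω, Real.exp (θ * (M n ω - M 0 ω)) ∂μ ≤
      2 * Real.exp ((∫ ω, quadVar M 0 n ω ∂μ) / K) := by
  have hB0 : 0 ≤ B := let ⟨ω, h⟩ := (hB 0).exists; (abs_nonneg _).trans h
  have hsB : 8 * θ ^ 2 * B ^ 2 ≤ 1 := by
    rw [← sq_abs θ]; nlinarith [mul_nonneg (abs_nonneg θ) hB0]
  have hint := integrable_exp_martingale_sub_quadVar hM hB (2 * θ) n
  have hsuper := integral_exp_martingale_sub_quadVar_le_one hM hB (t := 2 * θ)
    (by rw [abs_mul, abs_two]; linarith) n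
  have hquad := integral_exp_quadVar_le hM hB hosc (s := 8 * θ ^ 2) (by positivity) hK hsB
    (by linarith)
  have hone : 1 ≤ Real.exp ((∫ ω, quadVar M 0 n ω ∂μ) / K) :=
    Real.one_le_exp (div_nonneg (integral_nonneg fun ω => quadVar_nonneg ..) hK.le)
  have hint' := integrable_exp_quadVar hM hB (s := 8 * θ ^ 2) (by positivity) n
  refine (integral_mono_of_nonneg (Eventually.of_forall fun ω => (Real.exp_pos _).le)
    ((hint.add hint').const_mul (1 / 2))
    (Eventually.of_forall fun ω => exp_le_half_exp_sub_add_exp θ _ _)).trans ?_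
  rw [integral_const_mul, integral_add' hint hint']
  linarith

theorem mgf_martingale_sub_const_le (hM : Martingale M ℱ μ)
    (hB : ∀ i, ∀ᵐ ω ∂μ, |M (i + 1) ω - M i ω| ≤ B) {c : ℝ} (h0 : ∀ᵐ ω ∂μ, |M 0 ω - c| ≤ B)
    (hosc : ∀ i, ∀ᵐ ω ∂μ, |(μ[quadVar M i n | ℱ i]) ω - ∫ ω', quadVar M i n ω' ∂μ| ≤ K)
    (hK : 0 < K) (hθB : 4 * |θ| * B ≤ 1) (hθK : 48 * K * θ ^ 2 ≤ 1) :
    mgf (fun ω => M n ω - c) μ θ ≤ Real.exp (2 + Var[M n; μ] / K) := by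
  have hmeas := measurable_martingale hM
  have hMb (k) : ∀ᵐ ω ∂μ, ‖M k ω‖ ≤ |c| + B + k * B := by
    filter_upwards [h0, ae_sub_zero_le_of_increments hB k] with ω h1 h2
    rw [Real.norm_eq_abs]
    calc |M k ω| = |c + (M 0 ω - c) + (M k ω - M 0 ω)| := by ring_nf
      _ ≤ |c| + B + k * B := (abs_add_three ..).trans (by gcongr)
  have hvar := integral_quadVar_le_variance hM
    (fun k => MemLp.of_bound (hmeas k).aestronglyMeasurable _ (hMb k)) n
  have hint : Integrable (fun ω => Real.exp (θ * (M n ω - M 0 ω))) μ := by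
    refine integrable_exp_of_ae_le (R := |θ| * (n * B)) (by fun_prop) ?_
    filter_upwards [ae_sub_zero_le_of_increments hB n] with ω h
    exact (le_abs_self _).trans (by rw [abs_mul]; gcongr)
  calc ∫ ω, Real.exp (θ * (M n ω - c)) ∂μ
      ≤ ∫ ω, Real.exp 1 * Real.exp (θ * (M n ω - M 0 ω)) ∂μ := by
        refine integral_mono_of_nonneg (Eventually.of_forall fun ω => (Real.exp_pos _).le)
          (hint.const_mul _) ?_
        filter_upwards [h0] with ω h
        have hθ : θ * (M 0 ω - c) ≤ |θ| * B := (le_abs_self _).trans (by rw [abs_mul]; gcongr)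
        rw [← Real.exp_add, Real.exp_le_exp]
        linarith [mul_nonneg (abs_nonneg θ) ((abs_nonneg _).trans h)]
    _ ≤ Real.exp 1 * (Real.exp 1 * Real.exp (Var[M n; μ] / K)) := by
        rw [integral_const_mul]
        refine mul_le_mul_of_nonneg_left ?_ (Real.exp_pos 1).le
        refine (integral_exp_martingale_sub_le hM hB hosc hK hθB hθK).trans ?_
        gcongr
        linarith [Real.add_one_le_exp (1 : ℝ)]
    _ = Real.exp (2 + Var[M n; μ] / K) := by
        rw [← Real.exp_add, ← Real.exp_add]; ring_nf

end Martingales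

section ConditionalExpectations

variable {Ω : Type*} {m m₀ : MeasurableSpace Ω} {μ : Measure Ω}
  {𝕜 : Type*} [RCLike 𝕜] {Z : Ω → 𝕜} {c : 𝕜} {r : ℝ}

lemma ae_norm_condExp_le (h : ∀ᵐ ω ∂μ, ‖Z ω‖ ≤ r) : ∀ᵐ ω ∂μ, ‖(μ[Z | m]) ω‖ ≤ r := by
  have habs : ∀ᵐ ω ∂μ, |‖Z ω‖| ≤ r := by simpa only [abs_norm] using h
  filter_upwards [norm_condExp_le (m := m) (μ := μ) Z,
    ae_bdd_abs_condExp_of_ae_bdd_abs (m := m) habs] with ω h1 h2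
  exact h1.trans ((le_abs_self _).trans h2)

variable [IsProbabilityMeasure μ]

lemma condExp_sub_const (hm : m ≤ m₀) (hZ : Integrable Z μ) (c : 𝕜) :
    μ[fun ω => Z ω - c | m] =ᵐ[μ] fun ω => (μ[Z | m]) ω - c := by
  refine (condExp_sub hZ (integrable_const c) m).trans ?_
  rw [condExp_const hm]
  rfl

lemma norm_integral_sub_le_of_condExp (hm : m ≤ m₀)
    (h : ∀ᵐ ω ∂μ, ‖(μ[Z | m]) ω - c‖ ≤ r) : ‖∫ ω, Z ω ∂μ - c‖ ≤ r := by
  have hint := norm_integral_le_of_norm_le_const h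
  rw [integral_sub integrable_condExp (integrable_const c), integral_condExp hm] at hint
  simpa using hint

lemma ae_norm_condExp_sub_integral_le (hm : m ≤ m₀)
    (h : ∀ᵐ ω ∂μ, ‖(μ[Z | m]) ω - c‖ ≤ r) :
    ∀ᵐ ω ∂μ, ‖(μ[Z | m]) ω - ∫ ω', Z ω' ∂μ‖ ≤ 2 * r := by
  have hint := norm_integral_sub_le_of_condExp hm h
  filter_upwards [h] with ω hω
  rw [norm_sub_rev] at hint
  linarith [norm_sub_le_norm_sub_add_norm_sub ((μ[Z | m]) ω) c (∫ ω', Z ω' ∂μ)]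

lemma ae_norm_condExp_sub_le {m' : MeasurableSpace Ω} (hmm' : m ≤ m') (hm' : m' ≤ m₀)
    {W : Ω → 𝕜} (hWm : StronglyMeasurable[m] W) (hW : Integrable W μ)
    (h : ∀ᵐ ω ∂μ, ‖(μ[Z | m']) ω - W ω‖ ≤ r) : ∀ᵐ ω ∂μ, ‖(μ[Z | m]) ω - W ω‖ ≤ r := by
  filter_upwards [ae_norm_condExp_le (m := m) h,
    condExp_sub (integrable_condExp (f := Z) (m := m')) hW m,
    condExp_condExp_of_le (f := Z) hmm' hm'] with ω h1 h2 h3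
  rw [condExp_of_stronglyMeasurable (hmm'.trans hm') hWm hW] at h2
  rw [← h3, ← Pi.sub_apply, ← h2]
  exact h1

lemma ae_norm_condExp_mul_le {m' : MeasurableSpace Ω} (hmm' : m ≤ m') (hm' : m' ≤ m₀)
    {A : Ω → 𝕜} {a : ℝ} (hA : StronglyMeasurable[m'] A) (hAa : ∀ ω, ‖A ω‖ ≤ a)
    (hZ : Integrable Z μ) (h : ∀ᵐ ω ∂μ, ‖(μ[Z | m']) ω‖ ≤ r) :
    ∀ᵐ ω ∂μ, ‖(μ[fun ω => A ω * Z ω | m]) ω‖ ≤ a * r := by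
  have hAZ : Integrable (fun ω => A ω * Z ω) μ :=
    hZ.bdd_mul (hA.mono hm').aestronglyMeasurable (.of_forall hAa)
  have hbound : ∀ᵐ ω ∂μ, ‖(μ[fun ω => A ω * Z ω | m']) ω‖ ≤ a * r := by
    filter_upwards [h, condExp_bilin_of_stronglyMeasurable_left (ContinuousLinearMap.mul ℝ 𝕜)
      hA hAZ hZ] with ω h1 h2
    simp only [ContinuousLinearMap.mul_apply'] at h2
    rw [h2, norm_mul]
    exact mul_le_mul (hAa ω) h1 (norm_nonneg _) ((norm_nonneg _).trans (hAa ω))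
  filter_upwards [ae_norm_condExp_le (m := m) hbound,
    condExp_condExp_of_le (f := fun ω => A ω * Z ω) hmm' hm'] with ω h1 h2
  rwa [← h2]

end ConditionalExpectations

section MarkovChains

variable {X : ∀ j, Ω → 𝒳 j} {𝕜 : Type*} [RCLike 𝕜] {i j : ℕ}

omit [MeasurableSpace Ω] in
lemma comap_le_pastSigma (h : i ≤ j) :
    MeasurableSpace.comap (X i) inferInstance ≤ pastSigma X j :=
  le_iSup₂_of_le (f := fun l (_ : l ∈ Finset.range (j + 1)) =>
    MeasurableSpace.comap (X l) inferInstance) i (Finset.mem_range.2 (by omega)) le_rfl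

omit [MeasurableSpace Ω] in
lemma measurable_pastSigma (h : i ≤ j) : Measurable[pastSigma X j] (X i) :=
  (comap_measurable (X i)).mono (comap_le_pastSigma h) le_rfl

/-- The natural filtration of the chain `X`, with `pastSigma X j` as its `j`-th σ-algebra. -/
def pastFiltration (X : ∀ j, Ω → 𝒳 j) (hX : ∀ j, Measurable (X j)) :
    Filtration ℕ ‹MeasurableSpace Ω› where
  seq := pastSigma X
  mono' _ _ h := iSup₂_le fun l hl => comap_le_pastSigma <| by
    have := Finset.mem_range.1 hl
    omega
  le' _ := iSup₂_le fun i _ => (hX i).comap_le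

lemma pastSigma_le (hX : ∀ j, Measurable (X j)) (j : ℕ) : pastSigma X j ≤ ‹MeasurableSpace Ω› :=
  (pastFiltration X hX).le j

lemma pastSigma_mono (hX : ∀ j, Measurable (X j)) (h : i ≤ j) : pastSigma X i ≤ pastSigma X j :=
  (pastFiltration X hX).mono h

variable {μ : Measure Ω}

/-- `Z` is an integrable variable which, given the chain up to time `j`, behaves like a functional
of the chain from time `j` on: its conditional expectation is a bounded function of `X j`. -/
structure IsMarkovFunctional (μ : Measure Ω) (X : ∀ j, Ω → 𝒳 j) (j : ℕ) (Z : Ω → 𝕜) : Prop where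
  integrable : Integrable Z μ
  exists_condExp_eq : ∃ (g : 𝒳 j → 𝕜) (R : ℝ), Measurable g ∧ (∀ x, ‖g x‖ ≤ R) ∧
    μ[Z | pastSigma X j] =ᵐ[μ] fun ω => g (X j ω)

namespace IsMarkovFunctional

variable {Z W : Ω → 𝕜}

lemma congr (hZ : IsMarkovFunctional μ X j Z) (h : Z =ᵐ[μ] W) : IsMarkovFunctional μ X j W := by
  obtain ⟨g, R, hg, hR, hgZ⟩ := hZ.exists_condExp_eq
  exact ⟨hZ.integrable.congr h, g, R, hg, hR, (condExp_congr_ae h.symm).trans hgZ⟩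

lemma add (hZ : IsMarkovFunctional μ X j Z) (hW : IsMarkovFunctional μ X j W) :
    IsMarkovFunctional μ X j (fun ω => Z ω + W ω) := by
  obtain ⟨g, R, hg, hR, hgZ⟩ := hZ.exists_condExp_eq
  obtain ⟨g', R', hg', hR', hgW⟩ := hW.exists_condExp_eq
  refine ⟨hZ.integrable.add hW.integrable, fun x => g x + g' x, R + R', hg.add hg',
    fun x => (norm_add_le _ _).trans (add_le_add (hR x) (hR' x)), ?_⟩
  exact (condExp_add hZ.integrable hW.integrable _).trans (hgZ.add hgW)

lemma comp_mul (hX : ∀ j, Measurable (X j)) (hZ : IsMarkovFunctional μ X j Z) {q : 𝒳 j → 𝕜}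
    (hq : Measurable q) {Q : ℝ} (hQ : ∀ x, ‖q x‖ ≤ Q) :
    IsMarkovFunctional μ X j (fun ω => q (X j ω) * Z ω) := by
  obtain ⟨g, R, hg, hR, hgZ⟩ := hZ.exists_condExp_eq
  have hint : Integrable (fun ω => q (X j ω) * Z ω) μ :=
    hZ.integrable.bdd_mul (hq.comp (hX j)).aestronglyMeasurable (.of_forall fun ω => hQ _)
  refine ⟨hint, fun x => q x * g x, Q * R, hq.mul hg, fun x => ?_, ?_⟩
  · rw [norm_mul]
    exact mul_le_mul (hQ x) (hR x) (norm_nonneg _) ((norm_nonneg _).trans (hQ x))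
  · refine (condExp_bilin_of_stronglyMeasurable_left (ContinuousLinearMap.mul ℝ 𝕜)
      (hq.comp (measurable_pastSigma le_rfl)).stronglyMeasurable hint hZ.integrable).trans ?_
    filter_upwards [hgZ] with ω h
    simp only [ContinuousLinearMap.mul_apply', h, Function.comp_apply]

end IsMarkovFunctional

variable [IsProbabilityMeasure μ] {κ : ∀ j n, Kernel (𝒳 j) (𝒳 (j + n))}

lemma map_restrict_eq_bind (h : IsInhomMarkov μ X κ) (j n : ℕ) {s : Set Ω}
    (hs : MeasurableSet[pastSigma X j] s) :
    (μ.restrict s).map (X (j + n)) = ((μ.restrict s).map (X j)).bind (κ j n) := by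
  have := h.isMarkovKernel j n
  have hle := pastSigma_le h.meas j
  ext Γ hΓ
  rw [Measure.bind_apply hΓ (Kernel.aemeasurable _),
    lintegral_map (Kernel.measurable_coe _ hΓ) (h.meas j), Measure.map_apply (h.meas _) hΓ]
  have hmeas : Measurable fun ω => κ j n (X j ω) Γ :=
    (Kernel.measurable_coe _ hΓ).comp (h.meas j)
  have hreal : (μ.restrict s).real (X (j + n) ⁻¹' Γ) =
      (∫⁻ ω in s, κ j n (X j ω) Γ ∂μ).toReal := by
    have hind : (fun ω => Γ.indicator (fun _ => (1 : ℝ)) (X (j + n) ω)) =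
        (X (j + n) ⁻¹' Γ).indicator 1 := rfl
    have hint : Integrable (fun ω => Γ.indicator (fun _ => (1 : ℝ)) (X (j + n) ω)) μ := by
      rw [hind]; exact (integrable_const (1 : ℝ)).indicator (h.meas _ hΓ)
    rw [← integral_toReal hmeas.aemeasurable (.of_forall fun ω => measure_lt_top _ _),
      ← setIntegral_congr_ae (hle _ hs) ((h.cond j n Γ hΓ).mono fun ω hω _ => hω),
      setIntegral_condExp hle hint hs, hind, integral_indicator_one (h.meas _ hΓ)]
  refine (ENNReal.toReal_eq_toReal_iff' (measure_ne_top _ _) (ne_top_of_le_ne_top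
    (measure_ne_top (μ.restrict s) Set.univ) ?_)).1 hreal
  exact (lintegral_mono fun ω => prob_le_one).trans_eq (by simp)

lemma norm_integral_le_of_forall {α : Type*} [MeasurableSpace α] {ν : Measure α}
    [IsProbabilityMeasure ν] {g : α → 𝕜} {R : ℝ} (hR : ∀ x, ‖g x‖ ≤ R) : ‖∫ y, g y ∂ν‖ ≤ R := by
  simpa using norm_integral_le_of_norm_le_const (μ := ν) (.of_forall hR)

lemma condExp_comp_eq_integral_kernel (h : IsInhomMarkov μ X κ) (j n : ℕ) {g : 𝒳 (j + n) → 𝕜}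
    (hg : Measurable g) {R : ℝ} (hR : ∀ x, ‖g x‖ ≤ R) :
    μ[fun ω => g (X (j + n) ω) | pastSigma X j] =ᵐ[μ] fun ω => ∫ y, g y ∂(κ j n (X j ω)) := by
  have := h.isMarkovKernel j n
  have hGm : StronglyMeasurable fun x => ∫ y, g y ∂(κ j n x) :=
    hg.stronglyMeasurable.integral_kernel
  have hint : Integrable (fun ω => ∫ y, g y ∂(κ j n (X j ω))) μ :=
    .of_bound (hGm.comp_measurable (h.meas j)).aestronglyMeasurable R
      (.of_forall fun ω => norm_integral_le_of_forall hR)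
  refine (ae_eq_condExp_of_forall_setIntegral_eq (pastSigma_le h.meas j)
    (.of_bound (hg.comp (h.meas _)).aestronglyMeasurable R (.of_forall fun ω => hR _))
    (fun s _ _ => hint.integrableOn) (fun s hs _ => ?_)
    (hGm.measurable.comp
      (measurable_pastSigma le_rfl)).stronglyMeasurable.aestronglyMeasurable).symm
  have hbind := map_restrict_eq_bind h j n hs
  have hfin : IsFiniteMeasure (((μ.restrict s).map (X j)).bind (κ j n)) := by
    rw [← hbind]; infer_instance
  calc ∫ ω in s, (∫ y, g y ∂(κ j n (X j ω))) ∂μ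
      = ∫ x, (∫ y, g y ∂(κ j n x)) ∂((μ.restrict s).map (X j)) :=
        (integral_map (h.meas _).aemeasurable hGm.aestronglyMeasurable).symm
    _ = ∫ y, g y ∂((μ.restrict s).map (X (j + n))) := by
        rw [hbind]
        simpa [Kernel.comp_apply] using (Kernel.integral_comp (η := κ j n)
          (κ := Kernel.const Unit ((μ.restrict s).map (X j))) (a := ()) (f := g) (by
            simpa [Kernel.comp_apply] using
              Integrable.of_bound hg.aestronglyMeasurable R (.of_forall hR))).symm
    _ = ∫ ω in s, g (X (j + n) ω) ∂μ := integral_map (h.meas _).aemeasurable hg.aestronglyMeasurable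

namespace IsMarkovFunctional

variable {Z : Ω → 𝕜}

lemma of_add (h : IsInhomMarkov μ X κ) (n : ℕ) (hZ : IsMarkovFunctional μ X (j + n) Z) :
    IsMarkovFunctional μ X j Z := by
  obtain ⟨g, R, hg, hR, hgZ⟩ := hZ.exists_condExp_eq
  have := h.isMarkovKernel j n
  refine ⟨hZ.integrable, fun x => ∫ y, g y ∂(κ j n x), R,
    hg.stronglyMeasurable.integral_kernel.measurable, fun x => norm_integral_le_of_forall hR, ?_⟩
  exact (condExp_condExp_of_le (pastSigma_mono h.meas (Nat.le_add_right j n))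
    (pastSigma_le h.meas (j + n))).symm.trans
    ((condExp_congr_ae hgZ).trans (condExp_comp_eq_integral_kernel h j n hg hR))

lemma const (hX : ∀ j, Measurable (X j)) (j : ℕ) (c : 𝕜) :
    IsMarkovFunctional μ X j (fun _ => c) :=
  ⟨integrable_const _, fun _ => c, ‖c‖, measurable_const, fun _ => le_rfl, by
    rw [condExp_const (pastSigma_le hX j)]⟩

lemma comp (hX : ∀ j, Measurable (X j)) {q : 𝒳 j → 𝕜} (hq : Measurable q) {Q : ℝ}
    (hQ : ∀ x, ‖q x‖ ≤ Q) : IsMarkovFunctional μ X j (fun ω => q (X j ω)) := by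
  simpa using (const (μ := μ) hX j (1 : 𝕜)).comp_mul hX hq hQ

lemma sum_Ico (h : IsInhomMarkov μ X κ) {Y : ℕ → Ω → 𝕜}
    (hY : ∀ l, IsMarkovFunctional μ X l (Y l)) (n j : ℕ) :
    IsMarkovFunctional μ X j (fun ω => ∑ l ∈ Finset.Ico j n, Y l ω) := by
  induction hs : n - j generalizing j with
  | zero =>
    simp only [Finset.Ico_eq_empty (show ¬ j < n by omega), Finset.sum_empty]
    exact const h.meas j 0
  | succ s ih =>
    simp only [Finset.sum_eq_sum_Ico_succ_bot (show j < n by omega)]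
    exact (hY j).add ((ih (j + 1) (by omega)).of_add h 1)

lemma exists_condExp_eq_near (hZ : IsMarkovFunctional μ X j Z) {c : 𝕜} {r : ℝ}
    (h : ∀ᵐ ω ∂μ, ‖(μ[Z | pastSigma X j]) ω - c‖ ≤ r) :
    ∃ g : 𝒳 j → 𝕜, Measurable g ∧ (∀ x, ‖g x - c‖ ≤ r) ∧
      μ[Z | pastSigma X j] =ᵐ[μ] fun ω => g (X j ω) := by
  classical
  have hr : 0 ≤ r := let ⟨ω, hω⟩ := h.exists; (norm_nonneg _).trans hω
  obtain ⟨g, R, hg, -, hgZ⟩ := hZ.exists_condExp_eq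
  refine ⟨fun x => if ‖g x - c‖ ≤ r then g x else c,
    .ite (measurableSet_le (by fun_prop) measurable_const) hg measurable_const, fun x => ?_, ?_⟩
  · dsimp only
    split_ifs with hx
    · exact hx
    · simpa using hr
  · filter_upwards [hgZ, h] with ω h1 h2
    rw [h1] at h2
    rw [h1, if_pos h2]

end IsMarkovFunctional

end MarkovChains

section DoeblinChains

lemma norm_integral_sub_le_of_minorized {α 𝕜 : Type*} [MeasurableSpace α] [RCLike 𝕜]
    {ν m : Measure α} [IsProbabilityMeasure ν] [IsProbabilityMeasure m] {γ : ℝ} (hγ : 0 ≤ γ)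
    (hmin : ∀ Γ, MeasurableSet Γ → ENNReal.ofReal γ * m Γ ≤ ν Γ) {g : α → 𝕜} (hg : Measurable g)
    {c : 𝕜} {r : ℝ} (hr : ∀ x, ‖g x - c‖ ≤ r) :
    ‖∫ y, g y ∂ν - (c + (γ : 𝕜) * ∫ y, (g y - c) ∂m)‖ ≤ (1 - γ) * r := by
  set η := ENNReal.ofReal γ • m
  have hle : η ≤ ν := Measure.le_iff.2 fun s hs => by simpa [η] using hmin s hs
  have : IsFiniteMeasure η := ⟨by simp [η]⟩
  have hsum : (ν - η) + η = ν := Measure.sub_add_cancel_of_le hle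
  have hint (ρ : Measure α) [IsFiniteMeasure ρ] : Integrable (fun y => g y - c) ρ :=
    .of_bound (hg.sub_const c).aestronglyMeasurable r (.of_forall hr)
  have hgν : Integrable g ν :=
    ((hint ν).add (integrable_const c)).congr (.of_forall fun y => by simp)
  have hmass : (ν - η).real Set.univ = 1 - γ := by
    have h1 : ((ν - η) + η).real Set.univ = 1 := by rw [hsum]; simp
    have h2 : η.real Set.univ = γ := by
      rw [measureReal_ennreal_smul_apply]; simp [ENNReal.toReal_ofReal hγ]
    rw [measureReal_add_apply] at h1
    linarith
  have hres : ∫ y, g y ∂ν - (c + (γ : 𝕜) * ∫ y, (g y - c) ∂m) = ∫ y, (g y - c) ∂(ν - η) := by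
    have h1 : ∫ y, (g y - c) ∂ν = ∫ y, g y ∂ν - c := by
      rw [integral_sub hgν (integrable_const c)]; simp
    have h2 : ∫ y, (g y - c) ∂ν = ∫ y, (g y - c) ∂(ν - η) + (γ : 𝕜) * ∫ y, (g y - c) ∂m := by
      conv_lhs => rw [← hsum]
      rw [integral_add_measure (hint _) (hint _), integral_smul_measure,
        ENNReal.toReal_ofReal hγ, RCLike.real_smul_eq_coe_mul]
    rw [h1] at h2
    linear_combination h2
  rw [hres, ← hmass, mul_comm]
  exact norm_integral_le_of_norm_le_const (.of_forall hr)

/-- A Markov chain satisfying the uniform Doeblin minorization: `n₀` steps of the chain dominate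
the fraction `γ` of the probability measures `m j`. -/
structure IsDoeblinChain (μ : Measure Ω) (X : ∀ j, Ω → 𝒳 j) (κ : ∀ j n, Kernel (𝒳 j) (𝒳 (j + n)))
    (n₀ : ℕ) (γ : ℝ) (m : ∀ j, Measure (𝒳 j)) : Prop extends IsInhomMarkov μ X κ where
  steps_pos : 0 < n₀
  coeff_mem : γ ∈ Set.Ioo (0 : ℝ) 1
  isProbabilityMeasure : ∀ j, IsProbabilityMeasure (m j)
  minorized : ∀ j (x : 𝒳 j) (Γ : Set (𝒳 (j + n₀))), MeasurableSet Γ →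
    ENNReal.ofReal γ * m (j + n₀) Γ ≤ κ j n₀ x Γ

lemma norm_sum_Ico_le {Y : ℕ → ℝ} {C : ℝ} (hY : ∀ l, |Y l| ≤ C) {n₀ i j : ℕ} (hij : j - i ≤ n₀) :
    ‖∑ l ∈ Finset.Ico i j, Y l‖ ≤ n₀ * C := by
  have hC : 0 ≤ C := (abs_nonneg _).trans (hY 0)
  calc ‖∑ l ∈ Finset.Ico i j, Y l‖ ≤ ∑ _l ∈ Finset.Ico i j, C := norm_sum_le_of_le _ fun l _ => hY l
    _ = (j - i : ℕ) * C := by simp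
    _ ≤ n₀ * C := by gcongr

lemma norm_cexp_mul_sub_one_le {z : ℂ} {x b γ : ℝ} (hx : |x| ≤ b) (hz : ‖z‖ * b ≤ γ / 12)
    (hγ : γ ≤ 1) : ‖Complex.exp (z * x) - 1‖ ≤ γ / 6 := by
  have hzx : ‖z * (x : ℂ)‖ ≤ γ / 12 := by
    rw [norm_mul, Complex.norm_real]
    exact (mul_le_mul_of_nonneg_left hx (norm_nonneg z)).trans hz
  exact (Complex.norm_exp_sub_one_le (hzx.trans (by linarith))).trans (by linarith)

variable {X : ∀ j, Ω → 𝒳 j} {μ : Measure Ω} [IsProbabilityMeasure μ]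
  {κ : ∀ j n, Kernel (𝒳 j) (𝒳 (j + n))} {f : ∀ j, 𝒳 j → ℝ} {C : ℝ}

lemma IsInhomMarkov.isMarkovFunctional_cexp_sum (h : IsInhomMarkov μ X κ)
    (hf : ∀ j, Measurable (f j)) (hC : ∀ j x, |f j x| ≤ C) (z : ℂ) (n j : ℕ) :
    IsMarkovFunctional μ X j
      (fun ω => Complex.exp (z * (∑ l ∈ Finset.Ico j n, f l (X l ω) : ℝ))) := by
  induction hs : n - j generalizing j with
  | zero =>
    simp only [Finset.Ico_eq_empty (show ¬ j < n by omega), Finset.sum_empty, Complex.ofReal_zero,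
      mul_zero, Complex.exp_zero]
    exact .const h.meas j 1
  | succ s ih =>
    simp only [Finset.sum_eq_sum_Ico_succ_bot (show j < n by omega), Complex.ofReal_add, mul_add,
      Complex.exp_add]
    have := hf j
    refine ((ih (j + 1) (by omega)).of_add h 1).comp_mul h.meas
      (q := fun x => Complex.exp (z * (f j x : ℝ))) (by fun_prop) (Q := Real.exp (‖z‖ * C))
      fun x => ?_
    rw [Complex.norm_exp, Real.exp_le_exp]
    refine (Complex.re_le_norm _).trans ?_
    rw [norm_mul, Complex.norm_real]
    exact mul_le_mul_of_nonneg_left (hC j x) (norm_nonneg _)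

namespace IsDoeblinChain

variable {n₀ : ℕ} {γ : ℝ} {m : ∀ j, Measure (𝒳 j)} (hX : IsDoeblinChain μ X κ n₀ γ m)

include hX in
lemma exists_condExp_near {𝕜 : Type*} [RCLike 𝕜] {j : ℕ} {Z : Ω → 𝕜}
    (hZ : IsMarkovFunctional μ X (j + n₀) Z) {c : 𝕜} {r : ℝ}
    (h : ∀ᵐ ω ∂μ, ‖(μ[Z | pastSigma X (j + n₀)]) ω - c‖ ≤ r) :
    ∃ c' : 𝕜, ‖c' - c‖ ≤ γ * r ∧ ∀ᵐ ω ∂μ, ‖(μ[Z | pastSigma X j]) ω - c'‖ ≤ (1 - γ) * r := by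
  have hγ := hX.coeff_mem.1.le
  have := hX.isMarkovKernel j n₀
  have := hX.isProbabilityMeasure (j + n₀)
  obtain ⟨g, hg, hgr, hgZ⟩ := hZ.exists_condExp_eq_near h
  refine ⟨c + (γ : 𝕜) * ∫ y, (g y - c) ∂(m (j + n₀)), ?_, ?_⟩
  · rw [add_sub_cancel_left, norm_mul, RCLike.norm_ofReal, abs_of_nonneg hγ]
    exact mul_le_mul_of_nonneg_left (norm_integral_le_of_forall hgr) hγ
  have hgb (x) : ‖g x‖ ≤ r + ‖c‖ := by
    linarith [norm_sub_norm_le (g x) c, hgr x]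
  filter_upwards [condExp_condExp_of_le (f := Z) (pastSigma_mono hX.meas (Nat.le_add_right j n₀))
    (pastSigma_le hX.meas (j + n₀)), condExp_congr_ae (m := pastSigma X j) hgZ,
    condExp_comp_eq_integral_kernel hX.toIsInhomMarkov j n₀ hg hgb] with ω h1 h2 h3
  rw [← h1, h2, h3]
  exact norm_integral_sub_le_of_minorized hγ (hX.minorized j (X j ω)) hg hgr

include hX in
/-- With `r = n₀ K / γ`, a block of `n₀` terms adds at most `n₀ K = γ r` to the distance `r` of the
tail from a constant, which `n₀` steps of the chain have meanwhile contracted to `(1 - γ) r`. -/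
lemma exists_condExp_sum_near {Y : ℕ → Ω → ℝ} {K : ℝ} (hY : ∀ l, IsMarkovFunctional μ X l (Y l))
    (hK : ∀ l, ∀ᵐ ω ∂μ, |Y l ω| ≤ K) (n i : ℕ) :
    ∃ c : ℝ, ∀ᵐ ω ∂μ,
      ‖(μ[fun ω => ∑ l ∈ Finset.Ico i n, Y l ω | pastSigma X i]) ω - c‖ ≤ n₀ * K / γ := by
  obtain ⟨hγ, hγ1⟩ := hX.coeff_mem
  have hK0 : 0 ≤ K := let ⟨ω, hω⟩ := (hK 0).exists; (abs_nonneg _).trans hω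
  have hblock (i j) (hij : j - i ≤ n₀) :
      ∀ᵐ ω ∂μ, ‖(μ[fun ω => ∑ l ∈ Finset.Ico i j, Y l ω | pastSigma X i]) ω‖ ≤ n₀ * K :=
    ae_norm_condExp_le ((ae_all_iff.2 hK).mono fun ω hω => norm_sum_Ico_le hω hij)
  induction hs : n - i using Nat.strong_induction_on generalizing i with
  | _ s ih =>
    by_cases hin : i + n₀ ≤ n
    · have hpos := hX.steps_pos
      obtain ⟨c, hc⟩ := ih (n - (i + n₀)) (by omega) (i + n₀) rfl
      obtain ⟨c', -, hc'⟩ := hX.exists_condExp_near (.sum_Ico hX.toIsInhomMarkov hY n _) hc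
      refine ⟨c', ?_⟩
      have hsplit : (fun ω => ∑ l ∈ Finset.Ico i n, Y l ω) =
          (fun ω => ∑ l ∈ Finset.Ico i (i + n₀), Y l ω) +
          fun ω => ∑ l ∈ Finset.Ico (i + n₀) n, Y l ω := by
        funext ω
        exact (Finset.sum_Ico_consecutive _ (by omega) hin).symm
      rw [hsplit]
      filter_upwards [hc', hblock i (i + n₀) (by omega),
        condExp_add (integrable_finsetSum (Finset.Ico i (i + n₀)) fun l _ => (hY l).integrable)
          (integrable_finsetSum (Finset.Ico (i + n₀) n) fun l _ => (hY l).integrable)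
          (pastSigma X i)] with ω h1 h2 h3
      rw [h3, Pi.add_apply, add_sub_assoc]
      refine (norm_add_le_of_le h2 h1).trans_eq ?_
      field_simp
      ring
    · refine ⟨0, (hblock i n (by omega)).mono fun ω hω => ?_⟩
      rw [sub_zero, le_div_iff₀ hγ]
      nlinarith [mul_nonneg (Nat.cast_nonneg (α := ℝ) n₀) hK0]

section Nonvanishing

variable (hf : ∀ j, Measurable (f j)) (hC : ∀ j x, |f j x| ≤ C) {z : ℂ}
  (hz : ‖z‖ * (n₀ * C) ≤ γ / 12)

include hX hf hC hz in
lemma exists_condExp_cexp_near_of_add {n j : ℕ} (hjn : j + n₀ ≤ n) {c : ℂ} (hc0 : c ≠ 0)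
    (hc : ∀ᵐ ω ∂μ, ‖(μ[fun ω => Complex.exp (z * (∑ l ∈ Finset.Ico (j + n₀) n, f l (X l ω) : ℝ)) |
      pastSigma X (j + n₀)]) ω - c‖ ≤ ‖c‖ / 2) :
    ∃ c' : ℂ, c' ≠ 0 ∧ ∀ᵐ ω ∂μ,
      ‖(μ[fun ω => Complex.exp (z * (∑ l ∈ Finset.Ico j n, f l (X l ω) : ℝ)) |
        pastSigma X j]) ω - c'‖ ≤ ‖c'‖ / 2 := by
  obtain ⟨hγ, hγ1⟩ := hX.coeff_mem
  have hZ := hX.isMarkovFunctional_cexp_sum hf hC z n (j + n₀)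
  set Z : Ω → ℂ := fun ω => Complex.exp (z * (∑ l ∈ Finset.Ico (j + n₀) n, f l (X l ω) : ℝ))
  obtain ⟨c', hcc', hc'⟩ := hX.exists_condExp_near hZ hc
  have hc0 : 0 < ‖c‖ := norm_pos_iff.2 hc0
  have hc'c : (1 - γ / 2) * ‖c‖ ≤ ‖c'‖ := by
    have := norm_sub_norm_le c c'
    rw [norm_sub_rev] at this
    linarith
  refine ⟨c', norm_pos_iff.1 ((mul_pos (by linarith) hc0).trans_le hc'c), ?_⟩
  set A : Ω → ℂ := fun ω => Complex.exp (z * (∑ l ∈ Finset.Ico j (j + n₀), f l (X l ω) : ℝ)) - 1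
  have hA (ω) : ‖A ω‖ ≤ γ / 6 := norm_cexp_mul_sub_one_le
    (norm_sum_Ico_le (fun l => hC l (X l ω)) (by omega)) hz hγ1.le
  have hAm : StronglyMeasurable[pastSigma X (j + n₀)] A := by
    have hsum : Measurable[pastSigma X (j + n₀)]
        (fun ω => ∑ l ∈ Finset.Ico j (j + n₀), f l (X l ω)) :=
      Finset.measurable_fun_sum _ fun l hl =>
        (hf l).comp (measurable_pastSigma (Finset.mem_Ico.1 hl).2.le)
    exact (Complex.measurable_exp.comp
      ((Complex.measurable_ofReal.comp hsum).const_mul z)).sub_const 1 |>.stronglyMeasurable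
  have hsplit : (fun ω => Complex.exp (z * (∑ l ∈ Finset.Ico j n, f l (X l ω) : ℝ))) =
      Z + fun ω => A ω * Z ω := by
    funext ω
    simp only [Pi.add_apply, A, Z, ← Finset.sum_Ico_consecutive _ (Nat.le_add_right j n₀) hjn,
      Complex.ofReal_add, mul_add, Complex.exp_add]
    ring
  have hZ3 : ∀ᵐ ω ∂μ, ‖(μ[Z | pastSigma X (j + n₀)]) ω‖ ≤ 3 / 2 * ‖c‖ := hc.mono fun ω hω => by
    linarith [norm_sub_norm_le ((μ[Z | pastSigma X (j + n₀)]) ω) c]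
  have hAZ : Integrable (fun ω => A ω * Z ω) μ := hZ.integrable.bdd_mul
    (hAm.mono (pastSigma_le hX.meas _)).aestronglyMeasurable (.of_forall hA)
  rw [hsplit]
  filter_upwards [hc', condExp_add hZ.integrable hAZ (pastSigma X j), ae_norm_condExp_mul_le
    (pastSigma_mono hX.meas (Nat.le_add_right j n₀)) (pastSigma_le hX.meas _) hAm hA hZ.integrable
    hZ3] with ω h1 h2 h3
  rw [h2, Pi.add_apply, add_sub_right_comm]
  refine (norm_add_le_of_le h1 h3).trans ?_
  linarith

include hX hf hC hz in
lemma exists_condExp_cexp_near (n j : ℕ) :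
    ∃ c : ℂ, c ≠ 0 ∧ ∀ᵐ ω ∂μ,
      ‖(μ[fun ω => Complex.exp (z * (∑ l ∈ Finset.Ico j n, f l (X l ω) : ℝ)) |
        pastSigma X j]) ω - c‖ ≤ ‖c‖ / 2 := by
  induction hs : n - j using Nat.strong_induction_on generalizing j with
  | _ s ih =>
    by_cases hjn : j + n₀ ≤ n
    · have hpos := hX.steps_pos
      obtain ⟨c, hc0, hc⟩ := ih (n - (j + n₀)) (by omega) (j + n₀) rfl
      exact hX.exists_condExp_cexp_near_of_add hf hC hz hjn hc0 hc
    · refine ⟨1, one_ne_zero, ?_⟩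
      filter_upwards [condExp_sub_const (pastSigma_le hX.meas j)
        (hX.isMarkovFunctional_cexp_sum hf hC z n j).integrable 1,
        ae_norm_condExp_le (m := pastSigma X j) (.of_forall fun ω => norm_cexp_mul_sub_one_le
          (norm_sum_Ico_le (fun l => hC l (X l ω)) (show n - j ≤ n₀ by omega)) hz
          hX.coeff_mem.2.le)] with ω h1 h2
      rw [← h1, norm_one]
      linarith [hX.coeff_mem.2]

include hX hf hC hz in
lemma complexMGF_sum_sub_const_ne_zero (n : ℕ) (b : ℝ) :
    complexMGF (fun ω => ∑ l ∈ Finset.range n, f l (X l ω) - b) μ z ≠ 0 := by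
  obtain ⟨c, hc0, hc⟩ := hX.exists_condExp_cexp_near hf hC hz n 0
  have hint := norm_integral_sub_le_of_condExp (pastSigma_le hX.meas 0) hc
  have hfactor : complexMGF (fun ω => ∑ l ∈ Finset.range n, f l (X l ω) - b) μ z =
      Complex.exp (-(z * b)) *
        ∫ ω, Complex.exp (z * (∑ l ∈ Finset.Ico 0 n, f l (X l ω) : ℝ)) ∂μ := by
    rw [complexMGF, ← integral_const_mul, Finset.range_eq_Ico]
    congr with ω
    rw [← Complex.exp_add, Complex.ofReal_sub]
    ring_nf
  rw [hfactor]
  refine mul_ne_zero (Complex.exp_ne_zero _) fun h0 => ?_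
  rw [h0, zero_sub, norm_neg] at hint
  linarith [norm_pos_iff.2 hc0]

end Nonvanishing

end IsDoeblinChain

end DoeblinChains

section DoobMartingale

variable {X : ∀ j, Ω → 𝒳 j} {μ : Measure Ω} [IsProbabilityMeasure μ]
  {κ : ∀ j n, Kernel (𝒳 j) (𝒳 (j + n))}

lemma IsMarkovFunctional.sq_comp_sub_comp (h : IsInhomMarkov μ X κ) {j : ℕ} {G : 𝒳 (j + 1) → ℝ}
    {q : 𝒳 j → ℝ} {R Q : ℝ} (hG : Measurable G) (hR : ∀ x, |G x| ≤ R) (hq : Measurable q)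
    (hQ : ∀ x, |q x| ≤ Q) :
    IsMarkovFunctional μ X j (fun ω => (G (X (j + 1) ω) - q (X j ω)) ^ 2) := by
  have hG2 : IsMarkovFunctional μ X j (fun ω => G (X (j + 1) ω) ^ 2) :=
    (IsMarkovFunctional.comp h.meas (hG.pow_const 2) (Q := R ^ 2) fun x => by
      rw [norm_pow]
      exact pow_le_pow_left₀ (norm_nonneg _) (hR x) 2).of_add h 1
  have hqG : IsMarkovFunctional μ X j (fun ω => -2 * q (X j ω) * G (X (j + 1) ω)) :=
    ((IsMarkovFunctional.comp h.meas hG hR).of_add h 1).comp_mul h.meas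
      (q := fun x => -2 * q x) (hq.const_mul _) (Q := 2 * Q) fun x => by
        rw [norm_mul, norm_neg, Real.norm_ofNat]
        exact mul_le_mul_of_nonneg_left (hQ x) two_pos.le
  have hq2 : IsMarkovFunctional μ X j (fun ω => q (X j ω) ^ 2) :=
    .comp h.meas (hq.pow_const 2) (Q := Q ^ 2) fun x => by
      rw [norm_pow]
      exact pow_le_pow_left₀ (norm_nonneg _) (hQ x) 2
  refine ((hG2.add hqG).add hq2).congr (.of_forall fun ω => ?_)
  ring

omit [MeasurableSpace Ω] in
lemma stronglyMeasurable_pastSigma_sum_range {f : ∀ j, 𝒳 j → ℝ} (hf : ∀ j, Measurable (f j))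
    {n i : ℕ} (hi : n ≤ i + 1) :
    StronglyMeasurable[pastSigma X i] fun ω => ∑ k ∈ Finset.range n, f k (X k ω) :=
  Finset.stronglyMeasurable_fun_sum _ fun k hk =>
    ((hf k).comp (measurable_pastSigma (by
      have := Finset.mem_range.1 hk
      omega))).stronglyMeasurable

namespace IsDoeblinChain

variable {f : ∀ j, 𝒳 j → ℝ} {C : ℝ} {n₀ : ℕ} {γ : ℝ} {m : ∀ j, Measure (𝒳 j)}
  (hX : IsDoeblinChain μ X κ n₀ γ m) (hf : ∀ j, Measurable (f j)) (hC : ∀ j x, |f j x| ≤ C)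
  {l n : ℕ}

include hX hf hC

lemma integrable_sum_range (n : ℕ) :
    Integrable (fun ω => ∑ k ∈ Finset.range n, f k (X k ω)) μ :=
  integrable_finsetSum _ fun k _ =>
    .of_bound ((hf k).comp (hX.meas k)).aestronglyMeasurable C (.of_forall fun _ => hC k _)

lemma exists_condExp_sum_range_eq (hl : l ≤ n) :
    ∃ (c : ℝ) (g : 𝒳 l → ℝ), Measurable g ∧ (∀ x, |g x - c| ≤ n₀ * C / γ) ∧
      μ[fun ω => ∑ k ∈ Finset.range n, f k (X k ω) | pastSigma X l] =ᵐ[μ]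
        fun ω => ∑ k ∈ Finset.range l, f k (X k ω) + g (X l ω) := by
  have hY (k) : IsMarkovFunctional μ X k (fun ω => f k (X k ω)) :=
    .comp hX.meas (hf k) (hC k)
  obtain ⟨c, hc⟩ := hX.exists_condExp_sum_near hY (fun k => .of_forall fun ω => hC k _) n l
  obtain ⟨g, hg, hgc, hgE⟩ :=
    (IsMarkovFunctional.sum_Ico hX.toIsInhomMarkov hY n l).exists_condExp_eq_near hc
  refine ⟨c, g, hg, hgc, ?_⟩
  have hsplit : (fun ω => ∑ k ∈ Finset.range n, f k (X k ω)) =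
      (fun ω => ∑ k ∈ Finset.range l, f k (X k ω)) +
        fun ω => ∑ k ∈ Finset.Ico l n, f k (X k ω) := by
    funext ω
    exact (Finset.sum_range_add_sum_Ico _ hl).symm
  have hint := hX.integrable_sum_range hf hC l
  rw [hsplit]
  refine (condExp_add hint (integrable_finsetSum _ fun k _ => (hY k).integrable) _).trans ?_
  rw [condExp_of_stronglyMeasurable (pastSigma_le hX.meas l)
    (stronglyMeasurable_pastSigma_sum_range hf l.le_succ) hint]
  filter_upwards [hgE] with ω hω
  rw [Pi.add_apply, hω]

lemma condExp_sum_range_of_le (hl : n ≤ l) :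
    μ[fun ω => ∑ k ∈ Finset.range n, f k (X k ω) | pastSigma X l] =
      fun ω => ∑ k ∈ Finset.range n, f k (X k ω) :=
  condExp_of_stronglyMeasurable (pastSigma_le hX.meas l)
    (stronglyMeasurable_pastSigma_sum_range hf (by omega)) (hX.integrable_sum_range hf hC n)

lemma ae_abs_condExp_sum_succ_sub_le (n l : ℕ) :
    ∀ᵐ ω ∂μ, |(μ[fun ω => ∑ k ∈ Finset.range n, f k (X k ω) | pastSigma X (l + 1)]) ω -
      (μ[fun ω => ∑ k ∈ Finset.range n, f k (X k ω) | pastSigma X l]) ω| ≤ 2 * (n₀ * C / γ) := by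
  obtain hl | hl := lt_or_ge l n
  · obtain ⟨c, g, -, hgc, hg⟩ := hX.exists_condExp_sum_range_eq hf hC (l := l + 1) hl
    have hnear : ∀ᵐ ω ∂μ,
        ‖(μ[fun ω => ∑ k ∈ Finset.range n, f k (X k ω) | pastSigma X (l + 1)]) ω -
          (∑ k ∈ Finset.range (l + 1), f k (X k ω) + c)‖ ≤ n₀ * C / γ := by
      filter_upwards [hg] with ω hω
      rw [hω, add_sub_add_left_eq_sub]
      exact hgc _
    have hnear' := ae_norm_condExp_sub_le (pastSigma_mono hX.meas l.le_succ)
      (pastSigma_le hX.meas (l + 1))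
      ((stronglyMeasurable_pastSigma_sum_range hf le_rfl).add stronglyMeasurable_const)
      ((hX.integrable_sum_range hf hC (l + 1)).add (integrable_const c)) hnear
    filter_upwards [hnear, hnear'] with ω h1 h2
    rw [two_mul]
    exact (norm_sub_le_norm_sub_add_norm_sub _ _ _).trans (add_le_add h1 (by rwa [norm_sub_rev]))
  · have hC0 : 0 ≤ C := let ⟨ω⟩ := μ.nonempty_of_neZero; (abs_nonneg _).trans (hC 0 (X 0 ω))
    have hγ := hX.coeff_mem.1
    rw [hX.condExp_sum_range_of_le hf hC hl, hX.condExp_sum_range_of_le hf hC (hl.trans l.le_succ)]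
    refine .of_forall fun ω => ?_
    rw [sub_self, abs_zero]
    positivity

lemma isMarkovFunctional_sq_condExp_sum_succ_sub (n l : ℕ) :
    IsMarkovFunctional μ X l (fun ω =>
      ((μ[fun ω => ∑ k ∈ Finset.range n, f k (X k ω) | pastSigma X (l + 1)]) ω -
        (μ[fun ω => ∑ k ∈ Finset.range n, f k (X k ω) | pastSigma X l]) ω) ^ 2) := by
  obtain hl | hl := lt_or_ge l n
  · obtain ⟨c, g, hgm, hgc, hg⟩ := hX.exists_condExp_sum_range_eq hf hC (l := l + 1) hl
    obtain ⟨c', g', hgm', hgc', hg'⟩ := hX.exists_condExp_sum_range_eq hf hC hl.le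
    refine (IsMarkovFunctional.sq_comp_sub_comp hX.toIsInhomMarkov hgm
      (R := n₀ * C / γ + |c|) (fun x => ?_) (q := fun x => g' x - f l x) (hgm'.sub (hf l))
      (Q := n₀ * C / γ + |c'| + C) fun x => ?_).congr ?_
    · linarith [abs_sub_abs_le_abs_sub (g x) c, hgc x]
    · linarith [abs_sub_abs_le_abs_sub (g' x) c', hgc' x, abs_sub (g' x) (f l x), hC l x]
    · filter_upwards [hg, hg'] with ω h1 h2
      rw [h1, h2, Finset.sum_range_succ]
      ring
  · rw [hX.condExp_sum_range_of_le hf hC hl, hX.condExp_sum_range_of_le hf hC (hl.trans l.le_succ)]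
    refine (IsMarkovFunctional.const hX.meas l 0).congr (.of_forall fun ω => ?_)
    simp

lemma ae_abs_condExp_sum_zero_sub_integral_le (n : ℕ) :
    ∀ᵐ ω ∂μ, |(μ[fun ω => ∑ k ∈ Finset.range n, f k (X k ω) | pastSigma X 0]) ω -
      ∫ ω, ∑ k ∈ Finset.range n, f k (X k ω) ∂μ| ≤ 2 * (n₀ * C / γ) := by
  obtain ⟨c, g, -, hgc, hg⟩ := hX.exists_condExp_sum_range_eq hf hC n.zero_le
  refine ae_norm_condExp_sub_integral_le (pastSigma_le hX.meas 0) (c := c) ?_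
  filter_upwards [hg] with ω hω
  rw [hω, Finset.sum_range_zero, zero_add]
  exact hgc _

lemma mgf_sum_sub_integral_le {r θ : ℝ} (hr : r = n₀ * C / γ) (hr0 : 0 < r)
    (hθ : 20 * n₀ * r * |θ| ≤ γ) (n : ℕ) :
    mgf (fun ω => ∑ k ∈ Finset.range n, f k (X k ω) -
        ∫ ω', ∑ k ∈ Finset.range n, f k (X k ω') ∂μ) μ θ ≤
      Real.exp (2 + γ / (8 * n₀ * r ^ 2) *
        Var[fun ω => ∑ k ∈ Finset.range n, f k (X k ω); μ]) := by
  obtain ⟨hγ, hγ1⟩ := hX.coeff_mem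
  have hn₀ : (1 : ℝ) ≤ n₀ := by exact_mod_cast hX.steps_pos
  set S : Ω → ℝ := fun ω => ∑ k ∈ Finset.range n, f k (X k ω)
  set M : ℕ → Ω → ℝ := fun l => μ[S | pastSigma X l]
  have hM : Martingale M (pastFiltration X hX.meas) μ := martingale_condExp S _ μ
  have hMn : M n = S := hX.condExp_sum_range_of_le hf hC le_rfl
  have hB := hX.ae_abs_condExp_sum_succ_sub_le hf hC n
  rw [← hr] at hB
  have hosc (i) : ∀ᵐ ω ∂μ, |(μ[quadVar M i n | pastFiltration X hX.meas i]) ω -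
      ∫ ω', quadVar M i n ω' ∂μ| ≤ 2 * (n₀ * (2 * r) ^ 2 / γ) := by
    obtain ⟨c, hc⟩ := hX.exists_condExp_sum_near (K := (2 * r) ^ 2)
      (hX.isMarkovFunctional_sq_condExp_sum_succ_sub hf hC n)
      (fun l => (hB l).mono fun ω hω => by
        rw [abs_pow]; exact pow_le_pow_left₀ (abs_nonneg _) hω 2) n i
    exact ae_norm_condExp_sub_integral_le (pastSigma_le hX.meas i) hc
  have hrθ : 20 * (r * |θ|) ≤ γ := by nlinarith [mul_nonneg hr0.le (abs_nonneg θ)]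
  have := mgf_martingale_sub_const_le hM hB
    (hr ▸ hX.ae_abs_condExp_sum_zero_sub_integral_le hf hC n) hosc (θ := θ) (by positivity)
    (by nlinarith) ?_
  · rw [hMn] at this
    refine this.trans_eq ?_
    congr 2
    field_simp
    ring
  · rw [← sq_abs θ]
    calc 48 * (2 * (n₀ * (2 * r) ^ 2 / γ)) * |θ| ^ 2
        = 384 / 400 * ((20 * n₀ * r * |θ|) * (20 * (r * |θ|))) / γ := by ring
      _ ≤ 384 / 400 * (γ * γ) / γ := by gcongr
      _ ≤ 1 := by rw [mul_div_assoc, mul_self_div_self]; linarith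

theorem exists_complexMGF_ne_zero_and_mgf_le (hC0 : 0 < C) :
    ∃ δ K : ℝ, 0 < δ ∧ 0 < K ∧ ∀ n : ℕ,
      (∀ z : ℂ, ‖z‖ < δ → complexMGF (fun ω => ∑ k ∈ Finset.range n, f k (X k ω) -
        ∫ ω', ∑ k ∈ Finset.range n, f k (X k ω') ∂μ) μ z ≠ 0) ∧
      ∀ θ : ℝ, |θ| < δ → mgf (fun ω => ∑ k ∈ Finset.range n, f k (X k ω) -
          ∫ ω', ∑ k ∈ Finset.range n, f k (X k ω') ∂μ) μ θ ≤
        Real.exp (2 + K * Var[fun ω => ∑ k ∈ Finset.range n, f k (X k ω); μ]) := by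
  obtain ⟨hγ, hγ1⟩ := hX.coeff_mem
  have hn₀ : (1 : ℝ) ≤ n₀ := by exact_mod_cast hX.steps_pos
  obtain ⟨r, hr⟩ : ∃ r, r = n₀ * C / γ := ⟨_, rfl⟩
  have hr0 : 0 < r := by rw [hr]; positivity
  have hrC : n₀ * C ≤ n₀ * r := by
    rw [hr]
    gcongr
    rw [le_div_iff₀ hγ]
    nlinarith
  refine ⟨γ / (20 * n₀ * r), γ / (8 * n₀ * r ^ 2), by positivity, by positivity, fun n => ⟨?_, ?_⟩⟩
  · intro z hz
    rw [lt_div_iff₀ (by positivity)] at hz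
    refine hX.complexMGF_sum_sub_const_ne_zero hf hC ?_ n _
    nlinarith [norm_nonneg z, mul_le_mul_of_nonneg_left hrC (norm_nonneg z)]
  · intro θ hθ
    rw [lt_div_iff₀ (by positivity), mul_comm] at hθ
    exact hX.mgf_sum_sub_integral_le hf hC hr hr0 hθ.le n

end IsDoeblinChain

end DoobMartingale

section TaylorExpansion

lemma eq_add_mul_dslope_zero (f : ℂ → ℂ) (z : ℂ) : f z = f 0 + z * dslope f 0 z := by
  have h := sub_smul_dslope f 0 z
  simp only [sub_zero, smul_eq_mul] at h
  rw [h]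
  ring

lemma norm_dslope_cexp_zero_le (w : ℂ) : ‖dslope Complex.exp 0 w‖ ≤ Real.exp ‖w‖ := by
  rcases eq_or_ne w 0 with rfl | hw
  · simp [dslope_same]
  · rw [dslope_of_ne _ hw, slope_def_field, Complex.exp_zero, sub_zero, norm_div,
      div_le_iff₀ (norm_pos_iff.2 hw), mul_comm]
    simpa using Complex.norm_exp_sub_sum_le_norm_mul_exp w 1

variable {R r : ℝ} (hr : 0 < r) (hrR : r ≤ R) {w : ℂ → ℝ} (hw : ∀ z, 1 ≤ w z)
  {f : ℂ → ℂ} (hf : DifferentiableOn ℂ f (Metric.ball 0 R)) {M : ℝ}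
  (hM : ∀ z, ‖z‖ < r → ‖f z‖ ≤ M) (hMw : ∀ z, ‖z‖ < R → ‖f z‖ ≤ M * w z)

include hr hrR hf hM in
lemma norm_dslope_zero_le_of_norm_lt {z : ℂ} (hz : ‖z‖ < r) : ‖dslope f 0 z‖ ≤ 2 / r * M := by
  rw [div_mul_eq_mul_div]
  refine Complex.norm_dslope_le_div_of_mapsTo_ball (hf.mono (Metric.ball_subset_ball hrR))
    (fun w hw => ?_) (mem_ball_zero_iff.2 hz)
  rw [mem_closedBall_iff_norm]
  linarith [norm_sub_le (f w) (f 0), hM w (mem_ball_zero_iff.1 hw), hM 0 (by simpa using hr)]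

include hr hrR hw hf hM hMw in
lemma norm_dslope_zero_le_mul {z : ℂ} (hz : ‖z‖ < R) : ‖dslope f 0 z‖ ≤ 2 / r * M * w z := by
  have hM0 : 0 ≤ M := (norm_nonneg _).trans (hM 0 (by simpa using hr))
  obtain hzr | hzr := lt_or_ge ‖z‖ r
  · exact (norm_dslope_zero_le_of_norm_lt hr hrR hf hM hzr).trans
      (le_mul_of_one_le_right (by positivity) (hw z))
  · have hsub : ‖f z - f 0‖ ≤ 2 * (M * w z) := by
      linarith [norm_sub_le (f z) (f 0), hMw z hz, hM 0 (by simpa using hr),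
        le_mul_of_one_le_right hM0 (hw z)]
    have hz0 : z ≠ 0 := norm_pos_iff.1 (hr.trans_le hzr)
    rw [dslope_of_ne _ hz0, slope_def_field, sub_zero, norm_div, mul_assoc, div_mul_eq_mul_div]
    exact div_le_div₀ ((norm_nonneg _).trans hsub) hsub hr hzr

include hr hrR hw in
lemma exists_taylor_expansion_norm_le (J : ℕ) {f : ℂ → ℂ}
    (hf : DifferentiableOn ℂ f (Metric.ball 0 R)) {M : ℝ} (hM : ∀ z, ‖z‖ < r → ‖f z‖ ≤ M)
    (hMw : ∀ z, ‖z‖ < R → ‖f z‖ ≤ M * w z) :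
    ∃ (b : ℕ → ℂ) (g : ℂ → ℂ), DifferentiableOn ℂ g (Metric.ball 0 R) ∧
      (∀ z, f z = ∑ j ∈ Finset.range J, b j * z ^ j + z ^ J * g z) ∧
      (∀ j < J, ‖b j‖ ≤ (2 / r) ^ j * M) ∧ ∀ z, ‖z‖ < R → ‖g z‖ ≤ (2 / r) ^ J * M * w z := by
  induction J generalizing f M with
  | zero => exact ⟨fun _ => 0, f, hf, by simp, by simp, by simpa using hMw⟩
  | succ J ih =>
    obtain ⟨b, g, hg, hfg, hb, hgw⟩ := ih
      ((Complex.differentiableOn_dslope (Metric.ball_mem_nhds _ (hr.trans_le hrR))).2 hf)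
      (fun z => norm_dslope_zero_le_of_norm_lt hr hrR hf hM)
      (fun z => norm_dslope_zero_le_mul hr hrR hw hf hM hMw)
    refine ⟨fun j => Nat.casesOn j (f 0) b, g, hg, fun z => ?_, fun j hj => ?_, fun z hz => ?_⟩
    · rw [eq_add_mul_dslope_zero f z, hfg z, Finset.sum_range_succ', mul_add, Finset.mul_sum]
      have hterm (j) : z * (b j * z ^ j) = b j * z ^ (j + 1) := by ring
      change _ = ∑ j ∈ Finset.range J, b j * z ^ (j + 1) + f 0 * z ^ 0 + z ^ (J + 1) * g z
      simp only [hterm]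
      ring
    · cases j with
      | zero => simpa using hM 0 (by simpa using hr)
      | succ j => exact (hb j (by omega)).trans_eq (by ring)
    · exact (hgw z hz).trans_eq (by ring)

end TaylorExpansion

section LogExpansion

lemma exists_eq_cexp_of_ne_zero {φ : ℂ → ℂ} {R : ℝ} (hR : 0 < R)
    (hφ : DifferentiableOn ℂ φ (Metric.ball 0 R)) (h1 : φ 0 = 1)
    (hne : ∀ z ∈ Metric.ball 0 R, φ z ≠ 0) :
    ∃ L : ℂ → ℂ, L 0 = 0 ∧ (∀ z ∈ Metric.ball 0 R, HasDerivAt L (deriv φ z / φ z) z) ∧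
      ∀ z ∈ Metric.ball 0 R, φ z = Complex.exp (L z) := by
  obtain ⟨L, hL0, hL⟩ :=
    ((hφ.deriv Metric.isOpen_ball).div hφ hne).isExactOn_ball.with_val_at 0 0
  have hexp (z) (hz : z ∈ Metric.ball (0 : ℂ) R) :
      HasDerivAt (fun z => Complex.exp (L z)) (Complex.exp (L z) * (deriv φ z / φ z)) z :=
    (hL z hz).cexp
  obtain ⟨c, -, hc⟩ := (logDeriv_eqOn_iff hφ
    (fun z hz => (hexp z hz).differentiableAt.differentiableWithinAt) Metric.isOpen_ball
    (convex_ball _ _).isPreconnected (fun z _ => Complex.exp_ne_zero _) hne).1 fun z hz => by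
      rw [logDeriv_apply, logDeriv_apply, (hexp z hz).deriv,
        mul_div_cancel_left₀ _ (Complex.exp_ne_zero _)]
  have hc1 : c = 1 := by simpa [h1, hL0] using (hc (Metric.mem_ball_self hR)).symm
  exact ⟨L, hL0, hL, fun z hz => by simpa [hc1] using hc hz⟩

lemma deriv_eq_of_eq_quadratic_add_cube_mul {f g : ℂ → ℂ} {b₀ b₁ b₂ : ℂ} {R : ℝ} (hR : 0 < R)
    (hg : DifferentiableOn ℂ g (Metric.ball 0 R))
    (hfg : ∀ z, f z = b₀ + b₁ * z + b₂ * z ^ 2 + z ^ 3 * g z) :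
    deriv f 0 = b₁ ∧ deriv (deriv f) 0 = 2 * b₂ := by
  have hball : Metric.ball (0 : ℂ) R ∈ nhds 0 := Metric.ball_mem_nhds _ hR
  have hderiv (z) (hz : z ∈ Metric.ball (0 : ℂ) R) :
      deriv f z = b₁ + 2 * b₂ * z + z ^ 2 * (3 * g z + z * deriv g z) := by
    have hgz := (hg.differentiableAt (Metric.isOpen_ball.mem_nhds hz)).hasDerivAt
    rw [funext hfg]
    refine HasDerivAt.deriv (((((hasDerivAt_id z).const_mul b₁).const_add b₀).add
      ((hasDerivAt_pow 2 z).const_mul b₂)).add ((hasDerivAt_pow 3 z).mul hgz) |>.congr_deriv ?_)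
    simp only [Nat.cast_ofNat, Nat.add_one_sub_one]
    ring
  refine ⟨by simpa using hderiv 0 (mem_of_mem_nhds hball), ?_⟩
  rw [(Filter.eventuallyEq_of_mem hball hderiv).deriv_eq]
  have hg0 : HasDerivAt g (deriv g 0) 0 := (hg.differentiableAt hball).hasDerivAt
  have hg1 : HasDerivAt (deriv g) (deriv (deriv g) 0) 0 :=
    ((hg.deriv Metric.isOpen_ball).differentiableAt hball).hasDerivAt
  refine HasDerivAt.deriv (((((hasDerivAt_id (0 : ℂ)).const_mul (2 * b₂)).const_add b₁).add
    ((hasDerivAt_pow 2 (0 : ℂ)).mul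
      ((hg0.const_mul 3).add ((hasDerivAt_id (0 : ℂ)).mul hg1)))).congr_deriv ?_)
  simp

/-- `φ` has the features of the moment generating function `z ↦ 𝔼 exp (z Y)` of a centred variable
`Y` of variance `σ ^ 2` whose logarithm is analytic, and grows at most like `K σ ^ 2`, on the disc
of radius `δ`. -/
structure IsTameMGF (φ : ℂ → ℂ) (σ δ K : ℝ) : Prop where
  differentiable : Differentiable ℂ φ
  map_zero : φ 0 = 1
  deriv_zero : deriv φ 0 = 0
  deriv_deriv_zero : deriv (deriv φ) 0 = (σ : ℂ) ^ 2
  ne_zero : ∀ z, ‖z‖ < δ → φ z ≠ 0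
  norm_le : ∀ z, ‖z‖ < δ → ‖φ z‖ ≤ Real.exp (K * σ ^ 2)

namespace IsTameMGF

variable {φ : ℂ → ℂ} {σ δ K : ℝ} (hφ : IsTameMGF φ σ δ K)

include hφ in
lemma exists_log (hδ : 0 < δ) (hK : 0 < K) (hσ : 0 < σ) :
    ∃ L : ℂ → ℂ, L 0 = 0 ∧ (∀ z ∈ Metric.ball 0 δ, HasDerivAt L (deriv φ z / φ z) z) ∧
      (∀ z ∈ Metric.ball 0 δ, φ z = Complex.exp (L z)) ∧
      ∀ z, ‖z‖ < δ / 2 → ‖L z‖ ≤ 2 * K * σ ^ 2 := by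
  obtain ⟨L, hL0, hL, hexp⟩ := exists_eq_cexp_of_ne_zero hδ hφ.differentiable.differentiableOn
    hφ.map_zero fun z hz => hφ.ne_zero z (mem_ball_zero_iff.1 hz)
  refine ⟨L, hL0, hL, hexp, fun z hz => ?_⟩
  have hre : Set.MapsTo L (Metric.ball 0 δ) {z | z.re ≤ K * σ ^ 2} := fun z hz => by
    have := hφ.norm_le z (mem_ball_zero_iff.1 hz)
    rwa [hexp z hz, Complex.norm_exp, Real.exp_le_exp] at this
  refine (Complex.borelCaratheodory_zero (by positivity)
    (fun z hz => (hL z hz).differentiableAt.differentiableWithinAt) hre hδ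
    (mem_ball_zero_iff.2 (by linarith)) hL0).trans ?_
  rw [div_le_iff₀ (by linarith)]
  have hKσ : 0 < K * σ ^ 2 := by positivity
  nlinarith

include hφ in
lemma exists_eq_cexp_cubic (hδ : 0 < δ) (hK : 0 < K) (hσ : 0 < σ) :
    ∃ g : ℂ → ℂ, DifferentiableOn ℂ g (Metric.ball 0 (δ / 2)) ∧
      (∀ z, ‖z‖ < δ / 2 → φ z = Complex.exp ((σ : ℂ) ^ 2 * z ^ 2 / 2 + z ^ 3 * g z)) ∧
      ∀ z, ‖z‖ < δ / 2 → ‖g z‖ ≤ (4 / δ) ^ 3 * (2 * K) * σ ^ 2 := by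
  obtain ⟨L, hL0, hL, hexp, hLb⟩ := hφ.exists_log hδ hK hσ
  have hsub : Metric.ball (0 : ℂ) (δ / 2) ⊆ Metric.ball 0 δ := Metric.ball_subset_ball (by linarith)
  obtain ⟨b, g, hg, hLg, -, hgb⟩ := exists_taylor_expansion_norm_le (half_pos hδ) le_rfl
    (fun _ => le_rfl) 3
    (fun z hz => (hL z (hsub hz)).differentiableAt.differentiableWithinAt) hLb
    (fun z hz => (hLb z hz).trans_eq (mul_one _).symm)
  simp only [Finset.sum_range_succ, Finset.sum_range_zero, zero_add, pow_zero, mul_one,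
    pow_one] at hLg
  obtain ⟨hL1, hL2⟩ := deriv_eq_of_eq_quadratic_add_cube_mul (half_pos hδ) hg hLg
  have hderiv : deriv L =ᶠ[nhds 0] fun z => deriv φ z / φ z :=
    Filter.eventuallyEq_of_mem (Metric.ball_mem_nhds _ hδ) fun z hz => (hL z hz).deriv
  have hb0 : b 0 = 0 := by simpa [hL0] using (hLg 0).symm
  have hb1 : b 1 = 0 := by rw [← hL1, hderiv.eq_of_nhds, hφ.deriv_zero, zero_div]
  have hb2 : 2 * b 2 = (σ : ℂ) ^ 2 := by
    have hφ' : Differentiable ℂ (deriv φ) :=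
      (contDiff_infty_iff_deriv.1 hφ.differentiable.contDiff).2.differentiable (by simp)
    rw [← hL2, hderiv.deriv_eq, deriv_fun_div (hφ' 0) (hφ.differentiable 0)
      (by simp [hφ.map_zero]), hφ.deriv_zero, hφ.deriv_deriv_zero, hφ.map_zero]
    simp
  refine ⟨g, hg, fun z hz => ?_, fun z hz => (hgb z hz).trans_eq (by field_simp; norm_num)⟩
  rw [hexp z (hsub (mem_ball_zero_iff.2 hz)), hLg z, hb0, hb1, ← hb2]
  congr 1
  ring

end IsTameMGF

end LogExpansion

section EdgeworthExpansion

lemma differentiable_dslope_cexp_zero : Differentiable ℂ (dslope Complex.exp 0) := by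
  rw [← differentiableOn_univ, Complex.differentiableOn_dslope univ_mem]
  exact Complex.differentiable_exp.differentiableOn

lemma norm_mul_dslope_cexp_zero_le {z c : ℂ} {D : ℝ} (hc : ‖c‖ ≤ D) :
    ‖c * dslope Complex.exp 0 (z ^ 3 * c)‖ ≤ D * Real.exp (D * ‖z‖ ^ 3) := by
  rw [norm_mul]
  refine mul_le_mul hc ((norm_dslope_cexp_zero_le _).trans (Real.exp_le_exp.2 ?_))
    (norm_nonneg _) ((norm_nonneg _).trans hc)
  rw [norm_mul, norm_pow, mul_comm]
  gcongr

lemma exists_expansion_cexp_cube_mul {R C s : ℝ} (hR : 0 < R) (hC : 0 ≤ C) (hs : 1 ≤ s)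
    {g : ℂ → ℂ} (hg : DifferentiableOn ℂ g (Metric.ball 0 R))
    (hgC : ∀ z, ‖z‖ < R → ‖g z‖ ≤ C * s ^ 6) (J : ℕ) :
    ∃ (b : ℕ → ℂ) (h : ℂ → ℂ),
      (∀ z, Complex.exp (z ^ 3 * g z) =
        1 + ∑ j ∈ Finset.range J, b j * z ^ (j + 3) + z ^ (J + 3) * h z) ∧
      (∀ j < J, ‖b j‖ ≤ (2 / R * s ^ 2) ^ j * (C * Real.exp (C * R ^ 3) * s ^ 6)) ∧
      ∀ z, ‖z‖ < R → ‖h z‖ ≤ (2 / R * s ^ 2) ^ J * (C * Real.exp (C * R ^ 3) * s ^ 6) *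
        Real.exp (C * s ^ 6 * ‖z‖ ^ 3) := by
  have : 0 < s := by linarith
  set B : ℂ → ℂ := fun z => g z * dslope Complex.exp 0 (z ^ 3 * g z)
  have hBdiff : DifferentiableOn ℂ B (Metric.ball 0 R) := hg.mul
    (differentiable_dslope_cexp_zero.comp_differentiableOn ((differentiableOn_id.pow 3).mul hg))
  have hBle (z) (hz : ‖z‖ < R) : ‖B z‖ ≤ C * s ^ 6 * Real.exp (C * s ^ 6 * ‖z‖ ^ 3) :=
    norm_mul_dslope_cexp_zero_le (hgC z hz)
  have hBsmall (z) (hz : ‖z‖ < R / s ^ 2) : ‖B z‖ ≤ C * Real.exp (C * R ^ 3) * s ^ 6 := by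
    rw [mul_right_comm]
    refine (hBle z (hz.trans_le (div_le_self hR.le (one_le_pow₀ hs)))).trans ?_
    have hexp : C * s ^ 6 * ‖z‖ ^ 3 ≤ C * R ^ 3 := by
      calc C * s ^ 6 * ‖z‖ ^ 3 ≤ C * s ^ 6 * (R / s ^ 2) ^ 3 := by gcongr
        _ = C * R ^ 3 := by field_simp
    gcongr
  obtain ⟨b, h, -, hBh, hb, hh⟩ := exists_taylor_expansion_norm_le (by positivity : 0 < R / s ^ 2)
    (div_le_self hR.le (one_le_pow₀ hs)) (w := fun z => Real.exp (C * s ^ 6 * ‖z‖ ^ 3))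
    (fun z => Real.one_le_exp (by positivity)) J hBdiff hBsmall fun z hz =>
      (hBle z hz).trans (by
        gcongr
        exact le_mul_of_one_le_right hC (Real.one_le_exp (by positivity)))
  rw [show 2 / (R / s ^ 2) = 2 / R * s ^ 2 by field_simp] at hb hh
  refine ⟨b, h, fun z => ?_, hb, hh⟩
  have hterm (j) : b j * z ^ (j + 3) = z ^ 3 * (b j * z ^ j) := by ring
  simp only [hterm]
  rw [eq_add_mul_dslope_zero Complex.exp, Complex.exp_zero, mul_assoc, ← Finset.mul_sum]
  linear_combination z ^ 3 * hBh z

/-- A radius inside `δ` on which the cubic remainder of the logarithm of an `IsTameMGF` is at most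
half its quadratic part. -/
def expansionRadius (δ K : ℝ) : ℝ := min (min (δ / 4) 1) (1 / (4 * ((4 / δ) ^ 3 * (2 * K))))

lemma expansionRadius_pos {δ K : ℝ} (hδ : 0 < δ) (hK : 0 < K) : 0 < expansionRadius δ K := by
  unfold expansionRadius
  positivity

lemma expansionRadius_le_div_four (δ K : ℝ) : expansionRadius δ K ≤ δ / 4 :=
  (min_le_left _ _).trans (min_le_left _ _)

lemma expansionRadius_le_one (δ K : ℝ) : expansionRadius δ K ≤ 1 :=
  (min_le_left _ _).trans (min_le_right _ _)

lemma mul_expansionRadius_le {δ K : ℝ} (hδ : 0 < δ) (hK : 0 < K) :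
    (4 / δ) ^ 3 * (2 * K) * expansionRadius δ K ≤ 1 / 4 := by
  calc _ ≤ (4 / δ) ^ 3 * (2 * K) * (1 / (4 * ((4 / δ) ^ 3 * (2 * K)))) := by
        gcongr
        exact min_le_right _ _
    _ = 1 / 4 := by field_simp

lemma mul_norm_pow_three_le {δ K σ : ℝ} {z : ℂ} (hδ : 0 < δ) (hK : 0 < K)
    (hz : ‖z‖ ≤ expansionRadius δ K) :
    (4 / δ) ^ 3 * (2 * K) * σ ^ 2 * ‖z‖ ^ 3 ≤ (σ * ‖z‖) ^ 2 / 4 := by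
  have hC : (4 / δ) ^ 3 * (2 * K) * ‖z‖ ≤ 1 / 4 :=
    (mul_le_mul_of_nonneg_left hz (by positivity)).trans (mul_expansionRadius_le hδ hK)
  calc _ = (4 / δ) ^ 3 * (2 * K) * ‖z‖ * (σ * ‖z‖) ^ 2 := by ring
    _ ≤ 1 / 4 * (σ * ‖z‖) ^ 2 := by gcongr
    _ = (σ * ‖z‖) ^ 2 / 4 := by ring

namespace IsTameMGF

variable {φ : ℂ → ℂ} {σ δ K : ℝ} (hφ : IsTameMGF φ σ δ K)

include hφ in
lemma norm_le_exp_sq (hδ : 0 < δ) (hK : 0 < K) (hσ : 0 < σ) {z : ℂ}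
    (hz : ‖z‖ ≤ expansionRadius δ K) : ‖φ z‖ ≤ Real.exp ((σ * ‖z‖) ^ 2) := by
  obtain ⟨g, -, hexp, hg⟩ := hφ.exists_eq_cexp_cubic hδ hK hσ
  have hzδ : ‖z‖ < δ / 2 := by linarith [expansionRadius_le_div_four δ K]
  rw [hexp z hzδ, Complex.norm_exp, Real.exp_le_exp]
  refine (Complex.re_le_norm _).trans ((norm_add_le _ _).trans ?_)
  have hquad : ‖(σ : ℂ) ^ 2 * z ^ 2 / 2‖ = (σ * ‖z‖) ^ 2 / 2 := by simp [mul_pow]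
  have hcube : ‖z ^ 3 * g z‖ ≤ (σ * ‖z‖) ^ 2 / 4 := by
    rw [norm_mul, norm_pow, mul_comm]
    exact (mul_le_mul_of_nonneg_right (hg z hzδ) (by positivity)).trans
      (mul_norm_pow_three_le hδ hK hz)
  linarith [sq_nonneg (σ * ‖z‖)]

end IsTameMGF

lemma exists_expansion_of_isTameMGF {δ K : ℝ} (hδ : 0 < δ) (hK : 0 < K) (J : ℕ) :
    ∃ A M : ℝ, 1 ≤ A ∧ 0 < M ∧ ∀ (s : ℝ) (φ : ℂ → ℂ), 1 ≤ s → IsTameMGF φ (s ^ 3) δ K →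
      ∃ b : ℕ → ℂ, (∀ j < J, ‖b j‖ ≤ (A * s ^ 2) ^ j * (M * s ^ 6)) ∧
        ∀ z, ‖z‖ ≤ expansionRadius δ K →
          ‖φ z - Complex.exp ((s : ℂ) ^ 6 * z ^ 2 / 2) *
              (1 + ∑ j ∈ Finset.range J, b j * z ^ (j + 3))‖ ≤
            ‖Complex.exp ((s : ℂ) ^ 6 * z ^ 2 / 2)‖ * (‖z‖ ^ (J + 3) *
              ((A * s ^ 2) ^ J * (M * s ^ 6) * Real.exp ((s ^ 3 * ‖z‖) ^ 2 / 4))) := by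
  set R := 2 * expansionRadius δ K with hR
  set C := (4 / δ) ^ 3 * (2 * K)
  have hr := expansionRadius_pos hδ hK
  refine ⟨2 / R, C * Real.exp (C * R ^ 3), ?_, by positivity, fun s φ hs hφ => ?_⟩
  · rw [one_le_div (by positivity)]
    linarith only [hR, expansionRadius_le_one δ K]
  have hRδ : R ≤ δ / 2 := by linarith only [hR, expansionRadius_le_div_four δ K]
  obtain ⟨g, hg, hexp, hgle⟩ := hφ.exists_eq_cexp_cubic hδ hK (by positivity)
  obtain ⟨b, h, hgh, hb, hh⟩ := exists_expansion_cexp_cube_mul (R := R) (C := C) (by positivity)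
    (by positivity) hs (hg.mono (Metric.ball_subset_ball hRδ))
    (fun z hz => (hgle z (hz.trans_le hRδ)).trans_eq (by ring)) J
  refine ⟨b, hb, fun z hz => ?_⟩
  have hφz : φ z = Complex.exp ((s : ℂ) ^ 6 * z ^ 2 / 2) *
      (1 + ∑ j ∈ Finset.range J, b j * z ^ (j + 3) + z ^ (J + 3) * h z) := by
    rw [hexp z (by linarith), Complex.exp_add, hgh z]
    push_cast
    ring_nf
  rw [hφz, ← mul_sub, add_sub_cancel_left, norm_mul, norm_mul, norm_pow]
  gcongr
  refine (hh z (by linarith)).trans ?_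
  gcongr
  exact le_of_eq_of_le (by ring) (mul_norm_pow_three_le hδ hK hz)

lemma norm_div_pow_le_of_norm_le {A M s : ℝ} {n j : ℕ} {c : ℂ} (hA : 1 ≤ A) (hM : 0 ≤ M)
    (hs : 1 ≤ s) (hj : j ≤ n) (hc : ‖c‖ ≤ (A * s ^ 2) ^ j * (M * s ^ 6)) :
    ‖c / ((s : ℂ) ^ 3) ^ (j + 3)‖ ≤ A ^ n * M / s ^ 3 := by
  have hs0 : 0 < s := by linarith
  rw [norm_div, norm_pow, norm_pow, Complex.norm_real, Real.norm_of_nonneg hs0.le,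
    div_le_div_iff₀ (by positivity) (by positivity)]
  calc ‖c‖ * s ^ 3 ≤ (A * s ^ 2) ^ j * (M * s ^ 6) * s ^ 3 := by gcongr
    _ = A ^ j * M * (s ^ 9 * s ^ (2 * j)) := by rw [mul_pow, ← pow_mul]; ring
    _ ≤ A ^ n * M * (s ^ 9 * s ^ (3 * j)) := by
      gcongr
      norm_num
    _ = A ^ n * M * (s ^ 3) ^ (j + 3) := by ring

lemma norm_cexp_neg_sq_div_two (u : ℝ) :
    ‖Complex.exp (-(u : ℂ) ^ 2 / 2)‖ = Real.exp (-u ^ 2 / 2) := by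
  rw [Complex.norm_exp]
  simp [← Complex.ofReal_pow]

lemma exists_edgeworth_expansion {δ K : ℝ} (hδ : 0 < δ) (hK : 0 < K) (m : ℕ) :
    ∃ C : ℝ, 0 < C ∧ ∀ (σ : ℝ) (φ : ℂ → ℂ), 1 ≤ σ → IsTameMGF φ σ δ K →
      ∃ b : ℕ → ℂ, (∀ j < 3 * m, ‖b j‖ ≤ C / σ) ∧
        ∀ u : ℝ, |u| ≤ expansionRadius δ K * σ →
          ‖φ (u / σ * Complex.I) - Complex.exp (-(u : ℂ) ^ 2 / 2) *
              (1 + ∑ j ∈ Finset.range (3 * m), b j * (u * Complex.I) ^ (j + 3))‖ ≤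
            C / σ ^ (m + 1) * (|u| ^ (3 * m + 3) * Real.exp (-u ^ 2 / 4)) := by
  obtain ⟨A, M, hA, hM, h⟩ := exists_expansion_of_isTameMGF hδ hK (3 * m)
  refine ⟨A ^ (3 * m) * M, by positivity, fun σ φ hσ hφ => ?_⟩
  obtain ⟨s, hs, rfl⟩ : ∃ s : ℝ, 1 ≤ s ∧ s ^ 3 = σ :=
    ⟨σ ^ (1 / 3 : ℝ), Real.one_le_rpow hσ (by norm_num), by
      rw [← Real.rpow_natCast, ← Real.rpow_mul (by linarith)]
      norm_num⟩
  have hs0 : 0 < s := by linarith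
  have hsC : (s : ℂ) ≠ 0 := Complex.ofReal_ne_zero.2 hs0.ne'
  obtain ⟨b, hb, hφb⟩ := h s φ hs hφ
  refine ⟨fun j => b j / ((s : ℂ) ^ 3) ^ (j + 3),
    fun j hj => norm_div_pow_le_of_norm_le hA hM.le hs hj.le (hb j hj), fun u hu => ?_⟩
  set z : ℂ := u / (s ^ 3 : ℝ) * Complex.I with hz
  have huz : (u : ℂ) * Complex.I = s ^ 3 * z := by
    rw [hz]
    push_cast
    field_simp
  have hzu : s ^ 3 * ‖z‖ = |u| := by
    simpa [abs_of_pos hs0] using (congrArg norm huz).symm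
  have hsq : (s : ℂ) ^ 6 * z ^ 2 / 2 = -(u : ℂ) ^ 2 / 2 := by
    linear_combination ((s : ℂ) ^ 3 * z + u * Complex.I) * huz / -2 + (u : ℂ) ^ 2 / 2 *
      Complex.I_sq
  have hterm (j) : b j / ((s : ℂ) ^ 3) ^ (j + 3) * (u * Complex.I) ^ (j + 3) =
      b j * z ^ (j + 3) := by
    rw [huz, mul_pow]
    field_simp
  have hφz := hφb z (le_of_mul_le_mul_left (by linarith) (by positivity : 0 < s ^ 3))
  rw [hsq, norm_cexp_neg_sq_div_two, hzu] at hφz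
  simp only [hterm]
  refine hφz.trans_eq ?_
  calc _ = A ^ (3 * m) * M / (s ^ 3) ^ (m + 1) * ((s ^ 3 * ‖z‖) ^ (3 * m + 3) *
          (Real.exp (-u ^ 2 / 2) * Real.exp (|u| ^ 2 / 4))) := by
        field_simp
        ring
    _ = _ := by
        rw [hzu, ← Real.exp_add, sq_abs]
        ring_nf

end EdgeworthExpansion

section Wasserstein

lemma wassersteinDist_map_le {Ω : Type*} [MeasurableSpace Ω] (P : Measure Ω) (p : ℝ)
    {X Y : Ω → ℝ} (hX : Measurable X) (hY : Measurable Y) :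
    wassersteinDist p (P.map X) (P.map Y) ≤
      (∫⁻ ω, ENNReal.ofReal (|X ω - Y ω| ^ p) ∂P) ^ (1 / p) := by
  refine (iInf_le_of_le (P.map fun ω => (X ω, Y ω)) (iInf₂_le ?_ ?_)).trans_eq ?_
  · rw [Measure.map_map measurable_fst (hX.prodMk hY)]
    rfl
  · rw [Measure.map_map measurable_snd (hX.prodMk hY)]
    rfl
  · rw [lintegral_map (by fun_prop) (hX.prodMk hY)]

lemma exists_gluing {α β γ : Type*} [MeasurableSpace α] [MeasurableSpace β] [MeasurableSpace γ]
    [StandardBorelSpace β] [Nonempty β] [StandardBorelSpace γ] [Nonempty γ]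
    (ρ₁ : Measure (α × β)) (ρ₂ : Measure (α × γ)) [IsFiniteMeasure ρ₁] [IsFiniteMeasure ρ₂]
    (h : ρ₁.fst = ρ₂.fst) :
    ∃ Θ : Measure (α × β × γ), Θ.map (fun t => (t.1, t.2.1)) = ρ₁ ∧
      Θ.map (fun t => (t.1, t.2.2)) = ρ₂ := by
  refine ⟨ρ₁.fst ⊗ₘ (ρ₁.condKernel ×ₖ ρ₂.condKernel), ?_, ?_⟩
  · change Measure.map (Prod.map id Prod.fst) _ = ρ₁
    rw [← Measure.compProd_map measurable_fst, ← Kernel.fst_eq, Kernel.fst_prod,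
      ρ₁.disintegrate ρ₁.condKernel]
  · change Measure.map (Prod.map id Prod.snd) _ = ρ₂
    rw [← Measure.compProd_map measurable_snd, ← Kernel.snd_eq, Kernel.snd_prod, h,
      ρ₂.disintegrate ρ₂.condKernel]

lemma isFiniteMeasure_of_map {α β : Type*} [MeasurableSpace α] [MeasurableSpace β]
    {ρ : Measure α} {f : α → β} (hf : Measurable f) {ν : Measure β} [IsFiniteMeasure ν]
    (h : ρ.map f = ν) : IsFiniteMeasure ρ :=
  ⟨by simpa [← h, Measure.map_apply hf MeasurableSet.univ] using measure_lt_top ν Set.univ⟩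

lemma lintegral_Lp_abs_sub_le {α : Type*} [MeasurableSpace α] {Θ : Measure α} {p : ℝ}
    (hp : 1 ≤ p) {X Y Z : α → ℝ} (hX : Measurable X) (hY : Measurable Y) (hZ : Measurable Z) :
    (∫⁻ t, ENNReal.ofReal (|X t - Z t| ^ p) ∂Θ) ^ (1 / p) ≤
      (∫⁻ t, ENNReal.ofReal (|X t - Y t| ^ p) ∂Θ) ^ (1 / p) +
        (∫⁻ t, ENNReal.ofReal (|Y t - Z t| ^ p) ∂Θ) ^ (1 / p) := by
  have hp0 : 0 ≤ p := by linarith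
  simp only [← ENNReal.ofReal_rpow_of_nonneg (abs_nonneg _) hp0]
  refine le_trans ?_ (ENNReal.lintegral_Lp_add_le (by fun_prop) (by fun_prop) hp)
  gcongr with t
  rw [Pi.add_apply, ← ENNReal.ofReal_add (abs_nonneg _) (abs_nonneg _)]
  exact ENNReal.ofReal_le_ofReal (abs_sub_le _ _ _)

lemma wassersteinDist_triangle {p : ℝ} (hp : 1 ≤ p) (μ ν η : Measure ℝ) [IsFiniteMeasure ν] :
    wassersteinDist p μ η ≤ wassersteinDist p μ ν + wassersteinDist p ν η := by
  conv_rhs => unfold wassersteinDist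
  simp only [ENNReal.iInf_add, ENNReal.add_iInf]
  refine le_iInf fun ρ₂ => le_iInf fun h₂ν => le_iInf fun h₂η => le_iInf fun ρ₁ =>
    le_iInf fun h₁μ => le_iInf fun h₁ν => ?_
  have := isFiniteMeasure_of_map measurable_snd h₁ν
  have := isFiniteMeasure_of_map measurable_fst h₂ν
  have hfst : (ρ₁.map Prod.swap).fst = ρ₂.fst := by
    rw [Measure.fst_map_swap, Measure.snd, h₁ν, Measure.fst, h₂ν]
  obtain ⟨Θ, hΘ₁, hΘ₂⟩ := exists_gluing (ρ₁.map Prod.swap) ρ₂ hfst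
  have hρ₁ : ρ₁ = Θ.map fun t => (t.2.1, t.1) := by
    change _ = Θ.map (Prod.swap ∘ fun t => (t.1, t.2.1))
    rw [← Measure.map_map measurable_swap (by fun_prop), hΘ₁,
      Measure.map_map measurable_swap measurable_swap, Prod.swap_swap_eq, Measure.map_id]
  rw [← h₁μ, ← h₂η, hρ₁, ← hΘ₂, Measure.map_map measurable_fst (by fun_prop),
    Measure.map_map measurable_snd (by fun_prop), lintegral_map (by fun_prop) (by fun_prop),
    lintegral_map (by fun_prop) (by fun_prop)]
  exact (wassersteinDist_map_le Θ p (by fun_prop) (by fun_prop)).trans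
    (lintegral_Lp_abs_sub_le hp (by fun_prop) (by fun_prop) (by fun_prop))

lemma wassersteinDist_conv_le (p : ℝ) (μ ν : Measure ℝ) [IsProbabilityMeasure μ]
    [IsProbabilityMeasure ν] :
    wassersteinDist p μ (μ.conv ν) ≤ (∫⁻ h, ENNReal.ofReal (|h| ^ p) ∂ν) ^ (1 / p) := by
  have h := wassersteinDist_map_le (μ.prod ν) p measurable_fst measurable_add
  have hsnd : (μ.prod ν).map Prod.snd = ν := by simp
  rw [← Measure.fst, Measure.fst_prod] at h
  refine h.trans_eq ?_
  conv_rhs => rw [← hsnd, lintegral_map (by fun_prop) (by fun_prop)]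
  simp

end Wasserstein

section QuantileCoupling

lemma exists_forall_le_iff_le_cdf (F : Measure ℝ) [IsProbabilityMeasure F] {u : ℝ} (h0 : 0 < u)
    (h1 : u < 1) : ∃ t, ∀ x, t ≤ x ↔ u ≤ cdf F x := by
  set A : Set ℝ := {x | u ≤ cdf F x}
  have hne : A.Nonempty :=
    (((tendsto_cdf_atTop F).eventually (lt_mem_nhds h1)).mono fun _ => le_of_lt).exists
  have hbdd : BddBelow A := by
    obtain ⟨x, hx⟩ := ((tendsto_cdf_atBot F).eventually (gt_mem_nhds h0)).exists
    exact ⟨x, fun z hz => le_of_not_gt fun hzx =>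
      (hx.trans_le hz).not_ge (monotone_cdf F hzx.le)⟩
  have hmem : sInf A ∈ A := by
    have hright : Tendsto (cdf F) (nhdsWithin (sInf A) (Set.Ioi (sInf A)))
        (nhds (cdf F (sInf A))) :=
      ((cdf F).right_continuous (sInf A)).tendsto.mono_left
        (nhdsWithin_mono _ Set.Ioi_subset_Ici_self)
    refine ge_of_tendsto hright (eventually_nhdsWithin_of_forall fun x hx => ?_)
    obtain ⟨z, hz, hzx⟩ := exists_lt_of_csInf_lt hne hx
    exact le_trans hz (monotone_cdf F hzx.le)
  exact ⟨sInf A, fun x => ⟨fun h => le_trans hmem (monotone_cdf F h), fun h => csInf_le hbdd h⟩⟩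

variable (G : Measure ℝ) [IsProbabilityMeasure G]

omit [IsProbabilityMeasure G] in
lemma cdf_mem_Ioo_of_strictMono (hmono : StrictMono (cdf G)) (y : ℝ) :
    cdf G y ∈ Set.Ioo (0 : ℝ) 1 :=
  ⟨(cdf_nonneg G (y - 1)).trans_lt (hmono (by linarith)),
    (hmono (show y < y + 1 by linarith)).trans_le (cdf_le_one G _)⟩

lemma measureReal_setOf_cdf_le (hcont : Continuous (cdf G)) (hmono : StrictMono (cdf G)) {a : ℝ}
    (ha : a ∈ Set.Icc (0 : ℝ) 1) : G.real {y | cdf G y ≤ a} = a := by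
  have hIoo := cdf_mem_Ioo_of_strictMono G hmono
  rcases ha.1.eq_or_lt with rfl | h0
  · have : {y | cdf G y ≤ 0} = ∅ := by
      ext y
      simpa using (hIoo y).1
    simp [this]
  rcases ha.2.eq_or_lt with rfl | h1
  · have : {y | cdf G y ≤ 1} = Set.univ := by
      ext y
      simpa using (hIoo y).2.le
    simp [this]
  obtain ⟨b, hb⟩ := ((tendsto_cdf_atBot G).eventually (gt_mem_nhds h0)).exists
  obtain ⟨c, hc⟩ := ((tendsto_cdf_atTop G).eventually (lt_mem_nhds h1)).exists
  obtain ⟨y, rfl⟩ := mem_range_of_exists_le_of_exists_ge hcont ⟨b, hb.le⟩ ⟨c, hc.le⟩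
  simp only [hmono.le_iff_le]
  exact (cdf_eq_real G y).symm

lemma exists_quantile_map (F : Measure ℝ) [IsProbabilityMeasure F] (hcont : Continuous (cdf G))
    (hmono : StrictMono (cdf G)) :
    ∃ τ : ℝ → ℝ, Measurable τ ∧ G.map τ = F ∧ ∀ y x, τ y ≤ x ↔ cdf G y ≤ cdf F x := by
  choose τ hτ using fun y => exists_forall_le_iff_le_cdf F
    (cdf_mem_Ioo_of_strictMono G hmono y).1 (cdf_mem_Ioo_of_strictMono G hmono y).2
  have hτm : Monotone τ := fun y z hyz =>
    (hτ y _).2 ((hmono.monotone hyz).trans ((hτ z _).1 le_rfl))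
  have : IsProbabilityMeasure (G.map τ) :=
    Measure.isProbabilityMeasure_map hτm.measurable.aemeasurable
  refine ⟨τ, hτm.measurable, Measure.eq_of_cdf _ _ ?_, hτ⟩
  ext x
  have hpre : τ ⁻¹' Set.Iic x = {y | cdf G y ≤ cdf F x} := Set.ext fun y => hτ y x
  rw [cdf_eq_real, map_measureReal_apply hτm.measurable measurableSet_Iic, hpre,
    measureReal_setOf_cdf_le G hcont hmono ⟨cdf_nonneg F x, cdf_le_one F x⟩]

end QuantileCoupling

section StandardNormal

/-- The density of the standard normal law. -/
def stdNormalPDF (x : ℝ) : ℝ := gaussianPDFReal 0 1 x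

lemma stdNormalPDF_eq (x : ℝ) :
    stdNormalPDF x = (Real.sqrt (2 * Real.pi))⁻¹ * Real.exp (-x ^ 2 / 2) := by
  simp [stdNormalPDF, gaussianPDFReal]

lemma stdNormalPDF_pos (x : ℝ) : 0 < stdNormalPDF x := gaussianPDFReal_pos _ _ _ one_ne_zero

lemma hasDerivAt_stdNormalPDF (x : ℝ) : HasDerivAt stdNormalPDF (-x * stdNormalPDF x) x := by
  have hquad : HasDerivAt (fun x : ℝ => -x ^ 2 / 2) (-x) x :=
    ((hasDerivAt_pow 2 x).neg.div_const 2).congr_deriv (by push_cast; ring)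
  rw [funext stdNormalPDF_eq]
  exact (hquad.exp.const_mul _).congr_deriv (by ring)

@[fun_prop]
lemma continuous_stdNormalPDF : Continuous stdNormalPDF :=
  continuous_iff_continuousAt.2 fun x => (hasDerivAt_stdNormalPDF x).continuousAt

lemma integrable_stdNormalPDF : Integrable stdNormalPDF := integrable_gaussianPDFReal 0 1

lemma cdf_gaussianReal_eq_stdNormalCDF : ⇑(cdf (gaussianReal 0 1)) = stdNormalCDF :=
  funext fun _ => cdf_eq_real _ _

lemma stdNormalCDF_eq_integral (x : ℝ) :
    stdNormalCDF x = ∫ t in Set.Iic x, stdNormalPDF t := by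
  rw [stdNormalCDF, gaussianReal_apply_eq_integral _ one_ne_zero,
    ENNReal.toReal_ofReal (integral_nonneg fun t => gaussianPDFReal_nonneg _ _ _)]
  rfl

lemma stdNormalCDF_sub (x y : ℝ) :
    stdNormalCDF y - stdNormalCDF x = ∫ t in x..y, stdNormalPDF t := by
  rw [stdNormalCDF_eq_integral, stdNormalCDF_eq_integral, intervalIntegral.integral_Iic_sub_Iic
    integrable_stdNormalPDF.integrableOn integrable_stdNormalPDF.integrableOn]

lemma hasDerivAt_stdNormalCDF (x : ℝ) : HasDerivAt stdNormalCDF (stdNormalPDF x) x := by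
  rw [show stdNormalCDF = fun y => stdNormalCDF 0 + ∫ t in (0 : ℝ)..y, stdNormalPDF t from
    funext fun y => by rw [← stdNormalCDF_sub]; ring]
  exact (continuous_stdNormalPDF.integral_hasStrictDerivAt 0 x).hasDerivAt.const_add _

@[fun_prop]
lemma continuous_stdNormalCDF : Continuous stdNormalCDF :=
  continuous_iff_continuousAt.2 fun x => (hasDerivAt_stdNormalCDF x).continuousAt

lemma strictMono_stdNormalCDF : StrictMono stdNormalCDF :=
  strictMono_of_hasDerivAt_pos hasDerivAt_stdNormalCDF stdNormalPDF_pos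

end StandardNormal

section BandLimitedKernel

/-- `w` is a probability density on `ℝ` with finite moments of all orders which is the Fourier
integral of an amplitude `ψ` supported in the frequency band `[-c, c]` and bounded by `B`. -/
structure IsBandLimitedKernel (c : ℝ) (w : ℝ → ℝ) (ψ : ℝ → ℂ) (B : ℝ) : Prop where
  nonneg : ∀ y, 0 ≤ w y
  continuous : Continuous w
  integral_eq_one : ∫ y, w y = 1
  integrable_pow_mul : ∀ k : ℕ, Integrable fun y => |y| ^ k * w y
  integrable_amplitude : Integrable ψ
  norm_amplitude_le : ∀ t, ‖ψ t‖ ≤ B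
  amplitude_eq_zero : ∀ t, c < |t| → ψ t = 0
  eq_integral : ∀ y : ℝ, (w y : ℂ) = ∫ t : ℝ, Complex.exp (t * y * Complex.I) * ψ t

open scoped FourierTransform SchwartzMap Convolution

/-- The Fourier transform of a smooth bump, as a Schwartz function. -/
def bumpFourier (f : ContDiffBump (0 : ℝ)) : 𝓢(ℝ, ℂ) :=
  𝓕 ((f.hasCompactSupport.comp_left (g := ((↑) : ℝ → ℂ)) Complex.ofReal_zero).toSchwartzMap
    (Complex.ofRealCLM.contDiff.comp f.contDiff))

variable (f : ContDiffBump (0 : ℝ))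

lemma bumpFourier_apply (ξ : ℝ) : bumpFourier f ξ =
    ∫ t : ℝ, Complex.exp (↑(-2 * Real.pi * t * ξ) * Complex.I) • (f t : ℂ) :=
  Real.fourier_real_eq_integral_exp_smul _ ξ

lemma conj_bumpFourier (ξ : ℝ) : (starRingEnd ℂ) (bumpFourier f ξ) = bumpFourier f ξ := by
  rw [bumpFourier_apply, ← integral_conj, ← integral_neg_eq_self]
  congr with t
  simp only [smul_eq_mul, map_mul, ← Complex.exp_conj, Complex.conj_ofReal, Complex.conj_I, f.neg]
  congr 2
  push_cast
  ring

lemma bumpFourier_zero_ne_zero : bumpFourier f 0 ≠ 0 := by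
  have h0 : bumpFourier f 0 = ((∫ t, f t : ℝ) : ℂ) := by
    simp [bumpFourier_apply, ← integral_complex_ofReal]
  rw [h0, Complex.ofReal_ne_zero]
  exact f.integral_pos.ne'

lemma integrable_pow_mul_norm_sq (G : 𝓢(ℝ, ℂ)) (k : ℕ) :
    Integrable fun ξ => |ξ| ^ k * ‖G ξ‖ ^ 2 := by
  obtain ⟨M, -, hM⟩ := G.decay 0 0
  have hGM (ξ) : ‖G ξ‖ ≤ M := by simpa using hM ξ
  refine ((G.integrable_pow_mul volume k).mul_const M).mono'
    (by have := G.continuous; fun_prop) (Eventually.of_forall fun ξ => ?_)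
  rw [Real.norm_of_nonneg (by positivity), sq, ← mul_assoc, Real.norm_eq_abs]
  gcongr
  exact hGM ξ

/-- The self-convolution of a smooth bump. -/
def bumpConv : ℝ → ℂ :=
  (fun t => (f t : ℂ)) ⋆[ContinuousLinearMap.mul ℂ ℂ] fun t => (f t : ℂ)

lemma continuous_and_hasCompactSupport_bumpConv :
    Continuous (bumpConv f) ∧ HasCompactSupport (bumpConv f) := by
  have hsupp : HasCompactSupport fun t => (f t : ℂ) :=
    f.hasCompactSupport.comp_left (g := ((↑) : ℝ → ℂ)) Complex.ofReal_zero
  have hcont : Continuous fun t => (f t : ℂ) := Complex.continuous_ofReal.comp f.continuous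
  exact ⟨hsupp.continuous_convolution_right _
    (hcont.integrable_of_hasCompactSupport hsupp).locallyIntegrable hcont,
    hsupp.convolution _ hsupp⟩

lemma bumpConv_eq_zero {t : ℝ} (ht : 2 * f.rOut < |t|) : bumpConv f t = 0 := by
  refine integral_eq_zero_of_ae (Eventually.of_forall fun s => ?_)
  simp only [ContinuousLinearMap.mul_apply', Pi.zero_apply, mul_eq_zero, Complex.ofReal_eq_zero]
  have htri : |t| ≤ |t - s| + |s| := by simpa using abs_add_le (t - s) s
  rcases le_total f.rOut |s| with hs | hs
  · exact Or.inl (f.zero_of_le_dist (by simpa [Real.dist_eq] using hs))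
  · refine Or.inr (f.zero_of_le_dist ?_)
    rw [Real.dist_eq, sub_zero]
    linarith

lemma norm_bumpFourier_sq_eq_integral (y : ℝ) :
    ((‖bumpFourier f (-y / (2 * Real.pi))‖ ^ 2 : ℝ) : ℂ) =
      ∫ t : ℝ, Complex.exp (t * y * Complex.I) * bumpConv f t := by
  have hint : Integrable fun t => (f t : ℂ) := f.integrable.ofReal
  rw [Complex.ofReal_pow, ← Complex.conj_mul', conj_bumpFourier]
  refine (Real.fourier_mul_convolution_eq hint hint _).symm.trans ?_
  rw [Real.fourier_real_eq_integral_exp_smul]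
  congr with t
  rw [smul_eq_mul]
  congr 2
  push_cast
  have : (Real.pi : ℂ) ≠ 0 := Complex.ofReal_ne_zero.2 Real.pi_ne_zero
  field_simp

lemma integrable_pow_mul_norm_bumpFourier_sq (k : ℕ) :
    Integrable fun y : ℝ => |y| ^ k * ‖bumpFourier f (-y / (2 * Real.pi))‖ ^ 2 := by
  have hπ : (2 * Real.pi) ^ k ≠ 0 := by positivity
  refine (((integrable_pow_mul_norm_sq (bumpFourier f) k).comp_div (R := -(2 * Real.pi))
    (by simp [Real.pi_ne_zero])).const_mul ((2 * Real.pi) ^ k)).congr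
    (Eventually.of_forall fun y => ?_)
  simp only [abs_div, abs_neg, abs_of_pos Real.two_pi_pos, div_neg, neg_div, div_pow]
  field_simp

lemma exists_isBandLimitedKernel {c : ℝ} (hc : 0 < c) :
    ∃ (w : ℝ → ℝ) (ψ : ℝ → ℂ) (B : ℝ), IsBandLimitedKernel c w ψ B := by
  let f : ContDiffBump (0 : ℝ) := ⟨c / 4, c / 2, by positivity, by linarith⟩
  set w : ℝ → ℝ := fun y => ‖bumpFourier f (-y / (2 * Real.pi))‖ ^ 2 with hw
  have hwcont : Continuous w := by
    have := (bumpFourier f).continuous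
    fun_prop
  have hA : 0 < ∫ y, w y := integral_pos_of_integrable_nonneg_nonzero (x := 0) hwcont
    (by simpa using integrable_pow_mul_norm_bumpFourier_sq f 0) (fun y => by positivity)
    (by simpa [hw] using bumpFourier_zero_ne_zero f)
  set A := ∫ y, w y
  obtain ⟨hψ, hψsupp⟩ := continuous_and_hasCompactSupport_bumpConv f
  obtain ⟨B, hB⟩ := hψ.bounded_above_of_compact_support hψsupp
  refine ⟨fun y => A⁻¹ * w y, fun t => (A⁻¹ : ℝ) • bumpConv f t, A⁻¹ * B,
    fun y => by positivity, by fun_prop, ?_, fun k => ?_, ?_, fun t => ?_, fun t ht => ?_,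
    fun y => ?_⟩
  · rw [integral_const_mul, inv_mul_cancel₀ hA.ne']
  · simpa only [mul_left_comm] using
      (integrable_pow_mul_norm_bumpFourier_sq f k).const_mul A⁻¹
  · exact (hψ.integrable_of_hasCompactSupport hψsupp).smul A⁻¹
  · rw [norm_smul, Real.norm_of_nonneg (by positivity)]
    gcongr
    exact hB t
  · rw [bumpConv_eq_zero f (by change 2 * (c / 2) < _; linarith), smul_zero]
  · rw [Complex.ofReal_mul, hw, norm_bumpFourier_sq_eq_integral, ← integral_const_mul]
    simp only [Complex.real_smul, mul_left_comm]

end BandLimitedKernel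

section Smoothing

lemma norm_cexp_mul_mul_I (t s : ℝ) : ‖Complex.exp (t * s * Complex.I)‖ = 1 := by
  rw [← Complex.ofReal_mul, Complex.norm_exp_ofReal_mul_I]

/-- The measure with Lebesgue density `w`, the law of the smoothing noise when `w` is a
band-limited kernel. -/
def densityMeasure (w : ℝ → ℝ) : Measure ℝ := volume.withDensity fun y => ENNReal.ofReal (w y)

namespace IsBandLimitedKernel

variable {c B : ℝ} {w : ℝ → ℝ} {ψ : ℝ → ℂ} (hk : IsBandLimitedKernel c w ψ B)

include hk

lemma integrable : Integrable w := by simpa using hk.integrable_pow_mul 0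

lemma le_integral_norm_amplitude (y : ℝ) : w y ≤ ∫ t, ‖ψ t‖ := by
  rw [← Complex.norm_of_nonneg (hk.nonneg y), hk.eq_integral]
  refine (norm_integral_le_integral_norm _).trans_eq ?_
  simp only [norm_mul, norm_cexp_mul_mul_I, one_mul]

lemma integrable_pow_mul_rescale {σ : ℝ} (hσ : 0 < σ) (k : ℕ) :
    Integrable (fun y => |y| ^ k * (σ * w (σ * y))) ∧
      ∫ y, |y| ^ k * (σ * w (σ * y)) = (∫ y, |y| ^ k * w y) / σ ^ k := by
  have hscale (y : ℝ) : |y| ^ k * (σ * w (σ * y)) = σ / σ ^ k * (|σ * y| ^ k * w (σ * y)) := by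
    rw [abs_mul, abs_of_pos hσ, mul_pow]
    field_simp
  simp only [hscale]
  refine ⟨((hk.integrable_pow_mul k).comp_mul_left' hσ.ne').const_mul _, ?_⟩
  rw [integral_const_mul, Measure.integral_comp_mul_left (fun y => |y| ^ k * w y) σ,
    abs_of_pos (by positivity), smul_eq_mul]
  field_simp

lemma rescale {σ : ℝ} (hσ : 0 < σ) :
    IsBandLimitedKernel (c * σ) (fun y => σ * w (σ * y)) (fun u => ψ (u / σ)) B where
  nonneg y := mul_nonneg hσ.le (hk.nonneg _)
  continuous := by
    have := hk.continuous
    fun_prop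
  integral_eq_one := by simpa [hk.integral_eq_one] using (hk.integrable_pow_mul_rescale hσ 0).2
  integrable_pow_mul k := (hk.integrable_pow_mul_rescale hσ k).1
  integrable_amplitude := hk.integrable_amplitude.comp_div hσ.ne'
  norm_amplitude_le t := hk.norm_amplitude_le _
  amplitude_eq_zero t ht := hk.amplitude_eq_zero _ <| by
    rwa [abs_div, abs_of_pos hσ, lt_div_iff₀ hσ]
  eq_integral y := by
    have hsubst := Measure.integral_comp_div
      (fun t : ℝ => Complex.exp (t * (σ * y : ℝ) * Complex.I) * ψ t) σ
    rw [abs_of_pos hσ, Complex.real_smul, ← hk.eq_integral, ← Complex.ofReal_mul] at hsubst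
    rw [← hsubst]
    congr with u
    have : (σ : ℂ) ≠ 0 := Complex.ofReal_ne_zero.2 hσ.ne'
    push_cast
    congr 2
    field_simp

lemma isProbabilityMeasure_densityMeasure : IsProbabilityMeasure (densityMeasure w) := by
  constructor
  rw [densityMeasure, withDensity_apply _ MeasurableSet.univ, Measure.restrict_univ,
    ← ofReal_integral_eq_lintegral_ofReal hk.integrable (Eventually.of_forall hk.nonneg),
    hk.integral_eq_one, ENNReal.ofReal_one]

section DensityMeasure

variable {E : Type*} [NormedAddCommGroup E] [NormedSpace ℝ E] (f : ℝ → E)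

lemma integral_densityMeasure : ∫ h, f h ∂densityMeasure w = ∫ h, w h • f h := by
  rw [densityMeasure, integral_withDensity_eq_integral_toReal_smul
    (by have := hk.continuous; fun_prop) (Eventually.of_forall fun _ => ENNReal.ofReal_lt_top)]
  simp only [ENNReal.toReal_ofReal (hk.nonneg _)]

lemma integrable_densityMeasure_iff :
    Integrable f (densityMeasure w) ↔ Integrable fun h => w h • f h := by
  rw [densityMeasure, integrable_withDensity_iff_integrable_smul'
    (by have := hk.continuous; fun_prop) (Eventually.of_forall fun _ => ENNReal.ofReal_lt_top)]
  simp only [ENNReal.toReal_ofReal (hk.nonneg _)]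

end DensityMeasure

section Fourier

variable {ν : Measure ℝ} {q : ℝ → ℂ}

lemma integrable_prod_fourier (hq : Integrable q ν) (y : ℝ) :
    Integrable (fun p : ℝ × ℝ => q p.1 * ψ p.2 * Complex.exp (p.2 * (y - p.1 : ℝ) * Complex.I))
      (ν.prod volume) :=
  (hq.mul_prod hk.integrable_amplitude).mul_bdd (c := 1) (by fun_prop)
    (Eventually.of_forall fun _ => (norm_cexp_mul_mul_I _ _).le)

omit hk in
lemma integral_prod_fourier_left (y u : ℝ) :
    ∫ s, q s * ψ u * Complex.exp (u * (y - s : ℝ) * Complex.I) ∂ν =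
      Complex.exp (u * y * Complex.I) * ψ u *
        ∫ s, q s * Complex.exp ((-u : ℝ) * s * Complex.I) ∂ν := by
  rw [← integral_const_mul]
  congr with s
  rw [show (u * (y - s : ℝ) * Complex.I : ℂ) = u * y * Complex.I + (-u : ℝ) * s * Complex.I by
    push_cast; ring, Complex.exp_add]
  ring

lemma integrable_amplitude_mul_fourier [SFinite ν] (hq : Integrable q ν) (y : ℝ) :
    Integrable fun u : ℝ => Complex.exp (u * y * Complex.I) * ψ u *
      ∫ s, q s * Complex.exp ((-u : ℝ) * s * Complex.I) ∂ν := by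
  simpa only [integral_prod_fourier_left] using
    (hk.integrable_prod_fourier hq y).integral_prod_right

lemma integral_mul_translate_eq [SFinite ν] (hq : Integrable q ν) (y : ℝ) :
    ∫ s, q s * (w (y - s) : ℂ) ∂ν = ∫ u : ℝ, Complex.exp (u * y * Complex.I) * ψ u *
      ∫ s, q s * Complex.exp ((-u : ℝ) * s * Complex.I) ∂ν := by
  simp only [← integral_prod_fourier_left]
  rw [← integral_integral_swap (hk.integrable_prod_fourier hq y)]
  congr with s
  rw [hk.eq_integral, ← integral_const_mul]
  congr with u
  ring

end Fourier

variable {P : Measure ℝ} {q : ℝ → ℂ} {g : ℝ → ℝ}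

lemma norm_integral_translate_sub_le [IsFiniteMeasure P] (hq : Integrable q) (hg : Integrable g)
    (hg0 : ∀ u, 0 ≤ g u)
    (hPq : ∀ u, |u| ≤ c → ‖charFun P u - ∫ s, q s * Complex.exp (u * s * Complex.I)‖ ≤ g u)
    (y : ℝ) :
    ‖((∫ s, w (y - s) ∂P : ℝ) : ℂ) - ∫ s, q s * (w (y - s) : ℂ)‖ ≤ B * ∫ u, g u := by
  have hB : 0 ≤ B := (norm_nonneg _).trans (hk.norm_amplitude_le 0)
  have hP : Integrable (fun _ : ℝ => (1 : ℂ)) P := integrable_const 1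
  have hPsmooth := hk.integral_mul_translate_eq hP y
  have hPint := hk.integrable_amplitude_mul_fourier hP y
  simp only [one_mul, ← charFun_apply_real] at hPsmooth hPint
  rw [← integral_complex_ofReal, hPsmooth, hk.integral_mul_translate_eq hq y,
    ← integral_sub hPint (hk.integrable_amplitude_mul_fourier hq y),
    ← integral_neg_eq_self g, ← integral_const_mul]
  refine norm_integral_le_of_norm_le (hg.comp_neg.const_mul B) (Eventually.of_forall fun u => ?_)
  rw [← mul_sub, norm_mul, norm_mul, norm_cexp_mul_mul_I, one_mul]
  by_cases hu : |u| ≤ c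
  · exact mul_le_mul (hk.norm_amplitude_le u) (hPq _ (by rwa [abs_neg])) (norm_nonneg _) hB
  · rw [hk.amplitude_eq_zero u (not_le.1 hu), norm_zero, zero_mul]
    exact mul_nonneg hB (hg0 _)

lemma integrable_prod_translate [IsFiniteMeasure P] (a x : ℝ) :
    Integrable (fun p : ℝ × ℝ => w (p.2 - p.1)) (P.prod (volume.restrict (Set.Ioc a x))) := by
  refine Integrable.of_bound (C := ∫ t, ‖ψ t‖) (by have := hk.continuous; fun_prop)
    (Eventually.of_forall fun p => ?_)
  rw [Real.norm_of_nonneg (hk.nonneg _)]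
  exact hk.le_integral_norm_amplitude _

lemma densityMeasure_preimage_add_Ioc {a x : ℝ} (hax : a ≤ x) (s : ℝ) :
    densityMeasure w ((s + ·) ⁻¹' Set.Ioc a x) = ENNReal.ofReal (∫ y in a..x, w (y - s)) := by
  have hset : (s + ·) ⁻¹' Set.Ioc a x = Set.Ioc (a - s) (x - s) := by
    ext h
    simp [sub_lt_iff_lt_add', le_sub_iff_add_le']
  rw [hset, densityMeasure, withDensity_apply _ measurableSet_Ioc,
    ← ofReal_integral_eq_lintegral_ofReal hk.integrable.integrableOn
      (Eventually.of_forall hk.nonneg), ← intervalIntegral.integral_of_le (by linarith),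
    intervalIntegral.integral_comp_sub_right]

lemma cdf_conv_densityMeasure_sub [IsProbabilityMeasure P] {a x : ℝ} (hax : a ≤ x) :
    cdf (P.conv (densityMeasure w)) x - cdf (P.conv (densityMeasure w)) a =
      ∫ y in a..x, ∫ s, w (y - s) ∂P := by
  have := hk.isProbabilityMeasure_densityMeasure
  have hint := hk.integrable_prod_translate (P := P) a x
  have hconv : (P.conv (densityMeasure w)) (Set.Ioc a x) =
      ∫⁻ s, ENNReal.ofReal (∫ y in a..x, w (y - s)) ∂P := by
    rw [Measure.conv, Measure.map_apply (by fun_prop) measurableSet_Ioc,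
      Measure.prod_apply (measurable_add measurableSet_Ioc)]
    exact lintegral_congr fun s => hk.densityMeasure_preimage_add_Ioc hax s
  rw [cdf_eq_real, cdf_eq_real, ← measureReal_sdiff (Set.Iic_subset_Iic.2 hax) measurableSet_Iic,
    Set.Iic_sdiff_Iic, measureReal_def, hconv, ← integral_eq_lintegral_of_nonneg_ae
      (Eventually.of_forall fun s => intervalIntegral.integral_nonneg hax fun y _ => hk.nonneg _)]
  all_goals simp only [intervalIntegral.integral_of_le hax]
  · exact integral_integral_swap hint
  · exact hint.integral_prod_left.aestronglyMeasurable

lemma integrable_prod_mul_translate (hq : Integrable q) (a x : ℝ) :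
    Integrable (fun p : ℝ × ℝ => q p.1 * (w (p.2 - p.1) : ℂ))
      (volume.prod (volume.restrict (Set.Ioc a x))) := by
  refine (hq.comp_fst _).mul_bdd (c := ∫ t, ‖ψ t‖)
    (by have := hk.continuous; fun_prop) (Eventually.of_forall fun p => ?_)
  rw [Complex.norm_real, Real.norm_of_nonneg (hk.nonneg _)]
  exact hk.le_integral_norm_amplitude _

lemma integral_densityMeasure_sub_comp_sub {Q : ℝ → ℂ} (hQ : ∀ s, HasDerivAt Q (q s) s)
    (hq : Integrable q) {a x : ℝ} (hax : a ≤ x) :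
    ∫ h, (Q (x - h) - Q (a - h)) ∂densityMeasure w =
      ∫ y in a..x, ∫ s, q s * (w (y - s) : ℂ) := by
  have hconv : Integrable (fun p : ℝ × ℝ => (w p.1 : ℂ) * q (p.2 - p.1))
      (volume.prod (volume.restrict (Set.Ioc a x))) := by
    have := (hk.integrable.ofReal (𝕜 := ℂ)).convolution_integrand (ContinuousLinearMap.mul ℂ ℂ) hq
      |>.swap.integrableOn (s := Set.univ ×ˢ Set.Ioc a x)
    rwa [IntegrableOn, ← Measure.prod_restrict, Measure.restrict_univ] at this
  have hFTC (h : ℝ) : ∫ y in a..x, q (y - h) = Q (x - h) - Q (a - h) :=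
    intervalIntegral.integral_eq_sub_of_hasDerivAt (fun y _ => (hQ (y - h)).comp_sub_const y h)
      (hq.comp_sub_right h).intervalIntegrable
  simp only [hk.integral_densityMeasure, Complex.real_smul, ← hFTC, ← integral_const_mul,
    intervalIntegral.integral_of_le hax]
  rw [integral_integral_swap hconv]
  congr with y
  rw [← integral_sub_left_eq_self _ volume y]
  simp only [sub_sub_cancel, mul_comm]

lemma norm_cdf_conv_sub_le [IsProbabilityMeasure P] {Q : ℝ → ℂ}
    (hQ : ∀ s, HasDerivAt Q (q s) s) (hq : Integrable q) (hg : Integrable g) (hg0 : ∀ u, 0 ≤ g u)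
    (hPq : ∀ u, |u| ≤ c → ‖charFun P u - ∫ s, q s * Complex.exp (u * s * Complex.I)‖ ≤ g u)
    {a x : ℝ} (hax : a ≤ x) :
    ‖((cdf (P.conv (densityMeasure w)) x - cdf (P.conv (densityMeasure w)) a : ℝ) : ℂ) -
      ∫ h, (Q (x - h) - Q (a - h)) ∂densityMeasure w‖ ≤ (B * ∫ u, g u) * (x - a) := by
  rw [hk.cdf_conv_densityMeasure_sub hax, hk.integral_densityMeasure_sub_comp_sub hQ hq hax,
    ← intervalIntegral.integral_ofReal, ← intervalIntegral.integral_sub]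
  · refine (intervalIntegral.norm_integral_le_of_norm_le_const fun y _ =>
      hk.norm_integral_translate_sub_le hq hg hg0 hPq y).trans_eq ?_
    rw [abs_of_nonneg (sub_nonneg.2 hax)]
  all_goals rw [intervalIntegrable_iff_integrableOn_Ioc_of_le hax]
  · exact (hk.integrable_prod_translate a x).integral_prod_right.ofReal
  · exact (hk.integrable_prod_mul_translate hq a x).integral_prod_right

end IsBandLimitedKernel

end Smoothing

section Edgeworth

lemma one_add_abs_pow_le (k : ℕ) (s : ℝ) :
    (1 + |s|) ^ k ≤ k.factorial * Real.exp 2 * Real.exp (s ^ 2 / 4) := by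
  have hpow := Real.pow_div_factorial_le_exp (1 + |s|) (by positivity) k
  rw [div_le_iff₀ (by positivity), mul_comm] at hpow
  rw [mul_assoc, ← Real.exp_add]
  have hquad : 1 + |s| ≤ 2 + s ^ 2 / 4 := by nlinarith [sq_nonneg (|s| - 2), sq_abs s]
  exact hpow.trans (mul_le_mul_of_nonneg_left (Real.exp_le_exp.2 hquad) (by positivity))

lemma stdNormalPDF_le_exp (s : ℝ) : stdNormalPDF s ≤ Real.exp (-s ^ 2 / 2) := by
  rw [stdNormalPDF_eq]
  refine mul_le_of_le_one_left (Real.exp_pos _).le (inv_le_one_of_one_le₀ ?_)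
  rw [Real.one_le_sqrt]
  linarith [Real.pi_gt_three]

lemma one_add_abs_pow_mul_stdNormalPDF_le (k : ℕ) (s : ℝ) :
    (1 + |s|) ^ k * stdNormalPDF s ≤ k.factorial * Real.exp 2 * Real.exp (-s ^ 2 / 4) := by
  calc (1 + |s|) ^ k * stdNormalPDF s
      ≤ k.factorial * Real.exp 2 * Real.exp (s ^ 2 / 4) * Real.exp (-s ^ 2 / 2) := by
        gcongr
        · exact (stdNormalPDF_pos s).le
        · exact one_add_abs_pow_le k s
        · exact stdNormalPDF_le_exp s
    _ = k.factorial * Real.exp 2 * Real.exp (-s ^ 2 / 4) := by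
        rw [mul_assoc, ← Real.exp_add]
        ring_nf

lemma integrable_exp_neg_sq_div_four : Integrable fun s : ℝ => Real.exp (-s ^ 2 / 4) :=
  (integrable_exp_neg_mul_sq (b := 1 / 4) (by norm_num)).congr
    (Eventually.of_forall fun s => by ring_nf)

/-- The Hermite function `φ Heⱼ`, with `φ` the standard normal density and `Heⱼ` the probabilists'
Hermite polynomial. -/
def hermiteFunction (j : ℕ) (s : ℝ) : ℝ :=
  stdNormalPDF s * Polynomial.aeval s (Polynomial.hermite j)

lemma hermiteFunction_zero (s : ℝ) : hermiteFunction 0 s = stdNormalPDF s := by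
  simp [hermiteFunction]

lemma hasDerivAt_hermiteFunction (j : ℕ) (s : ℝ) :
    HasDerivAt (hermiteFunction j) (-hermiteFunction (j + 1) s) s := by
  refine ((hasDerivAt_stdNormalPDF s).mul
    ((Polynomial.hermite j).hasDerivAt_aeval s)).congr_deriv ?_
  simp only [hermiteFunction, Polynomial.hermite_succ, map_sub, map_mul, Polynomial.aeval_X]
  ring

@[fun_prop]
lemma continuous_hermiteFunction (j : ℕ) : Continuous (hermiteFunction j) :=
  continuous_iff_continuousAt.2 fun s => (hasDerivAt_hermiteFunction j s).continuousAt

lemma abs_aeval_le (P : Polynomial ℤ) (s : ℝ) :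
    |Polynomial.aeval s P| ≤
      (∑ i ∈ Finset.range (P.natDegree + 1), |(P.coeff i : ℝ)|) * (1 + |s|) ^ P.natDegree := by
  rw [Polynomial.aeval_eq_sum_range, Finset.sum_mul]
  refine (Finset.abs_sum_le_sum_abs _ _).trans (Finset.sum_le_sum fun i hi => ?_)
  rw [zsmul_eq_mul, abs_mul, abs_pow]
  gcongr ?_ * ?_
  calc |s| ^ i ≤ (1 + |s|) ^ i := by gcongr; linarith
    _ ≤ (1 + |s|) ^ P.natDegree :=
      pow_le_pow_right₀ (by linarith [abs_nonneg s]) (Nat.lt_succ_iff.1 (Finset.mem_range.1 hi))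

lemma exists_abs_hermiteFunction_le (j : ℕ) :
    ∃ C, 0 ≤ C ∧ ∀ s, |hermiteFunction j s| ≤ C * ((1 + |s|) ^ j * stdNormalPDF s) := by
  refine ⟨∑ i ∈ Finset.range (j + 1), |((Polynomial.hermite j).coeff i : ℝ)|, by positivity,
    fun s => ?_⟩
  have hpoly := abs_aeval_le (Polynomial.hermite j) s
  rw [Polynomial.natDegree_hermite] at hpoly
  rw [hermiteFunction, abs_mul, abs_of_pos (stdNormalPDF_pos s), mul_comm, ← mul_assoc]
  exact mul_le_mul_of_nonneg_right hpoly (stdNormalPDF_pos s).le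

lemma integrable_hermiteFunction (j : ℕ) : Integrable (hermiteFunction j) := by
  obtain ⟨C, hC, hle⟩ := exists_abs_hermiteFunction_le j
  refine (integrable_exp_neg_sq_div_four.const_mul (C * (j.factorial * Real.exp 2))).mono'
    (by fun_prop) (Eventually.of_forall fun s => (hle s).trans ?_)
  rw [mul_assoc]
  exact mul_le_mul_of_nonneg_left (one_add_abs_pow_mul_stdNormalPDF_le j s) hC

lemma integrable_hermiteFunction_mul_cexp (j : ℕ) (u : ℝ) :
    Integrable fun s : ℝ => (hermiteFunction j s : ℂ) * Complex.exp (u * s * Complex.I) :=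
  (integrable_hermiteFunction j).ofReal.mul_bdd (c := 1) (by fun_prop)
    (Eventually.of_forall fun s => (norm_cexp_mul_mul_I u s).le)

lemma integral_hermiteFunction_mul_cexp (j : ℕ) (u : ℝ) :
    ∫ s : ℝ, (hermiteFunction j s : ℂ) * Complex.exp (u * s * Complex.I) =
      (u * Complex.I) ^ j * Complex.exp (-(u : ℂ) ^ 2 / 2) := by
  induction j with
  | zero =>
    have hgauss := charFun_gaussianReal (μ := 0) (v := 1) u
    rw [charFun_apply_real, integral_gaussianReal_eq_integral_smul one_ne_zero] at hgauss
    simpa [hermiteFunction_zero, stdNormalPDF, neg_div] using hgauss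
  | succ j ih =>
    have hderiv (s : ℝ) : HasDerivAt
        (fun s : ℝ => (hermiteFunction j s : ℂ) * Complex.exp (u * s * Complex.I))
        (u * Complex.I * ((hermiteFunction j s : ℂ) * Complex.exp (u * s * Complex.I)) -
          (hermiteFunction (j + 1) s : ℂ) * Complex.exp (u * s * Complex.I)) s := by
      have hexp : HasDerivAt (fun s : ℝ => Complex.exp (u * s * Complex.I))
          (Complex.exp (u * s * Complex.I) * (u * Complex.I)) s :=
        ((((hasDerivAt_id s).ofReal_comp.const_mul (u : ℂ)).mul_const Complex.I).congr_deriv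
          (by simp)).cexp
      refine ((hasDerivAt_hermiteFunction j s).ofReal_comp.mul hexp).congr_deriv ?_
      push_cast
      ring
    have hint := integrable_hermiteFunction_mul_cexp j u
    have hint' := integrable_hermiteFunction_mul_cexp (j + 1) u
    have hzero := integral_eq_zero_of_hasDerivAt_of_integrable hderiv
      ((hint.const_mul _).sub hint') hint
    rw [integral_sub (hint.const_mul _) hint', integral_const_mul, ih, sub_eq_zero] at hzero
    rw [← hzero]
    ring

/-- The formal Edgeworth density `φ + ∑_{j < N} bⱼ φ Heⱼ₊₃`. -/
def edgeworthPDF (N : ℕ) (b : ℕ → ℂ) (s : ℝ) : ℂ :=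
  stdNormalPDF s + ∑ j ∈ Finset.range N, b j * hermiteFunction (j + 3) s

/-- The formal Edgeworth distribution function `Φ - ∑_{j < N} bⱼ φ Heⱼ₊₂`, the primitive of
`edgeworthPDF` vanishing at `-∞`. -/
def edgeworthCDF (N : ℕ) (b : ℕ → ℂ) (s : ℝ) : ℂ :=
  stdNormalCDF s - ∑ j ∈ Finset.range N, b j * hermiteFunction (j + 2) s

lemma hasDerivAt_edgeworthCDF (N : ℕ) (b : ℕ → ℂ) (s : ℝ) :
    HasDerivAt (edgeworthCDF N b) (edgeworthPDF N b s) s := by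
  refine ((hasDerivAt_stdNormalCDF s).ofReal_comp.sub (HasDerivAt.fun_sum fun j _ =>
    (hasDerivAt_hermiteFunction (j + 2) s).ofReal_comp.const_mul (b j))).congr_deriv ?_
  simp only [edgeworthPDF, Complex.ofReal_neg, mul_neg, Finset.sum_neg_distrib, sub_neg_eq_add]

lemma integrable_edgeworthPDF (N : ℕ) (b : ℕ → ℂ) : Integrable (edgeworthPDF N b) :=
  integrable_stdNormalPDF.ofReal.add (integrable_finsetSum _ fun j _ =>
    (integrable_hermiteFunction (j + 3)).ofReal.const_mul (b j))

lemma integral_edgeworthPDF_mul_cexp (N : ℕ) (b : ℕ → ℂ) (u : ℝ) :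
    ∫ s : ℝ, edgeworthPDF N b s * Complex.exp (u * s * Complex.I) =
      Complex.exp (-(u : ℂ) ^ 2 / 2) *
        (1 + ∑ j ∈ Finset.range N, b j * (u * Complex.I) ^ (j + 3)) := by
  have hterm (j : ℕ) := (integrable_hermiteFunction_mul_cexp (j + 3) u).const_mul (b j)
  simp only [edgeworthPDF, add_mul, Finset.sum_mul, mul_assoc (b _), ← hermiteFunction_zero]
  rw [integral_add (integrable_hermiteFunction_mul_cexp 0 u)
    (integrable_finsetSum _ fun j _ => hterm j), integral_finsetSum _ fun j _ => hterm j]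
  simp only [integral_const_mul, integral_hermiteFunction_mul_cexp]
  rw [mul_add, Finset.mul_sum, pow_zero, one_mul, mul_one]
  congr 1
  exact Finset.sum_congr rfl fun j _ => by ring

lemma exists_norm_edgeworthCDF_sub_le (N : ℕ) :
    ∃ C, 0 ≤ C ∧ ∀ ε (b : ℕ → ℂ), (∀ j < N, ‖b j‖ ≤ ε) → ∀ s,
      ‖edgeworthCDF N b s - stdNormalCDF s‖ ≤ ε * C * ((1 + |s|) ^ (N + 2) * stdNormalPDF s) := by
  choose C hC hle using exists_abs_hermiteFunction_le
  refine ⟨∑ j ∈ Finset.range N, C (j + 2), Finset.sum_nonneg fun j _ => hC _,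
    fun ε b hb s => ?_⟩
  have hpdf := stdNormalPDF_pos s
  rw [edgeworthCDF, sub_sub_cancel_left, norm_neg, Finset.mul_sum, Finset.sum_mul]
  refine (norm_sum_le _ _).trans (Finset.sum_le_sum fun j hj => ?_)
  have hjN := Finset.mem_range.1 hj
  rw [norm_mul, Complex.norm_real, Real.norm_eq_abs, mul_assoc]
  refine mul_le_mul (hb j hjN) ((hle (j + 2) s).trans ?_) (abs_nonneg _)
    ((norm_nonneg _).trans (hb j hjN))
  gcongr
  · exact hC _
  · linarith [abs_nonneg s]

end Edgeworth

section Moments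

/-- The measure `ν` has finite absolute moments of every order `k`, bounded by `a k`. -/
structure HasMomentsLE (ν : Measure ℝ) (a : ℕ → ℝ) : Prop where
  integrable : ∀ k, Integrable (fun h => |h| ^ k) ν
  integral_le : ∀ k, ∫ h, |h| ^ k ∂ν ≤ a k

namespace HasMomentsLE

variable {μ ν : Measure ℝ} [IsProbabilityMeasure μ] [IsProbabilityMeasure ν] {a b : ℕ → ℝ}

omit [IsProbabilityMeasure ν] in
lemma mono (hν : HasMomentsLE ν a) (hab : ∀ k, a k ≤ b k) : HasMomentsLE ν b where
  integrable := hν.integrable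
  integral_le k := (hν.integral_le k).trans (hab k)

omit [IsProbabilityMeasure ν] in
lemma nonneg (hν : HasMomentsLE ν a) (k : ℕ) : 0 ≤ a k :=
  (integral_nonneg fun h => by positivity).trans (hν.integral_le k)

lemma conv (hμ : HasMomentsLE μ a) (hν : HasMomentsLE ν b) :
    HasMomentsLE (μ.conv ν) fun k => 2 ^ (k - 1) * (a k + b k) := by
  have hle (k : ℕ) (z : ℝ × ℝ) : |z.1 + z.2| ^ k ≤ 2 ^ (k - 1) * (|z.1| ^ k + |z.2| ^ k) :=
    (pow_le_pow_left₀ (abs_nonneg _) (abs_add_le _ _) k).trans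
      (add_pow_le (abs_nonneg _) (abs_nonneg _) k)
  have hdom (k : ℕ) : Integrable (fun z : ℝ × ℝ => 2 ^ (k - 1) * (|z.1| ^ k + |z.2| ^ k))
      (μ.prod ν) :=
    (((hμ.integrable k).comp_fst _).add ((hν.integrable k).comp_snd _)).const_mul _
  have hint (k : ℕ) : Integrable (fun z : ℝ × ℝ => |z.1 + z.2| ^ k) (μ.prod ν) :=
    (hdom k).mono' (by fun_prop) (Eventually.of_forall fun z => by
      rw [Real.norm_of_nonneg (by positivity)]
      exact hle k z)
  refine ⟨fun k => (integrable_map_measure (by fun_prop) (by fun_prop)).2 (hint k), fun k => ?_⟩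
  rw [Measure.conv, integral_map (by fun_prop) (by fun_prop)]
  refine (integral_mono (hint k) (hdom k) (hle k)).trans ?_
  rw [integral_const_mul, integral_add ((hμ.integrable k).comp_fst _)
    ((hν.integrable k).comp_snd _), integral_fun_fst (fun x => |x| ^ k),
    integral_fun_snd (fun x => |x| ^ k)]
  simp only [probReal_univ, one_smul]
  gcongr
  · exact hμ.integral_le k
  · exact hν.integral_le k

lemma integrable_one_add_abs_pow (hν : HasMomentsLE ν a) (m : ℕ) :
    Integrable (fun h => (1 + |h|) ^ m) ν :=
  (((integrable_const 1).add (hν.integrable m)).const_mul (2 ^ (m - 1))).mono' (by fun_prop)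
    (Eventually.of_forall fun h => by
      rw [Real.norm_of_nonneg (by positivity)]
      simpa using add_pow_le zero_le_one (abs_nonneg h) m)

lemma integral_one_add_abs_pow_le (hν : HasMomentsLE ν a) (m : ℕ) :
    ∫ h, (1 + |h|) ^ m ∂ν ≤ 2 ^ (m - 1) * (1 + a m) := by
  calc ∫ h, (1 + |h|) ^ m ∂ν ≤ ∫ h, 2 ^ (m - 1) * (1 + |h| ^ m) ∂ν :=
        integral_mono (hν.integrable_one_add_abs_pow m)
          (((integrable_const 1).add (hν.integrable m)).const_mul _)
          fun h => by simpa using add_pow_le zero_le_one (abs_nonneg h) m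
    _ = 2 ^ (m - 1) * (1 + ∫ h, |h| ^ m ∂ν) := by
        rw [integral_const_mul, integral_add (integrable_const 1) (hν.integrable m)]
        simp
    _ ≤ 2 ^ (m - 1) * (1 + a m) := by
        gcongr
        exact hν.integral_le m

lemma cdf_neg_le (hν : HasMomentsLE ν a) {σ : ℝ} (hσ : 0 < σ) (m : ℕ) :
    cdf ν (-σ) ≤ a m / σ ^ m := by
  rw [le_div_iff₀ (by positivity), mul_comm, cdf_eq_real]
  refine le_trans (mul_le_mul_of_nonneg_left (measureReal_mono fun t (ht : t ≤ -σ) => ?_)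
    (by positivity)) ((mul_meas_ge_le_integral_of_nonneg
      (Eventually.of_forall fun t => by positivity) (hν.integrable m) (σ ^ m)).trans
      (hν.integral_le m))
  exact pow_le_pow_left₀ hσ.le (le_abs.2 (Or.inr (by linarith))) m

end HasMomentsLE

lemma IsBandLimitedKernel.hasMomentsLE_densityMeasure {c B : ℝ} {w : ℝ → ℝ} {ψ : ℝ → ℂ}
    (hk : IsBandLimitedKernel c w ψ B) {σ : ℝ} (hσ : 0 < σ) :
    HasMomentsLE (densityMeasure fun y => σ * w (σ * y))
      fun k => (∫ y, |y| ^ k * w y) / σ ^ k := by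
  refine ⟨fun k => ((hk.rescale hσ).integrable_densityMeasure_iff _).2 ?_, fun k => ?_⟩
  · simpa only [smul_eq_mul, mul_comm] using (hk.integrable_pow_mul_rescale hσ k).1
  · rw [(hk.rescale hσ).integral_densityMeasure, ← (hk.integrable_pow_mul_rescale hσ k).2]
    simp only [smul_eq_mul, mul_comm, le_refl]

end Moments

section CDFApproximation

lemma stdNormalCDF_nonneg (s : ℝ) : 0 ≤ stdNormalCDF s := ENNReal.toReal_nonneg

lemma stdNormalCDF_le_one (s : ℝ) : stdNormalCDF s ≤ 1 := by
  rw [← cdf_gaussianReal_eq_stdNormalCDF]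
  exact cdf_le_one _ _

lemma stdNormalCDF_le_exp (s : ℝ) : stdNormalCDF s ≤ Real.exp (s + 1 / 2) := by
  have hchernoff := measure_le_le_exp_mul_mgf (μ := gaussianReal 0 1) (X := id) s
    (t := -1) (by norm_num) (by simpa using integrable_exp_mul_gaussianReal (-1))
  rw [mgf_id_gaussianReal, ← Real.exp_add] at hchernoff
  refine hchernoff.trans_eq ?_
  norm_num

lemma stdNormalPDF_sub_le {x h : ℝ} (hxh : |x| * |h| ≤ 1) :
    stdNormalPDF (x - h) ≤ Real.exp 1 * stdNormalPDF x := by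
  have hle : x * h ≤ 1 := (le_abs_self _).trans (by rwa [abs_mul])
  rw [stdNormalPDF_eq, stdNormalPDF_eq, mul_left_comm, ← Real.exp_add]
  gcongr
  nlinarith [sq_nonneg h]

lemma abs_stdNormalCDF_sub_sub_le {x h : ℝ} (hxh : |x| * |h| ≤ 1) :
    |stdNormalCDF (x - h) - stdNormalCDF x| ≤ Real.exp 1 * stdNormalPDF x * |h| := by
  rw [stdNormalCDF_sub, ← Real.norm_eq_abs]
  refine (intervalIntegral.norm_integral_le_of_norm_le_const fun t ht => ?_).trans_eq
    (by rw [sub_sub_cancel_left, abs_neg])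
  have hle : |x - t| ≤ |h| := by
    simpa [abs_sub_comm] using Set.abs_sub_left_of_mem_uIcc (Set.uIoc_subset_uIcc ht)
  rw [Real.norm_of_nonneg (stdNormalPDF_pos t).le]
  simpa using stdNormalPDF_sub_le ((mul_le_mul_of_nonneg_left hle (abs_nonneg x)).trans hxh)

lemma one_add_negPart_pow_mul_stdNormalCDF_le (m : ℕ) (s : ℝ) :
    (1 + s⁻) ^ m * stdNormalCDF s ≤ m.factorial * Real.exp 2 := by
  have hpow := Real.pow_div_factorial_le_exp (1 + s⁻) (by positivity) m
  rw [div_le_iff₀ (by positivity), mul_comm] at hpow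
  have hcdf : stdNormalCDF s ≤ Real.exp (1 - s⁻) := by
    rcases le_total 0 s with hs | hs
    · rw [negPart_eq_zero.2 hs, sub_zero]
      exact (stdNormalCDF_le_one s).trans (Real.one_le_exp zero_le_one)
    · rw [negPart_eq_neg.2 hs]
      exact (stdNormalCDF_le_exp s).trans (Real.exp_le_exp.2 (by linarith))
  calc (1 + s⁻) ^ m * stdNormalCDF s ≤ m.factorial * Real.exp (1 + s⁻) * Real.exp (1 - s⁻) := by
        gcongr
        exact stdNormalCDF_nonneg s
    _ = m.factorial * Real.exp 2 := by
        rw [mul_assoc, ← Real.exp_add]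
        norm_num

/-- A function `Q` is close to the standard normal distribution function `Φ`, with a relative error
that is small even far out in the tails: `|Q - Φ| ≤ ε (1 + |s|)ᵏ φ`. -/
def IsNearStdNormalCDF (ε : ℝ) (k : ℕ) (Q : ℝ → ℂ) : Prop :=
  ∀ s, ‖Q s - stdNormalCDF s‖ ≤ ε * ((1 + |s|) ^ k * stdNormalPDF s)

namespace IsNearStdNormalCDF

variable {ε : ℝ} {k : ℕ} {Q : ℝ → ℂ} (hQ : IsNearStdNormalCDF ε k Q)

include hQ

lemma nonneg : 0 ≤ ε :=
  nonneg_of_mul_nonneg_left ((norm_nonneg _).trans (hQ 0))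
    (mul_pos (by positivity) (stdNormalPDF_pos 0))

lemma one_add_negPart_pow_mul_norm_le (m : ℕ) (s : ℝ) :
    (1 + s⁻) ^ m * ‖Q s‖ ≤ (m.factorial + ε * (m + k).factorial) * Real.exp 2 := by
  have hε := hQ.nonneg
  have hpdf := stdNormalPDF_pos s
  have hneg : s⁻ ≤ |s| := max_le (neg_le_abs s) (abs_nonneg s)
  have hnorm : ‖Q s‖ ≤ stdNormalCDF s + ε * ((1 + |s|) ^ k * stdNormalPDF s) := by
    have hsplit := norm_add_le (stdNormalCDF s : ℂ) (Q s - stdNormalCDF s)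
    rw [add_sub_cancel, Complex.norm_real, Real.norm_of_nonneg (stdNormalCDF_nonneg s)] at hsplit
    exact hsplit.trans (by gcongr; exact hQ s)
  have hexp : Real.exp (-s ^ 2 / 4) ≤ 1 := Real.exp_le_one_iff.2 (by nlinarith [sq_nonneg s])
  calc (1 + s⁻) ^ m * ‖Q s‖
      ≤ (1 + s⁻) ^ m * stdNormalCDF s +
          (1 + |s|) ^ m * (ε * ((1 + |s|) ^ k * stdNormalPDF s)) := by
        refine (mul_le_mul_of_nonneg_left hnorm (by positivity)).trans ?_
        rw [mul_add]
        gcongr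
    _ = (1 + s⁻) ^ m * stdNormalCDF s + ε * ((1 + |s|) ^ (m + k) * stdNormalPDF s) := by ring
    _ ≤ m.factorial * Real.exp 2 + ε * ((m + k).factorial * Real.exp 2) := by
        gcongr ?_ + ε * ?_
        · exact one_add_negPart_pow_mul_stdNormalCDF_le m s
        · exact (one_add_abs_pow_mul_stdNormalPDF_le _ s).trans
            (mul_le_of_le_one_right (by positivity) hexp)
    _ = (m.factorial + ε * (m + k).factorial) * Real.exp 2 := by ring

lemma norm_le (s : ℝ) : ‖Q s‖ ≤ (1 + ε * k.factorial) * Real.exp 2 := by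
  simpa using hQ.one_add_negPart_pow_mul_norm_le 0 s

variable {ν : Measure ℝ} [IsProbabilityMeasure ν] {M : ℕ → ℝ} {σ : ℝ}

lemma integrable_comp_sub (hQc : Continuous Q) (x : ℝ) : Integrable (fun h => Q (x - h)) ν :=
  Integrable.of_bound (by fun_prop) _ (Eventually.of_forall fun h => hQ.norm_le (x - h))

lemma norm_integral_comp_neg_sub_le (hν : HasMomentsLE ν M) (hσ : 0 < σ) (m : ℕ) :
    ‖∫ h, Q (-σ - h) ∂ν‖ ≤
      (m.factorial + ε * (m + k).factorial) * Real.exp 2 * (2 ^ (m - 1) * (1 + M m)) / σ ^ m := by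
  have hε := hQ.nonneg
  -- Peetre's inequality, which trades the decay of `Q` at `-σ - h` for moments of `h`.
  have hpeetre (h : ℝ) : σ ≤ (1 + (-σ - h)⁻) * (1 + |h|) := by
    have hneg : σ - |h| ≤ (-σ - h)⁻ := by
      linarith [neg_le_negPart (-σ - h), neg_abs_le h]
    rcases le_total σ |h| with hle | hle
    · nlinarith [negPart_nonneg (-σ - h), abs_nonneg h]
    · nlinarith [abs_nonneg h]
  have hpoint (h : ℝ) : ‖σ ^ m * Q (-σ - h)‖ ≤
      (m.factorial + ε * (m + k).factorial) * Real.exp 2 * (1 + |h|) ^ m := by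
    rw [norm_mul, norm_pow, Complex.norm_of_nonneg hσ.le]
    calc σ ^ m * ‖Q (-σ - h)‖ ≤ ((1 + (-σ - h)⁻) * (1 + |h|)) ^ m * ‖Q (-σ - h)‖ := by
          gcongr
          exact hpeetre h
      _ = (1 + (-σ - h)⁻) ^ m * ‖Q (-σ - h)‖ * (1 + |h|) ^ m := by rw [mul_pow]; ring
      _ ≤ _ := by
          gcongr ?_ * _
          exact hQ.one_add_negPart_pow_mul_norm_le m _
  have hintegral := norm_integral_le_of_norm_le
    ((hν.integrable_one_add_abs_pow m).const_mul _) (Eventually.of_forall hpoint)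
  rw [integral_const_mul, integral_const_mul, norm_mul, norm_pow, Complex.norm_of_nonneg hσ.le,
    mul_comm] at hintegral
  rw [le_div_iff₀ (by positivity)]
  exact hintegral.trans (by gcongr; exact hν.integral_one_add_abs_pow_le m)

lemma norm_comp_sub_sub_le {R x h : ℝ} (hx : |x| ≤ R) (hR : 1 ≤ R) (m : ℕ) :
    ‖Q (x - h) - stdNormalCDF x‖ ≤
      Real.exp 1 * stdNormalPDF x * (ε * (2 + |x|) ^ k + |h|) +
        ((1 + ε * k.factorial) * Real.exp 2 + 1) * (R * |h|) ^ m := by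
  have hε := hQ.nonneg
  have hpdf := stdNormalPDF_pos x
  rcases le_total (R * |h|) 1 with hsmall | hlarge
  · refine le_add_of_le_of_nonneg ?_ (by positivity)
    have hxh : |x| * |h| ≤ 1 := (mul_le_mul_of_nonneg_right hx (abs_nonneg h)).trans hsmall
    have hh : |h| ≤ 1 := by nlinarith [abs_nonneg h]
    have hpow : (1 + |x - h|) ^ k ≤ (2 + |x|) ^ k :=
      pow_le_pow_left₀ (by positivity) (by linarith [abs_sub x h]) k
    have hsplit := norm_add_le (Q (x - h) - stdNormalCDF (x - h))
      ((stdNormalCDF (x - h) - stdNormalCDF x : ℝ) : ℂ)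
    rw [Complex.ofReal_sub, sub_add_sub_cancel, ← Complex.ofReal_sub, Complex.norm_real] at hsplit
    calc ‖Q (x - h) - stdNormalCDF x‖
        ≤ ε * ((2 + |x|) ^ k * (Real.exp 1 * stdNormalPDF x)) +
            Real.exp 1 * stdNormalPDF x * |h| := by
          refine hsplit.trans (add_le_add ((hQ (x - h)).trans ?_)
            (abs_stdNormalCDF_sub_sub_le hxh))
          gcongr
          · exact (stdNormalPDF_pos _).le
          · exact stdNormalPDF_sub_le hxh
      _ = Real.exp 1 * stdNormalPDF x * (ε * (2 + |x|) ^ k + |h|) := by ring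
  · refine le_add_of_nonneg_of_le (by positivity) ?_
    have hΦ : ‖(stdNormalCDF x : ℂ)‖ ≤ 1 := by
      rw [Complex.norm_of_nonneg (stdNormalCDF_nonneg x)]
      exact stdNormalCDF_le_one x
    exact ((norm_sub_le _ _).trans (add_le_add (hQ.norm_le _) hΦ)).trans
      (le_mul_of_one_le_right (by positivity) (one_le_pow₀ hlarge))

lemma norm_integral_comp_sub_sub_le (hQc : Continuous Q)
    (hν : HasMomentsLE ν fun k => M k / σ ^ k) {R x : ℝ} (hx : |x| ≤ R) (hR : 1 ≤ R)
    (hRσ : R ^ 2 ≤ σ) (m : ℕ) :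
    ‖∫ h, Q (x - h) ∂ν - stdNormalCDF x‖ ≤
      Real.exp 1 * stdNormalPDF x * (ε * (2 + |x|) ^ k + M 1 / σ) +
        ((1 + ε * k.factorial) * Real.exp 2 + 1) * M (2 * m) / σ ^ m := by
  have hε := hQ.nonneg
  have hpdf := stdNormalPDF_pos x
  have hσ : 0 < σ := by nlinarith
  have hlin : Integrable (fun h => ε * (2 + |x|) ^ k + |h|) ν :=
    (integrable_const _).add (by simpa using hν.integrable 1)
  have hpow : Integrable (fun h => (R * |h|) ^ (2 * m)) ν := by
    simpa only [mul_pow] using (hν.integrable (2 * m)).const_mul (R ^ (2 * m))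
  have hlin_le : ∫ h, (ε * (2 + |x|) ^ k + |h|) ∂ν ≤ ε * (2 + |x|) ^ k + M 1 / σ := by
    rw [integral_add (integrable_const _) (by simpa using hν.integrable 1)]
    simpa using hν.integral_le 1
  have hpow_le : ∫ h, (R * |h|) ^ (2 * m) ∂ν ≤ M (2 * m) / σ ^ m := by
    simp only [mul_pow, integral_const_mul]
    calc R ^ (2 * m) * ∫ h, |h| ^ (2 * m) ∂ν
        ≤ σ ^ m * (M (2 * m) / σ ^ (2 * m)) := by
          rw [pow_mul R]
          gcongr
          exact hν.integral_le _
      _ = M (2 * m) / σ ^ m := by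
          rw [two_mul m, pow_add]
          field_simp
  have hconst : ∫ h, (Q (x - h) - stdNormalCDF x) ∂ν = ∫ h, Q (x - h) ∂ν - stdNormalCDF x := by
    rw [integral_sub (hQ.integrable_comp_sub hQc x) (integrable_const _)]
    simp
  rw [← hconst]
  refine (norm_integral_le_of_norm_le ((hlin.const_mul _).add (hpow.const_mul _))
    (Eventually.of_forall fun h => hQ.norm_comp_sub_sub_le hx hR (2 * m))).trans ?_
  simp only [Pi.add_apply]
  rw [integral_add (hlin.const_mul _) (hpow.const_mul _), integral_const_mul, integral_const_mul,
    mul_div_assoc]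
  gcongr

end IsNearStdNormalCDF

end CDFApproximation

section SmoothedLaw

lemma IsNearStdNormalCDF.abs_cdf_sub_le {ε σ R T x : ℝ} {k : ℕ} {Q : ℝ → ℂ} {F ν : Measure ℝ}
    [IsProbabilityMeasure F] [IsProbabilityMeasure ν] {a M : ℕ → ℝ}
    (hQ : IsNearStdNormalCDF (ε / σ) k Q) (hQc : Continuous Q) (hF : HasMomentsLE F a)
    (hν : HasMomentsLE ν fun k => M k / σ ^ k) (hx : |x| ≤ R) (hR : 1 ≤ R) (hRσ : R ^ 2 ≤ σ) (m : ℕ)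
    (hT : ‖((cdf F x - cdf F (-σ) : ℝ) : ℂ) - ∫ h, (Q (x - h) - Q (-σ - h)) ∂ν‖ ≤ T / σ ^ m) :
    |cdf F x - stdNormalCDF x| ≤
      Real.exp 1 * (ε + M 1) / σ * ((2 + |x|) ^ k * stdNormalPDF x) +
        (T + a m + (m.factorial + ε * (m + k).factorial) * Real.exp 2 * (2 ^ (m - 1) * (1 + M m)) +
          ((1 + ε * k.factorial) * Real.exp 2 + 1) * M (2 * m)) / σ ^ m := by
  have hσ1 : 1 ≤ σ := by nlinarith
  have hσ : 0 < σ := by linarith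
  have hεσ : ε / σ ≤ ε := div_le_self
    (by simpa [div_mul_cancel₀ _ hσ.ne'] using mul_nonneg hQ.nonneg hσ.le) hσ1
  have hM (j : ℕ) : 0 ≤ M j := by
    simpa [div_mul_cancel₀ _ (pow_pos hσ j).ne'] using mul_nonneg (hν.nonneg j) (pow_pos hσ j).le
  have hpdf := stdNormalPDF_pos x
  have hMm := hM m
  have hM2m := hM (2 * m)
  have hleft : ‖∫ h, Q (-σ - h) ∂ν‖ ≤
      (m.factorial + ε * (m + k).factorial) * Real.exp 2 * (2 ^ (m - 1) * (1 + M m)) / σ ^ m :=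
    (hQ.norm_integral_comp_neg_sub_le
      (hν.mono fun j => div_le_self (hM j) (one_le_pow₀ hσ1)) hσ m).trans (by gcongr)
  have hright : ‖∫ h, Q (x - h) ∂ν - stdNormalCDF x‖ ≤
      Real.exp 1 * stdNormalPDF x * (ε / σ * (2 + |x|) ^ k + M 1 / σ * (2 + |x|) ^ k) +
        ((1 + ε * k.factorial) * Real.exp 2 + 1) * M (2 * m) / σ ^ m := by
    refine (hQ.norm_integral_comp_sub_sub_le hQc hν hx hR hRσ m).trans ?_
    gcongr
    exact le_mul_of_one_le_right (div_nonneg (hM 1) hσ.le)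
      (one_le_pow₀ (by linarith [abs_nonneg x]))
  have hcdf : ‖((cdf F (-σ) : ℝ) : ℂ)‖ ≤ a m / σ ^ m := by
    rw [Complex.norm_of_nonneg (cdf_nonneg _ _)]
    exact hF.cdf_neg_le hσ m
  rw [integral_sub (hQ.integrable_comp_sub hQc x) (hQ.integrable_comp_sub hQc _)] at hT
  rw [← Real.norm_eq_abs, ← Complex.norm_real]
  have hsplit : ((cdf F x - stdNormalCDF x : ℝ) : ℂ) =
      (((cdf F x - cdf F (-σ) : ℝ) : ℂ) - (∫ h, Q (x - h) ∂ν - ∫ h, Q (-σ - h) ∂ν)) +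
        (∫ h, Q (x - h) ∂ν - stdNormalCDF x) - ∫ h, Q (-σ - h) ∂ν + (cdf F (-σ) : ℝ) := by
    push_cast
    ring
  rw [hsplit]
  calc _ ≤ T / σ ^ m + (Real.exp 1 * stdNormalPDF x *
          (ε / σ * (2 + |x|) ^ k + M 1 / σ * (2 + |x|) ^ k) +
        ((1 + ε * k.factorial) * Real.exp 2 + 1) * M (2 * m) / σ ^ m) +
      (m.factorial + ε * (m + k).factorial) * Real.exp 2 * (2 ^ (m - 1) * (1 + M m)) / σ ^ m +
      a m / σ ^ m :=
        norm_add_le_of_le (norm_sub_le_of_le (norm_add_le_of_le hT hright) hleft) hcdf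
    _ = _ := by ring

lemma integrable_abs_pow_mul_exp_neg_sq_div_four (k : ℕ) :
    Integrable fun u : ℝ => |u| ^ k * Real.exp (-u ^ 2 / 4) := by
  refine (integrable_rpow_mul_exp_neg_mul_sq (b := 1 / 4) (s := k) (by norm_num)
    (by linarith [k.cast_nonneg (α := ℝ)])).norm.congr (Eventually.of_forall fun u => ?_)
  simp only [Real.rpow_natCast, norm_mul, norm_pow, Real.norm_eq_abs, Real.abs_exp]
  ring_nf

section Edgeworth

variable {δ K B : ℝ} {w : ℝ → ℝ} {ψ : ℝ → ℂ}

lemma exists_edgeworth_cdf_approximation (hδ : 0 < δ) (hK : 0 < K)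
    (hw : IsBandLimitedKernel (expansionRadius δ K) w ψ B) (m : ℕ) :
    ∃ C : ℝ, 0 ≤ C ∧ ∀ (σ : ℝ) (φ : ℂ → ℂ) (P : Measure ℝ) [IsProbabilityMeasure P],
      1 ≤ σ → IsTameMGF φ σ δ K → (∀ u : ℝ, charFun P u = φ (u / σ * Complex.I)) →
      ∃ Q : ℝ → ℂ, Continuous Q ∧ IsNearStdNormalCDF (C / σ) (3 * m + 2) Q ∧
        ∀ x, |x| ≤ σ → ‖((cdf (P.conv (densityMeasure fun y => σ * w (σ * y))) x -
            cdf (P.conv (densityMeasure fun y => σ * w (σ * y))) (-σ) : ℝ) : ℂ) -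
          ∫ h, (Q (x - h) - Q (-σ - h)) ∂densityMeasure fun y => σ * w (σ * y)‖ ≤ C / σ ^ m := by
  obtain ⟨C, hC, hexpansion⟩ := exists_edgeworth_expansion hδ hK m
  obtain ⟨D, hD, hnear⟩ := exists_norm_edgeworthCDF_sub_le (3 * m)
  set J := ∫ u : ℝ, |u| ^ (3 * m + 3) * Real.exp (-u ^ 2 / 4) with hJ_def
  have : 0 ≤ J := integral_nonneg fun u => by positivity
  have hB : 0 ≤ B := (norm_nonneg _).trans (hw.norm_amplitude_le 0)
  refine ⟨C * D + 2 * B * C * J, by positivity, fun σ φ P _ hσ1 hφ hP => ?_⟩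
  have hσ : 0 < σ := by linarith
  obtain ⟨b, hb, hφb⟩ := hexpansion σ φ hσ1 hφ
  refine ⟨edgeworthCDF (3 * m) b,
    continuous_iff_continuousAt.2 fun s => (hasDerivAt_edgeworthCDF _ b s).continuousAt,
    fun s => (hnear (C / σ) b hb s).trans ?_, fun x hx => ?_⟩
  · have hpdf := stdNormalPDF_pos s
    rw [div_mul_eq_mul_div]
    gcongr
    exact le_add_of_nonneg_right (by positivity)
  · have hinversion := (hw.rescale hσ).norm_cdf_conv_sub_le (P := P) (a := -σ) (x := x)
      (g := fun u => C / σ ^ (m + 1) * (|u| ^ (3 * m + 3) * Real.exp (-u ^ 2 / 4)))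
      (hasDerivAt_edgeworthCDF (3 * m) b) (integrable_edgeworthPDF _ b)
      ((integrable_abs_pow_mul_exp_neg_sq_div_four _).const_mul _) (fun u => by positivity)
      (fun u hu => by
        rw [hP, integral_edgeworthPDF_mul_cexp]
        exact hφb u hu) (abs_le.1 hx).1
    rw [integral_const_mul, sub_neg_eq_add, ← hJ_def] at hinversion
    calc _ ≤ B * (C / σ ^ (m + 1) * J) * (2 * σ) := by
          refine hinversion.trans ?_
          gcongr
          linarith [le_abs_self x]
      _ = 2 * B * C * J / σ ^ m := by
          rw [pow_succ]
          field_simp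
      _ ≤ _ := by
          gcongr
          exact le_add_of_nonneg_left (by positivity)

lemma exists_abs_cdf_conv_sub_le (hδ : 0 < δ) (hK : 0 < K)
    (hw : IsBandLimitedKernel (expansionRadius δ K) w ψ B) (a : ℕ → ℝ) (m : ℕ) :
    ∃ (C : ℝ) (k : ℕ), 0 < C ∧ ∀ (σ R x : ℝ) (φ : ℂ → ℂ) (P : Measure ℝ) [IsProbabilityMeasure P],
      1 ≤ R → R ^ 2 ≤ σ → |x| ≤ R → IsTameMGF φ σ δ K →
      (∀ u : ℝ, charFun P u = φ (u / σ * Complex.I)) → HasMomentsLE P a →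
      |cdf (P.conv (densityMeasure fun y => σ * w (σ * y))) x - stdNormalCDF x| ≤
        C / σ * ((2 + |x|) ^ k * stdNormalPDF x) + C / σ ^ m := by
  obtain ⟨C, -, hC⟩ := exists_edgeworth_cdf_approximation hδ hK hw m
  set M : ℕ → ℝ := fun k => ∫ y, |y| ^ k * w y
  have hM (k : ℕ) : 0 ≤ M k := integral_nonneg fun y => mul_nonneg (by positivity) (hw.nonneg y)
  set A₁ := Real.exp 1 * (C + M 1)
  set A₂ := C + 2 ^ (m - 1) * (a m + M m) +
    (m.factorial + C * (m + (3 * m + 2)).factorial) * Real.exp 2 * (2 ^ (m - 1) * (1 + M m)) +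
    ((1 + C * (3 * m + 2).factorial) * Real.exp 2 + 1) * M (2 * m)
  refine ⟨|A₁| + |A₂| + 1, 3 * m + 2, by positivity, fun σ R x φ P _ hR hRσ hx hφ hP ha => ?_⟩
  have hσ1 : 1 ≤ σ := by nlinarith
  have hσ : 0 < σ := by linarith
  have := (hw.rescale hσ).isProbabilityMeasure_densityMeasure
  obtain ⟨Q, hQc, hQ, hT⟩ := hC σ φ P hσ1 hφ hP
  have hνm := hw.hasMomentsLE_densityMeasure hσ
  have hmom := (ha.conv hνm).mono (b := fun k => 2 ^ (k - 1) * (a k + M k)) fun k =>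
    mul_le_mul_of_nonneg_left
      (add_le_add_right (div_le_self (hM k) (one_le_pow₀ hσ1)) _) (by positivity)
  refine (hQ.abs_cdf_sub_le hQc hmom hνm hx hR hRσ m (hT x (hx.trans (by nlinarith)))).trans ?_
  have hpdf := stdNormalPDF_pos x
  have hA₁ : A₁ ≤ |A₁| + |A₂| + 1 := by linarith [le_abs_self A₁, abs_nonneg A₂]
  have hA₂ : A₂ ≤ |A₁| + |A₂| + 1 := by linarith [le_abs_self A₂, abs_nonneg A₁]
  exact add_le_add (mul_le_mul_of_nonneg_right (div_le_div_of_nonneg_right hA₁ hσ.le)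
    (by positivity)) (div_le_div_of_nonneg_right hA₂ (by positivity))

end Edgeworth

end SmoothedLaw

section QuantileCoupling

lemma mul_le_stdNormalCDF_sub {a b g : ℝ} (hab : a ≤ b)
    (hg : ∀ t ∈ Set.Icc a b, g ≤ stdNormalPDF t) :
    (b - a) * g ≤ stdNormalCDF b - stdNormalCDF a := by
  rw [stdNormalCDF_sub]
  simpa using intervalIntegral.integral_mono_on hab (μ := volume) (f := fun _ => g)
    intervalIntegrable_const (continuous_stdNormalPDF.intervalIntegrable _ _) hg

section Quantile

variable {F τ : ℝ → ℝ} (hτ : ∀ y x, τ y ≤ x ↔ stdNormalCDF y ≤ F x)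

include hτ

lemma abs_quantile_sub_le_of_abs_sub_lt {y d g : ℝ} (hd : 0 < d)
    (hg : ∀ t, |t - y| ≤ d → g ≤ stdNormalPDF t)
    (hF : ∀ t, |t - y| ≤ d → |F t - stdNormalCDF t| < d * g) : |τ y - y| ≤ d := by
  rw [abs_le, neg_le_sub_iff_le_add, sub_le_iff_le_add', ← sub_le_iff_le_add]
  constructor
  · by_contra! hlt
    have hge := (hτ y (y - d)).1 hlt.le
    have hincr := mul_le_stdNormalCDF_sub (a := y - d) (b := y) (by linarith)
      fun t ht => hg t (abs_le.2 ⟨by linarith [ht.1], by linarith [ht.2]⟩)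
    rw [sub_sub_cancel] at hincr
    linarith [(abs_lt.1 (hF (y - d) (by simp [abs_of_pos hd]))).2]
  · refine (hτ y (y + d)).2 ?_
    have hincr := mul_le_stdNormalCDF_sub (a := y) (b := y + d) (by linarith)
      fun t ht => hg t (abs_le.2 ⟨by linarith [ht.1], by linarith [ht.2]⟩)
    rw [add_sub_cancel_left] at hincr
    linarith [(abs_lt.1 (hF (y + d) (by simp [abs_of_pos hd]))).1]

/- Moving `y` by `d = 2ηe²(3 + |y|)ᵏ` changes `Φ` by at least `d φ(y) / e`, which outweighs the
error `F - Φ` near `y`; this is where it matters that the error is controlled relative to `φ`. -/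
lemma abs_quantile_sub_le {η L y : ℝ} {k : ℕ} (hη : 0 < η)
    (hF : ∀ x, |x| ≤ L + 1 → |F x - stdNormalCDF x| ≤ η * ((2 + |x|) ^ k * stdNormalPDF x))
    (hL : 2 * η * Real.exp 1 ^ 2 * (4 + L) ^ (k + 1) ≤ 1) (hy : |y| ≤ L) :
    |τ y - y| ≤ 2 * η * Real.exp 1 ^ 2 * (3 + |y|) ^ k := by
  set d := 2 * η * Real.exp 1 ^ 2 * (3 + |y|) ^ k with hd
  have hpdf := stdNormalPDF_pos y
  have hyd : (|y| + 1) * d ≤ 1 := by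
    calc (|y| + 1) * d = 2 * η * Real.exp 1 ^ 2 * ((3 + |y|) ^ k * (|y| + 1)) := by ring
      _ ≤ 2 * η * Real.exp 1 ^ 2 * ((4 + L) ^ k * (4 + L)) := by
          have := abs_nonneg y
          refine mul_le_mul_of_nonneg_left (mul_le_mul ?_ (by linarith) (by positivity)
            (pow_nonneg (by linarith) k)) (by positivity)
          exact pow_le_pow_left₀ (by positivity) (by linarith) k
      _ ≤ 1 := by rwa [← pow_succ]
  have hd0 : 0 < d := by positivity
  have hty {t : ℝ} (ht : |t - y| ≤ d) : |t| ≤ |y| + 1 := by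
    nlinarith [abs_sub_abs_le_abs_sub t y, abs_nonneg y]
  refine abs_quantile_sub_le_of_abs_sub_lt hτ hd0 (g := stdNormalPDF y / Real.exp 1)
    (fun t ht => ?_) fun t ht => ?_
  · rw [div_le_iff₀' (Real.exp_pos 1)]
    simpa using stdNormalPDF_sub_le (x := t) (h := t - y)
      ((mul_le_mul (hty ht) ht (abs_nonneg _) (by positivity)).trans hyd)
  · have hupper : stdNormalPDF t ≤ Real.exp 1 * stdNormalPDF y := by
      simpa using stdNormalPDF_sub_le (x := y) (h := y - t) ((mul_le_mul (by linarith)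
        (by rwa [abs_sub_comm]) (abs_nonneg _) (by positivity)).trans hyd)
    have hpdft := stdNormalPDF_pos t
    calc |F t - stdNormalCDF t| ≤ η * ((2 + |t|) ^ k * stdNormalPDF t) :=
          hF t (by linarith [hty ht])
      _ ≤ η * ((3 + |y|) ^ k * (Real.exp 1 * stdNormalPDF y)) := by
          gcongr η * (?_ ^ k * ?_)
          linarith [hty ht]
      _ < 2 * (η * ((3 + |y|) ^ k * (Real.exp 1 * stdNormalPDF y))) :=
          lt_two_mul_self (by positivity)
      _ = d * (stdNormalPDF y / Real.exp 1) := by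
          rw [hd]
          field_simp

end Quantile

end QuantileCoupling

section WassersteinBounds

lemma rpow_le_one_add_pow {x q : ℝ} {n : ℕ} (hx : 0 ≤ x) (hq : 0 ≤ q) (hqn : q ≤ n) :
    x ^ q ≤ 1 + x ^ n := by
  rcases le_total x 1 with hle | hle
  · exact (Real.rpow_le_one hx hle hq).trans (le_add_of_nonneg_right (by positivity))
  · rw [← Real.rpow_natCast]
    exact (Real.rpow_le_rpow_of_exponent_le hle hqn).trans (le_add_of_nonneg_left zero_le_one)

lemma ofReal_div_rpow_rpow_one_div {C σ p : ℝ} (hC : 0 ≤ C) (hσ : 0 < σ) (hp : 0 < p) :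
    ENNReal.ofReal (C / σ ^ p) ^ (1 / p) = ENNReal.ofReal (C ^ (1 / p) / σ) := by
  rw [ENNReal.ofReal_rpow_of_nonneg (by positivity) (by positivity),
    Real.div_rpow hC (by positivity), ← Real.rpow_mul hσ.le, mul_one_div_cancel hp.ne',
    Real.rpow_one]

lemma HasMomentsLE.wassersteinDist_conv_le_ofReal {ν : Measure ℝ} [IsProbabilityMeasure ν]
    {M : ℕ → ℝ} {σ p : ℝ} {n : ℕ} (hν : HasMomentsLE ν fun k => M k / σ ^ k) (hσ : 0 < σ)
    (hp : 0 < p) (hpn : p ≤ n) (P : Measure ℝ) [IsProbabilityMeasure P] :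
    wassersteinDist p P (P.conv ν) ≤ ENNReal.ofReal ((1 + M n) ^ (1 / p) / σ) := by
  have hM : 0 ≤ M n := by
    simpa [div_mul_cancel₀ _ (pow_pos hσ n).ne'] using mul_nonneg (hν.nonneg n) (pow_pos hσ n).le
  have hint : Integrable (fun h => (1 + σ ^ n * |h| ^ n) / σ ^ p) ν :=
    ((integrable_const 1).add ((hν.integrable n).const_mul _)).div_const _
  have hpoint (h : ℝ) : |h| ^ p ≤ (1 + σ ^ n * |h| ^ n) / σ ^ p := by
    rw [le_div_iff₀ (by positivity), mul_comm, ← Real.mul_rpow hσ.le (abs_nonneg h), ← mul_pow]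
    exact rpow_le_one_add_pow (by positivity) hp.le hpn
  refine (wassersteinDist_conv_le p P ν).trans ?_
  rw [← ofReal_div_rpow_rpow_one_div (by positivity) hσ hp]
  gcongr
  calc ∫⁻ h, ENNReal.ofReal (|h| ^ p) ∂ν
      ≤ ∫⁻ h, ENNReal.ofReal ((1 + σ ^ n * |h| ^ n) / σ ^ p) ∂ν :=
        lintegral_mono fun h => ENNReal.ofReal_le_ofReal (hpoint h)
    _ = ENNReal.ofReal (∫ h, (1 + σ ^ n * |h| ^ n) / σ ^ p ∂ν) :=
        (ofReal_integral_eq_lintegral_ofReal hint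
          (Eventually.of_forall fun h => by simp only [Pi.zero_apply]; positivity)).symm
    _ ≤ ENNReal.ofReal ((1 + M n) / σ ^ p) := by
        rw [integral_div, integral_add (integrable_const 1) ((hν.integrable n).const_mul _),
          integral_const_mul]
        gcongr
        · simp
        · rw [← le_div_iff₀' (by positivity)]
          exact hν.integral_le n

lemma rpow_le_of_le_div {x D y σ p : ℝ} {k n : ℕ} (hx : 0 ≤ x) (hD : 0 ≤ D) (hσ : 0 < σ)
    (hp : 0 ≤ p) (hpn : p ≤ n) (hle : x ≤ D * (3 + |y|) ^ k / σ) :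
    x ^ p ≤ (1 + (D * 3 ^ k) ^ n * ((k * n).factorial * Real.exp 2)) * Real.exp (y ^ 2 / 4) /
      σ ^ p := by
  have hexp : 1 ≤ Real.exp (y ^ 2 / 4) := Real.one_le_exp (by positivity)
  calc x ^ p ≤ (D * (3 + |y|) ^ k) ^ p / σ ^ p := by
        rw [← Real.div_rpow (by positivity) hσ.le]
        gcongr
    _ ≤ (1 + (D * (3 * (1 + |y|)) ^ k) ^ n) / σ ^ p := by
        gcongr
        refine (rpow_le_one_add_pow (by positivity) hp hpn).trans ?_
        gcongr
        linarith [abs_nonneg y]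
    _ = (1 + (D * 3 ^ k) ^ n * (1 + |y|) ^ (k * n)) / σ ^ p := by
        rw [mul_pow 3, ← mul_assoc, mul_pow _ ((1 + |y|) ^ k), ← pow_mul (1 + |y|)]
    _ ≤ (Real.exp (y ^ 2 / 4) + (D * 3 ^ k) ^ n *
          ((k * n).factorial * Real.exp 2 * Real.exp (y ^ 2 / 4))) / σ ^ p := by
        gcongr ?_ / _
        gcongr ?_ + _ * ?_
        exact one_add_abs_pow_le _ _
    _ = _ := by ring

lemma abs_sub_rpow_le_of_rpow_le_exp {t y σ p : ℝ} {n : ℕ} (hσ : 0 < σ) (hp : 0 < p)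
    (hpn : 2 * p ≤ n) (hle : σ ^ (2 * p) ≤ Real.exp (y ^ 2 / 4)) :
    |t - y| ^ p ≤ ((2 + 2 ^ (n - 1) * (n.factorial * Real.exp 2)) * Real.exp (y ^ 2 / 4) +
      2 ^ (n - 1) * |t| ^ n) / σ ^ p := by
  have hexp : 1 ≤ Real.exp (y ^ 2 / 4) := Real.one_le_exp (by positivity)
  have hamgm : |t - y| ^ p * σ ^ p ≤ |t - y| ^ (2 * p) + σ ^ (2 * p) := by
    rw [two_mul, Real.rpow_add' (abs_nonneg _) (by positivity), Real.rpow_add hσ]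
    nlinarith [sq_nonneg (|t - y| ^ p - σ ^ p), sq_nonneg (|t - y| ^ p + σ ^ p)]
  have hpow : |t - y| ^ n ≤ 2 ^ (n - 1) * (|t| ^ n + (1 + |y|) ^ n) :=
    (pow_le_pow_left₀ (abs_nonneg _) (by linarith [abs_sub t y]) n).trans
      (add_pow_le (abs_nonneg t) (by positivity) n)
  rw [le_div_iff₀ (by positivity)]
  calc |t - y| ^ p * σ ^ p ≤ 1 + |t - y| ^ n + Real.exp (y ^ 2 / 4) :=
        hamgm.trans (add_le_add (rpow_le_one_add_pow (abs_nonneg _) (by positivity) hpn) hle)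
    _ ≤ Real.exp (y ^ 2 / 4) + 2 ^ (n - 1) * (|t| ^ n +
          n.factorial * Real.exp 2 * Real.exp (y ^ 2 / 4)) + Real.exp (y ^ 2 / 4) := by
        gcongr ?_ + ?_ + _
        refine hpow.trans ?_
        gcongr 2 ^ (n - 1) * (_ + ?_)
        exact one_add_abs_pow_le _ _
    _ = _ := by ring

lemma integrable_exp_sq_div_four_gaussianReal :
    Integrable (fun y : ℝ => Real.exp (y ^ 2 / 4)) (gaussianReal 0 1) := by
  rw [gaussianReal_of_var_ne_zero _ (by simp), integrable_withDensity_iff_integrable_smul'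
    (by fun_prop) (Eventually.of_forall fun _ => by simp [gaussianPDF])]
  refine (integrable_exp_neg_sq_div_four.const_mul (√(2 * Real.pi))⁻¹).congr
    (Eventually.of_forall fun s => ?_)
  simp only [toReal_gaussianPDF, smul_eq_mul, gaussianPDFReal, NNReal.coe_one, mul_assoc,
    ← Real.exp_add]
  ring_nf

/-- The constant in the bound `∫ |τ y - y|ᵖ φ(y) dy ≤ C / σᵖ` for a map `τ` such that
`|τ y - y| ≤ D (3 + |y|)ᵏ / σ` outside of the tails and the `n`-th moment of `τ` is at most `A`. -/
def couplingConstant (D A : ℝ) (k n : ℕ) : ℝ :=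
  (3 + (D * 3 ^ k) ^ n * ((k * n).factorial * Real.exp 2) +
      2 ^ (n - 1) * (n.factorial * Real.exp 2)) *
    ∫ y, Real.exp (y ^ 2 / 4) ∂gaussianReal 0 1 + 2 ^ (n - 1) * A

lemma lintegral_abs_sub_rpow_le {τ : ℝ → ℝ} {a : ℕ → ℝ} {D σ p : ℝ} {k n : ℕ} (hD : 0 ≤ D)
    (hσ : 0 < σ) (hp : 0 < p) (hpn : 2 * p ≤ n) (hτm : Measurable τ)
    (hτa : HasMomentsLE ((gaussianReal 0 1).map τ) a)
    (hτ : ∀ y, |τ y - y| ≤ D * (3 + |y|) ^ k / σ ∨ σ ^ (2 * p) ≤ Real.exp (y ^ 2 / 4)) :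
    ∫⁻ y, ENNReal.ofReal (|τ y - y| ^ p) ∂gaussianReal 0 1 ≤
      ENNReal.ofReal (couplingConstant D (a n) k n / σ ^ p) := by
  set b := (D * 3 ^ k) ^ n * ((k * n).factorial * Real.exp 2)
  set b' := 2 ^ (n - 1) * (n.factorial * Real.exp 2)
  have hb : 0 ≤ b := by positivity
  have hb' : 0 ≤ b' := by positivity
  have hpoint (y : ℝ) : |τ y - y| ^ p ≤
      ((3 + b + b') * Real.exp (y ^ 2 / 4) + 2 ^ (n - 1) * |τ y| ^ n) / σ ^ p := by
    rcases hτ y with hbulk | htail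
    · refine (rpow_le_of_le_div (abs_nonneg _) hD hσ hp.le (by linarith) hbulk).trans ?_
      gcongr ?_ / _
      exact le_add_of_le_of_nonneg
        (mul_le_mul_of_nonneg_right (by linarith) (Real.exp_pos _).le) (by positivity)
    · refine (abs_sub_rpow_le_of_rpow_le_exp hσ hp hpn htail).trans ?_
      gcongr
      linarith
  have hint : Integrable (fun y => |τ y| ^ n) (gaussianReal 0 1) :=
    (integrable_map_measure (by fun_prop) hτm.aemeasurable).1 (hτa.integrable n)
  have hmom : ∫ y, |τ y| ^ n ∂gaussianReal 0 1 ≤ a n := by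
    rw [← integral_map (f := fun x => |x| ^ n) hτm.aemeasurable (by fun_prop)]
    exact hτa.integral_le n
  have hexp := integrable_exp_sq_div_four_gaussianReal.const_mul (3 + b + b')
  calc ∫⁻ y, ENNReal.ofReal (|τ y - y| ^ p) ∂gaussianReal 0 1
      ≤ ∫⁻ y, ENNReal.ofReal (((3 + b + b') * Real.exp (y ^ 2 / 4) + 2 ^ (n - 1) * |τ y| ^ n) /
          σ ^ p) ∂gaussianReal 0 1 :=
        lintegral_mono fun y => ENNReal.ofReal_le_ofReal (hpoint y)
    _ = ENNReal.ofReal (∫ y, ((3 + b + b') * Real.exp (y ^ 2 / 4) + 2 ^ (n - 1) * |τ y| ^ n) /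
          σ ^ p ∂gaussianReal 0 1) :=
        (ofReal_integral_eq_lintegral_ofReal ((hexp.add (hint.const_mul _)).div_const _)
          (Eventually.of_forall fun y => by
            simp only [Pi.zero_apply, Pi.add_apply]; positivity)).symm
    _ ≤ ENNReal.ofReal (couplingConstant D (a n) k n / σ ^ p) := by
        rw [integral_div, integral_add hexp (hint.const_mul _), integral_const_mul,
          integral_const_mul, couplingConstant]
        gcongr

lemma exists_wassersteinDist_gaussianReal_le {p D : ℝ} (hp : 0 < p) (hD : 0 ≤ D) (a : ℕ → ℝ)
    (k : ℕ) :
    ∃ C : ℝ, 0 ≤ C ∧ ∀ (σ : ℝ) (τ : ℝ → ℝ), 0 < σ → Measurable τ →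
      HasMomentsLE ((gaussianReal 0 1).map τ) a →
      (∀ y, |τ y - y| ≤ D * (3 + |y|) ^ k / σ ∨ σ ^ (2 * p) ≤ Real.exp (y ^ 2 / 4)) →
      wassersteinDist p ((gaussianReal 0 1).map τ) (gaussianReal 0 1) ≤ ENNReal.ofReal (C / σ) := by
  obtain ⟨n, hn⟩ := exists_nat_ge (2 * p)
  refine ⟨|couplingConstant D (a n) k n| ^ (1 / p), by positivity, fun σ τ hσ hτm hτa hτ => ?_⟩
  have hdist := wassersteinDist_map_le (gaussianReal 0 1) p hτm measurable_id
  rw [Measure.map_id] at hdist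
  refine hdist.trans ?_
  rw [← ofReal_div_rpow_rpow_one_div (abs_nonneg _) hσ hp]
  gcongr
  refine (lintegral_abs_sub_rpow_le hD hσ hp hn hτm hτa hτ).trans ?_
  gcongr
  exact le_abs_self _

end WassersteinBounds

section CentralLimitTheorem

lemma hasMomentsLE_factorial_mul {P : Measure ℝ} (hP : Integrable (fun x => Real.exp |x|) P) :
    HasMomentsLE P fun k => k.factorial * ∫ x, Real.exp |x| ∂P := by
  have hle (k : ℕ) (x : ℝ) : |x| ^ k ≤ k.factorial * Real.exp |x| := by
    rw [← div_le_iff₀' (by positivity)]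
    exact Real.pow_div_factorial_le_exp |x| (abs_nonneg x) k
  have hint (k : ℕ) : Integrable (fun x => |x| ^ k) P :=
    (hP.const_mul (k.factorial : ℝ)).mono' (by fun_prop) (Eventually.of_forall fun x => by
      rw [Real.norm_of_nonneg (by positivity)]
      exact hle k x)
  refine ⟨hint, fun k => ?_⟩
  rw [← integral_const_mul]
  exact integral_mono (hint k) (hP.const_mul _) (hle k)

lemma integrable_exp_of_integrable_exp_abs {P : Measure ℝ}
    (hP : Integrable (fun x => Real.exp |x|) P) :
    Integrable Real.exp P ∧ Integrable (fun x => Real.exp (-x)) P :=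
  ⟨hP.mono' (by fun_prop) (Eventually.of_forall fun x => by simpa using le_abs_self x),
    hP.mono' (by fun_prop) (Eventually.of_forall fun x => by simpa using neg_le_abs x)⟩

lemma integral_exp_abs_le_mgf_add_mgf {P : Measure ℝ} (hP : Integrable (fun x => Real.exp |x|) P) :
    ∫ x, Real.exp |x| ∂P ≤ mgf id P 1 + mgf id P (-1) := by
  obtain ⟨hpos, hneg⟩ := integrable_exp_of_integrable_exp_abs hP
  simp only [mgf, id, one_mul, neg_one_mul]
  rw [← integral_add hpos hneg]
  refine integral_mono hP (hpos.add hneg) fun x => ?_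
  rcases abs_choice x with h | h <;>
    simp only [h, le_add_iff_nonneg_left, le_add_iff_nonneg_right, Real.exp_nonneg]

lemma IsTameMGF.hasMomentsLE {φ : ℂ → ℂ} {σ δ K : ℝ} {P : Measure ℝ} (hφ : IsTameMGF φ σ δ K)
    (hδ : 0 < δ) (hK : 0 < K) (hσ : 1 / expansionRadius δ K ≤ σ)
    (hPφ : ∀ z, complexMGF id P z = φ (z / σ)) (hP : Integrable (fun x => Real.exp |x|) P) :
    HasMomentsLE P fun k => k.factorial * (2 * Real.exp 1) := by
  have hr := expansionRadius_pos hδ hK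
  have hσ0 : 0 < σ := (by positivity : 0 < 1 / expansionRadius δ K).trans_le hσ
  have hmgf {t : ℝ} (ht : |t| = 1) : mgf id P t ≤ Real.exp 1 := by
    have hnorm : ‖(t / σ : ℂ)‖ = 1 / σ := by
      rw [norm_div, Complex.norm_real, Complex.norm_real, Real.norm_of_nonneg hσ0.le,
        Real.norm_eq_abs, ht]
    have := hφ.norm_le_exp_sq hδ hK hσ0 (z := t / σ)
      (hnorm.trans_le ((one_div_le hr hσ0).1 hσ))
    rw [← hPφ, complexMGF_ofReal, Complex.norm_real, hnorm, mul_one_div_cancel hσ0.ne',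
      one_pow] at this
    exact (Real.le_norm_self _).trans this
  refine (hasMomentsLE_factorial_mul hP).mono fun k => ?_
  gcongr
  linarith [integral_exp_abs_le_mgf_add_mgf hP, hmgf abs_one, hmgf (t := -1) (by simp)]

lemma eventually_mul_add_sqrt_log_pow_le (D : ℝ) {q : ℝ} (hq : 0 ≤ q) (k : ℕ) :
    ∀ᶠ σ in atTop, D * (4 + √(q * Real.log σ)) ^ k ≤ σ := by
  have hlog := (Real.isLittleO_pow_log_id_atTop (n := k)).bound
    (c := 1 / ((|D| + 1) * (5 + q) ^ k)) (by positivity)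
  filter_upwards [hlog, eventually_ge_atTop (Real.exp 1)] with σ hlogσ hσe
  have hσ : 0 < σ := (Real.exp_pos 1).trans_le hσe
  have hl : 1 ≤ Real.log σ := (Real.le_log_iff_exp_le hσ).2 hσe
  set l := Real.log σ
  have hsqrt : √(q * l) ≤ 1 + q * l := by
    rw [Real.sqrt_le_left (by positivity)]
    nlinarith [mul_nonneg hq (zero_le_one.trans hl)]
  rw [Real.norm_of_nonneg (by positivity), id, Real.norm_of_nonneg hσ.le] at hlogσ
  calc D * (4 + √(q * l)) ^ k ≤ (|D| + 1) * ((5 + q) * l) ^ k := by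
        gcongr
        · linarith [le_abs_self D]
        · linarith
    _ = (|D| + 1) * (5 + q) ^ k * l ^ k := by rw [mul_pow, mul_assoc]
    _ ≤ (|D| + 1) * (5 + q) ^ k * (1 / ((|D| + 1) * (5 + q) ^ k) * σ) := by gcongr
    _ = σ := by field_simp

lemma one_div_pow_le_mul_stdNormalPDF {σ L x : ℝ} {m : ℕ} (hσ : 0 < σ)
    (hm : σ * Real.exp (L ^ 2) ≤ σ ^ m) (hx : |x| ≤ L + 1) :
    1 / σ ^ m ≤ √(2 * Real.pi) * Real.exp 1 / σ * stdNormalPDF x := by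
  have hsq : x ^ 2 ≤ (L + 1) ^ 2 := sq_le_sq.2 (hx.trans (le_abs_self _))
  calc 1 / σ ^ m ≤ 1 / (σ * Real.exp (L ^ 2)) := by gcongr
    _ = 1 / σ * Real.exp (-L ^ 2) := by
        rw [Real.exp_neg]
        field_simp
    _ ≤ 1 / σ * Real.exp (1 + -x ^ 2 / 2) := by
        gcongr
        nlinarith [sq_nonneg (L - 1)]
    _ = √(2 * Real.pi) * Real.exp 1 / σ * stdNormalPDF x := by
        rw [stdNormalPDF_eq, Real.exp_add]
        field_simp

variable {δ K B : ℝ} {w : ℝ → ℝ} {ψ : ℝ → ℂ}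

lemma exists_abs_cdf_conv_sub_le_mul_stdNormalPDF (hδ : 0 < δ) (hK : 0 < K)
    (hw : IsBandLimitedKernel (expansionRadius δ K) w ψ B) (a : ℕ → ℝ) (m : ℕ) :
    ∃ (C : ℝ) (k : ℕ), 0 < C ∧ ∀ (σ L x : ℝ) (φ : ℂ → ℂ) (P : Measure ℝ) [IsProbabilityMeasure P],
      0 ≤ L → (L + 1) ^ 2 ≤ σ → σ * Real.exp (L ^ 2) ≤ σ ^ m → |x| ≤ L + 1 →
      IsTameMGF φ σ δ K → (∀ u : ℝ, charFun P u = φ (u / σ * Complex.I)) → HasMomentsLE P a →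
      |cdf (P.conv (densityMeasure fun y => σ * w (σ * y))) x - stdNormalCDF x| ≤
        C / σ * ((2 + |x|) ^ k * stdNormalPDF x) := by
  obtain ⟨C, k, hC, hcdf⟩ := exists_abs_cdf_conv_sub_le hδ hK hw a m
  refine ⟨C * (1 + √(2 * Real.pi) * Real.exp 1), k, by positivity,
    fun σ L x φ P _ hL hLσ hm hx hφ hP ha => ?_⟩
  have hσ : 0 < σ := by nlinarith
  have hpdf := stdNormalPDF_pos x
  have hpow : 1 ≤ (2 + |x|) ^ k := one_le_pow₀ (by linarith [abs_nonneg x])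
  calc |cdf (P.conv (densityMeasure fun y => σ * w (σ * y))) x - stdNormalCDF x|
      ≤ C / σ * ((2 + |x|) ^ k * stdNormalPDF x) + C * (1 / σ ^ m) := by
        rw [mul_one_div]
        exact hcdf σ (L + 1) x φ P (by linarith) hLσ hx hφ hP ha
    _ ≤ C / σ * ((2 + |x|) ^ k * stdNormalPDF x) +
          C * (√(2 * Real.pi) * Real.exp 1 / σ * ((2 + |x|) ^ k * stdNormalPDF x)) := by
        gcongr _ + C * ?_
        refine (one_div_pow_le_mul_stdNormalPDF hσ hm hx).trans ?_
        gcongr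
        exact le_mul_of_one_le_left hpdf.le hpow
    _ = _ := by ring

/- Outside of the window `|y| ≤ L` the weight `exp (y² / 4)`, which is integrable for the Gaussian
law, dominates `σ²ᵖ`; inside of it the Gaussian density dominates `σ⁻ᵐ`. -/
lemma eventually_exists_window {p : ℝ} {m : ℕ} (hp : 0 < p) (hm : 1 + 8 * p ≤ m) (D : ℝ) (k : ℕ) :
    ∀ᶠ σ in atTop, 1 ≤ σ ∧ ∃ L : ℝ, 0 ≤ L ∧ (L + 1) ^ 2 ≤ σ ∧ D * (4 + L) ^ k ≤ σ ∧
      σ * Real.exp (L ^ 2) ≤ σ ^ m ∧ ∀ y : ℝ, L < |y| → σ ^ (2 * p) ≤ Real.exp (y ^ 2 / 4) := by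
  have hq : 0 ≤ 8 * p := by positivity
  filter_upwards [eventually_mul_add_sqrt_log_pow_le 1 hq 2,
    eventually_mul_add_sqrt_log_pow_le D hq k, eventually_ge_atTop 1] with σ hsq hD hσ1
  have hσ : 0 < σ := zero_lt_one.trans_le hσ1
  set L := √(8 * p * Real.log σ)
  have hL : 0 ≤ L := Real.sqrt_nonneg _
  have hLsq : L ^ 2 = Real.log σ * (8 * p) := by
    rw [Real.sq_sqrt (mul_nonneg hq (Real.log_nonneg hσ1)), mul_comm]
  refine ⟨hσ1, L, hL, by nlinarith, hD, ?_, fun y hy => ?_⟩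
  · rw [hLsq, ← Real.rpow_def_of_pos hσ, ← Real.rpow_natCast, ← Real.rpow_one_add' hσ.le
      (by positivity)]
    exact Real.rpow_le_rpow_of_exponent_le hσ1 hm
  · rw [Real.rpow_def_of_pos hσ, Real.exp_le_exp]
    have : L ^ 2 ≤ y ^ 2 := sq_le_sq.2 (by rw [abs_of_nonneg hL]; exact hy.le)
    linarith

lemma exists_wassersteinDist_conv_gaussianReal_le {p : ℝ} (hp : 0 < p) (hδ : 0 < δ) (hK : 0 < K)
    (hw : IsBandLimitedKernel (expansionRadius δ K) w ψ B) (a : ℕ → ℝ) :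
    ∃ C σ₀ : ℝ, 0 ≤ C ∧ ∀ (σ : ℝ) (φ : ℂ → ℂ) (P : Measure ℝ) [IsProbabilityMeasure P],
      σ₀ ≤ σ → IsTameMGF φ σ δ K → (∀ u : ℝ, charFun P u = φ (u / σ * Complex.I)) →
      HasMomentsLE P a →
      wassersteinDist p (P.conv (densityMeasure fun y => σ * w (σ * y))) (gaussianReal 0 1) ≤
        ENNReal.ofReal (C / σ) := by
  obtain ⟨m, hm⟩ := exists_nat_ge (1 + 8 * p)
  obtain ⟨C₁, k, hC₁, hcdf⟩ := exists_abs_cdf_conv_sub_le_mul_stdNormalPDF hδ hK hw a m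
  obtain ⟨C, hC, hW⟩ := exists_wassersteinDist_gaussianReal_le hp
    (D := 2 * C₁ * Real.exp 1 ^ 2) (by positivity)
    (fun j => 2 ^ (j - 1) * (a j + ∫ y, |y| ^ j * w y)) k
  obtain ⟨σ₀, hσ₀⟩ := eventually_atTop.1
    (eventually_exists_window hp hm (2 * C₁ * Real.exp 1 ^ 2) (k + 1))
  refine ⟨C, σ₀, hC, fun σ φ P _ hσ hφ hPφ ha => ?_⟩
  obtain ⟨hσ1, L, hL, hLsq, hLk, hLm, htail⟩ := hσ₀ σ hσ
  have hσ0 : 0 < σ := zero_lt_one.trans_le hσ1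
  have := (hw.rescale hσ0).isProbabilityMeasure_densityMeasure
  set F := P.conv (densityMeasure fun y => σ * w (σ * y))
  obtain ⟨τ, hτm, hτF, hτ⟩ := exists_quantile_map (gaussianReal 0 1) F
    (by rw [cdf_gaussianReal_eq_stdNormalCDF]; exact continuous_stdNormalCDF)
    (by rw [cdf_gaussianReal_eq_stdNormalCDF]; exact strictMono_stdNormalCDF)
  rw [cdf_gaussianReal_eq_stdNormalCDF] at hτ
  rw [← hτF]
  refine hW σ τ hσ0 hτm ?_ fun y => ?_
  · rw [hτF]
    refine (ha.conv (hw.hasMomentsLE_densityMeasure hσ0)).mono fun j => ?_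
    gcongr
    exact div_le_self (integral_nonneg fun y => mul_nonneg (by positivity) (hw.nonneg y))
      (one_le_pow₀ hσ1)
  rcases le_or_gt |y| L with hy | hy
  · left
    convert abs_quantile_sub_le hτ (η := C₁ / σ) (k := k) (by positivity)
      (fun x hx => hcdf σ L x φ P hL hLsq hLm hx hφ hPφ ha) ?_ hy using 1
    · ring
    · rw [← div_le_one hσ0] at hLk
      exact hLk.trans_eq' (by ring)
  · exact Or.inr (htail y hy)

theorem exists_wassersteinDist_gaussianReal_le_of_isTameMGF {p : ℝ} (hp : 1 ≤ p) (hδ : 0 < δ)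
    (hK : 0 < K) :
    ∃ C σ₀ : ℝ, 0 ≤ C ∧ ∀ (σ : ℝ) (φ : ℂ → ℂ) (P : Measure ℝ) [IsProbabilityMeasure P],
      σ₀ ≤ σ → IsTameMGF φ σ δ K → (∀ z, complexMGF id P z = φ (z / σ)) →
      Integrable (fun x => Real.exp |x|) P →
      wassersteinDist p P (gaussianReal 0 1) ≤ ENNReal.ofReal (C / σ) := by
  have hp0 : 0 < p := zero_lt_one.trans_le hp
  have hr := expansionRadius_pos hδ hK
  obtain ⟨w, ψ, B, hw⟩ := exists_isBandLimitedKernel hr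
  obtain ⟨n, hn⟩ := exists_nat_ge p
  obtain ⟨C, σ₀, hC, hW⟩ := exists_wassersteinDist_conv_gaussianReal_le hp0 hδ hK hw
    fun k => k.factorial * (2 * Real.exp 1)
  have hM : 0 ≤ ∫ y, |y| ^ n * w y := integral_nonneg fun y => mul_nonneg (by positivity)
    (hw.nonneg y)
  refine ⟨(1 + ∫ y, |y| ^ n * w y) ^ (1 / p) + C, max σ₀ (1 / expansionRadius δ K), by positivity,
    fun σ φ P _ hσ hφ hPφ hP => ?_⟩
  obtain ⟨hσ₀, hσr⟩ := max_le_iff.1 hσ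
  have hσ0 : 0 < σ := (by positivity : 0 < 1 / expansionRadius δ K).trans_le hσr
  have := (hw.rescale hσ0).isProbabilityMeasure_densityMeasure
  have hchar (u : ℝ) : charFun P u = φ (u / σ * Complex.I) := by
    rw [← complexMGF_id_mul_I, hPφ, div_mul_eq_mul_div]
  rw [add_div, ENNReal.ofReal_add (by positivity) (by positivity)]
  exact (wassersteinDist_triangle hp _ (P.conv (densityMeasure fun y => σ * w (σ * y))) _).trans
    (add_le_add ((hw.hasMomentsLE_densityMeasure hσ0).wassersteinDist_conv_le_ofReal hσ0 hp0 hn P)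
      (hW σ φ P hσ₀ hφ hchar (hφ.hasMomentsLE hδ hK hσr hPφ hP)))

end CentralLimitTheorem

section FiniteDistance

lemma lintegral_abs_rpow_lt_top {p : ℝ} (hp : 0 < p) {P : Measure ℝ}
    (hP : MemLp id (ENNReal.ofReal p) P) : ∫⁻ x, ENNReal.ofReal (|x| ^ p) ∂P < ⊤ := by
  have := hP.integrable_norm_rpow (by simpa using hp) ENNReal.ofReal_ne_top
  simp only [ENNReal.toReal_ofReal hp.le, id, Real.norm_eq_abs] at this
  exact this.lintegral_lt_top

lemma wassersteinDist_lt_top {p : ℝ} (hp : 1 ≤ p) {P Q : Measure ℝ} [IsProbabilityMeasure P]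
    [IsProbabilityMeasure Q] (hP : MemLp id (ENNReal.ofReal p) P)
    (hQ : MemLp id (ENNReal.ofReal p) Q) : wassersteinDist p P Q < ⊤ := by
  have hp0 : 0 < p := zero_lt_one.trans_le hp
  refine (wassersteinDist_triangle hp P (Measure.dirac 0) Q).trans_lt
    (ENNReal.add_lt_top.2 ⟨?_, ?_⟩)
  · have := wassersteinDist_map_le P p measurable_id (measurable_const (a := (0 : ℝ)))
    simp only [Measure.map_id, Measure.map_const, measure_univ, one_smul, id, sub_zero] at this
    exact this.trans_lt (ENNReal.rpow_lt_top_of_nonneg (by positivity)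
      (lintegral_abs_rpow_lt_top hp0 hP).ne)
  · have := wassersteinDist_map_le Q p (measurable_const (a := (0 : ℝ))) measurable_id
    simp only [Measure.map_id, Measure.map_const, measure_univ, one_smul, id, zero_sub,
      abs_neg] at this
    exact this.trans_lt (ENNReal.rpow_lt_top_of_nonneg (by positivity)
      (lintegral_abs_rpow_lt_top hp0 hQ).ne)

lemma exists_forall_le_ofReal_div {W : ℕ → ℝ≥0∞} {σ : ℕ → ℝ} {C : ℝ} (hW : ∀ n, W n ≠ ⊤)
    (hC : ∀ᶠ n in atTop, W n ≤ ENNReal.ofReal (C / σ n)) :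
    ∃ C' : ℝ, 0 < C' ∧ ∀ n, W n ≤ ENNReal.ofReal C' / ENNReal.ofReal (σ n) := by
  obtain ⟨N, hN⟩ := eventually_atTop.1 hC
  have hsum (n) : 0 ≤ (W n).toReal * |σ n| := by positivity
  have hsum₀ := Finset.sum_nonneg fun n (_ : n ∈ Finset.range N) => hsum n
  refine ⟨1 + |C| + ∑ n ∈ Finset.range N, (W n).toReal * |σ n|, by positivity, fun n => ?_⟩
  rcases le_or_gt (σ n) 0 with hσ | hσ
  · rw [ENNReal.ofReal_of_nonpos hσ, ENNReal.div_zero]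
    · exact le_top
    · exact (ENNReal.ofReal_pos.2 (by positivity)).ne'
  rw [← ENNReal.ofReal_div_of_pos hσ]
  rcases le_or_gt N n with hn | hn
  · refine (hN n hn).trans (ENNReal.ofReal_le_ofReal ?_)
    gcongr
    linarith [le_abs_self C]
  · rw [← ENNReal.ofReal_toReal (hW n)]
    refine ENNReal.ofReal_le_ofReal ((le_div_iff₀ hσ).2 ?_)
    have := Finset.single_le_sum (fun i _ => hsum i) (Finset.mem_range.2 hn)
    rw [abs_of_pos hσ] at this
    linarith [abs_nonneg C]

end FiniteDistance

section Standardization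

/-- `Y` normalised to mean zero and variance one under `μ` (identically zero if `Y` has variance
zero, since division by zero gives zero). -/
def standardize (Y : Ω → ℝ) (μ : Measure Ω) (ω : Ω) : ℝ := (Y ω - ∫ ω', Y ω' ∂μ) / √Var[Y; μ]

variable {μ : Measure Ω} {Y Z : Ω → ℝ} {C δ K σ : ℝ}

lemma standardize_congr_ae (h : Y =ᵐ[μ] Z) : standardize Y μ =ᵐ[μ] standardize Z μ := by
  filter_upwards [h] with ω hω
  rw [standardize, standardize, hω, integral_congr_ae h, variance_congr h]

lemma measurable_standardize (hY : Measurable Y) : Measurable (standardize Y μ) :=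
  (hY.sub_const _).div_const _

lemma exists_abs_standardize_le (hC : ∀ ω, |Y ω| ≤ C) (μ : Measure Ω) :
    ∃ R, ∀ ω, |standardize Y μ ω| ≤ R :=
  ⟨(C + |∫ ω', Y ω' ∂μ|) / √Var[Y; μ], fun ω => by
    rw [standardize, abs_div, abs_of_nonneg (Real.sqrt_nonneg _)]
    gcongr
    exact (abs_sub _ _).trans (by gcongr; exact hC ω)⟩

lemma integrable_exp_mul_of_bounded [IsFiniteMeasure μ] (hY : Measurable Y)
    (hC : ∀ ω, |Y ω| ≤ C) (θ : ℝ) : Integrable (fun ω => Real.exp (θ * Y ω)) μ :=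
  .of_bound (by fun_prop) (Real.exp (|θ| * C)) (Eventually.of_forall fun ω => by
    rw [Real.norm_of_nonneg (Real.exp_nonneg _), Real.exp_le_exp]
    refine (le_abs_self _).trans ?_
    rw [abs_mul]
    gcongr
    exact hC ω)

lemma isTameMGF_complexMGF [IsProbabilityMeasure μ]
    (hY : ∀ θ : ℝ, Integrable (fun ω => Real.exp (θ * Y ω)) μ) (hmean : ∫ ω, Y ω ∂μ = 0)
    (hsq : ∫ ω, Y ω ^ 2 ∂μ = σ ^ 2) (hne : ∀ z : ℂ, ‖z‖ < δ → complexMGF Y μ z ≠ 0)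
    (hmgf : ∀ θ : ℝ, |θ| < δ → mgf Y μ θ ≤ Real.exp (K * σ ^ 2)) :
    IsTameMGF (complexMGF Y μ) σ δ K := by
  have hset (x : ℝ) : x ∈ interior (integrableExpSet Y μ) := by
    have : integrableExpSet Y μ = Set.univ := Set.eq_univ_of_forall hY
    simp [this]
  have hderiv : deriv (complexMGF Y μ) =
      fun z => ∫ ω, (Y ω : ℂ) ^ 1 * Complex.exp (z * Y ω) ∂μ := by
    funext z
    simpa using (hasDerivAt_complexMGF (hset z.re)).deriv
  refine ⟨fun z => (hasDerivAt_complexMGF (hset z.re)).differentiableAt, by simp [complexMGF], ?_,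
    ?_, hne, fun z hz => norm_complexMGF_le_mgf.trans
      (hmgf z.re ((Complex.abs_re_le_norm z).trans_lt hz))⟩
  · simp only [hderiv, pow_one, zero_mul, Complex.exp_zero, mul_one]
    rw [integral_complex_ofReal, hmean, Complex.ofReal_zero]
  · rw [hderiv, (hasDerivAt_integral_pow_mul_exp (hset (0 : ℂ).re) 1).deriv]
    simp only [zero_mul, Complex.exp_zero, mul_one, Nat.reduceAdd, ← Complex.ofReal_pow]
    rw [integral_complex_ofReal, hsq]

lemma wassersteinDist_map_standardize_lt_top {p : ℝ} (hp : 1 ≤ p) [IsProbabilityMeasure μ]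
    (hY : Measurable Y) (hC : ∀ ω, |Y ω| ≤ C) :
    wassersteinDist p (μ.map (standardize Y μ)) (gaussianReal 0 1) < ⊤ := by
  obtain ⟨R, hR⟩ := exists_abs_standardize_le hC μ
  have hstd := measurable_standardize (μ := μ) hY
  have := Measure.isProbabilityMeasure_map (μ := μ) hstd.aemeasurable
  refine wassersteinDist_lt_top hp ?_ (memLp_id_gaussianReal _)
  exact (memLp_map_measure_iff aestronglyMeasurable_id hstd.aemeasurable).2
    (.of_bound hstd.aestronglyMeasurable R (Eventually.of_forall hR))

theorem exists_wassersteinDist_standardize_le {p : ℝ} (hp : 1 ≤ p) (hδ : 0 < δ) (hK : 0 < K)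
    (μ : Measure Ω) [IsProbabilityMeasure μ] :
    ∃ C σ₀ : ℝ, ∀ (Y : Ω → ℝ) (R : ℝ), Measurable Y → (∀ ω, |Y ω| ≤ R) →
      (∀ z : ℂ, ‖z‖ < δ → complexMGF (fun ω => Y ω - ∫ ω', Y ω' ∂μ) μ z ≠ 0) →
      (∀ θ : ℝ, |θ| < δ →
        mgf (fun ω => Y ω - ∫ ω', Y ω' ∂μ) μ θ ≤ Real.exp (2 + K * Var[Y; μ])) →
      σ₀ ≤ √Var[Y; μ] →
      wassersteinDist p (μ.map (standardize Y μ)) (gaussianReal 0 1) ≤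
        ENNReal.ofReal (C / √Var[Y; μ]) := by
  obtain ⟨C, σ₀, -, hW⟩ :=
    exists_wassersteinDist_gaussianReal_le_of_isTameMGF hp hδ (by positivity : 0 < K + 2)
  refine ⟨C, max 1 σ₀, fun Y R hY hR hne hmgf hσ => ?_⟩
  obtain ⟨hσ1, hσ₀⟩ := max_le_iff.1 hσ
  have hsqrt : √Var[Y; μ] ^ 2 = Var[Y; μ] := Real.sq_sqrt (variance_nonneg _ _)
  have hYint : Integrable Y μ := .of_bound hY.aestronglyMeasurable R (Eventually.of_forall hR)
  have hstd := measurable_standardize (μ := μ) hY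
  have hexp (θ : ℝ) : Integrable (fun ω => Real.exp (θ * (Y ω - ∫ ω', Y ω' ∂μ))) μ :=
    integrable_exp_mul_of_bounded (hY.sub_const _)
      (fun ω => (abs_sub _ _).trans (add_le_add_left (hR ω) _)) θ
  have := Measure.isProbabilityMeasure_map (μ := μ) hstd.aemeasurable
  refine hW _ (complexMGF (fun ω => Y ω - ∫ ω', Y ω' ∂μ) μ) _ hσ₀
    (isTameMGF_complexMGF hexp ?_ ?_ hne fun θ hθ => ?_) (fun z => ?_) ?_
  · rw [integral_sub hYint (integrable_const _)]
    simp
  · rw [hsqrt, variance_eq_integral hY.aemeasurable]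
  · refine (hmgf θ hθ).trans (Real.exp_le_exp.2 ?_)
    nlinarith
  · rw [complexMGF_id_map hstd.aemeasurable]
    simp only [complexMGF, standardize]
    congr with ω
    push_cast
    ring_nf
  · obtain ⟨R', hR'⟩ := exists_abs_standardize_le hR μ
    rw [integrable_map_measure (by fun_prop) hstd.aemeasurable]
    exact .of_bound (by fun_prop) (Real.exp R') (Eventually.of_forall fun ω => by
      simpa using hR' ω)

end Standardization

section DoeblinChain

variable {μ : Measure Ω} [IsProbabilityMeasure μ] {X : ∀ j, Ω → 𝒳 j}
  {κ : ∀ j n, Kernel (𝒳 j) (𝒳 (j + n))} {n₀ : ℕ} {γ : ℝ} {m : ∀ j, Measure (𝒳 j)}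
  {f : ∀ j, 𝒳 j → ℝ} {C p : ℝ}

theorem IsDoeblinChain.exists_wassersteinDist_standardize_sum_le
    (hX : IsDoeblinChain μ X κ n₀ γ m) (hf : ∀ j, Measurable (f j)) (hC : ∀ j x, |f j x| ≤ C)
    (hC0 : 0 < C) (hp : 1 ≤ p)
    (hσ : Tendsto (fun n => √Var[fun ω => ∑ k ∈ Finset.range n, f k (X k ω); μ]) atTop atTop) :
    ∃ A : ℝ, 0 < A ∧ ∀ n,
      wassersteinDist p (μ.map (standardize (fun ω => ∑ k ∈ Finset.range n, f k (X k ω)) μ))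
        (gaussianReal 0 1) ≤
      ENNReal.ofReal A / ENNReal.ofReal √Var[fun ω => ∑ k ∈ Finset.range n, f k (X k ω); μ] := by
  have hS (n) : Measurable fun ω => ∑ k ∈ Finset.range n, f k (X k ω) :=
    Finset.measurable_fun_sum _ fun k _ => (hf k).comp (hX.meas k)
  have hSC (n ω) : |∑ k ∈ Finset.range n, f k (X k ω)| ≤ n * C :=
    (Finset.abs_sum_le_sum_abs _ _).trans
      ((Finset.sum_le_sum fun k _ => hC k (X k ω)).trans (by simp))
  obtain ⟨δ, K, hδ, hK, hmgf⟩ := hX.exists_complexMGF_ne_zero_and_mgf_le hf hC hC0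
  obtain ⟨A, σ₀, hW⟩ := exists_wassersteinDist_standardize_le hp hδ hK μ
  refine exists_forall_le_ofReal_div (C := A)
    (fun n => (wassersteinDist_map_standardize_lt_top hp (hS n) (hSC n)).ne) ?_
  filter_upwards [hσ.eventually_ge_atTop σ₀] with n hn
  exact hW _ _ (hS n) (hSC n) (hmgf n).1 (hmgf n).2 hn

lemma exists_measurable_abs_le_eq {α : Type*} [MeasurableSpace α] {f : α → ℝ} (hf : Measurable f)
    {C : ℝ} (hC : 0 ≤ C) :
    ∃ g : α → ℝ, Measurable g ∧ (∀ x, |g x| ≤ C) ∧ ∀ x, |f x| ≤ C → g x = f x := by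
  refine ⟨fun x => max (-C) (min C (f x)), measurable_const.max (measurable_const.min hf),
    fun x => abs_le.2 ⟨le_max_left _ _, max_le (by linarith) (min_le_left _ _)⟩, fun x hx => ?_⟩
  obtain ⟨hlower, hupper⟩ := abs_le.1 hx
  simp only [min_eq_right hupper, max_eq_right hlower]

end DoeblinChain

/-- **Theorem (Wasserstein CLT rates, Doeblin case).**
If `σ_n → ∞` then for every `1 ≤ p < ∞` one has `W_p(dF_n, dΦ) = O(σ_n⁻¹)`, where `dF_n`
is the law of `(S_n − E[S_n])/σ_n` and `dΦ` is the standard normal law. -/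
theorem wasserstein_CLT_rate_doeblin
    (μ : Measure Ω) [IsProbabilityMeasure μ]
    (X : ∀ j, Ω → 𝒳 j) (κ : ∀ j n, Kernel (𝒳 j) (𝒳 (j + n)))
    (hMarkov : IsInhomMarkov μ X κ)
    (n₀ : ℕ) (hn₀ : 0 < n₀) (γ : ℝ) (hγ : γ ∈ Set.Ioo (0 : ℝ) 1)
    (m : ∀ j, Measure (𝒳 j)) (hm : ∀ j, IsProbabilityMeasure (m j))
    (hDoeblin : ∀ j (x : 𝒳 j) (Γ : Set (𝒳 (j + n₀))), MeasurableSet Γ →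
      ENNReal.ofReal γ * m (j + n₀) Γ ≤ κ j n₀ x Γ)
    (f : ∀ j, 𝒳 j → ℝ) (hfmeas : ∀ j, Measurable (f j))
    (C : ℝ) (hbdd : ∀ j, ∀ᵐ ω ∂μ, |f j (X j ω)| ≤ C)
    (S : ℕ → Ω → ℝ) (hS : ∀ n ω, S n ω = ∑ j ∈ Finset.range n, f j (X j ω))
    (σs : ℕ → ℝ) (hσ : ∀ n, σs n = Real.sqrt (variance (S n) μ))
    (hσ_top : Tendsto σs atTop atTop) :
    ∀ p : ℝ, 1 ≤ p → ∃ Cp : ℝ, 0 < Cp ∧ ∀ n : ℕ,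
      wassersteinDist p
          (μ.map (fun ω => (S n ω - ∫ ω', S n ω' ∂μ) / σs n))
          (gaussianReal 0 1)
        ≤ ENNReal.ofReal Cp / ENNReal.ofReal (σs n) := by
  intro p hp
  have hX : IsDoeblinChain μ X κ n₀ γ m := ⟨hMarkov, hn₀, hγ, hm, hDoeblin⟩
  have hC : 0 < |C| + 1 := by positivity
  choose g hg hgC hgf using fun j => exists_measurable_abs_le_eq (hfmeas j) hC.le
  have hSg (n) : S n =ᵐ[μ] fun ω => ∑ k ∈ Finset.range n, g k (X k ω) := by
    filter_upwards [ae_all_iff.2 hbdd] with ω hω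
    rw [hS]
    exact Finset.sum_congr rfl fun k _ =>
      (hgf k _ ((hω k).trans (by linarith [le_abs_self C]))).symm
  have hσg (n) : σs n = √Var[fun ω => ∑ k ∈ Finset.range n, g k (X k ω); μ] := by
    rw [hσ, variance_congr (hSg n)]
  have hlaw (n) : μ.map (fun ω => (S n ω - ∫ ω', S n ω' ∂μ) / σs n) =
      μ.map (standardize (fun ω => ∑ k ∈ Finset.range n, g k (X k ω)) μ) := by
    simp only [hσ]
    exact Measure.map_congr (standardize_congr_ae (hSg n))
  simp only [hlaw]
  simp only [hσg]
  exact hX.exists_wassersteinDist_standardize_sum_le hg hgC hC hp (hσ_top.congr hσg)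

end
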